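/- Let K be an algebraically closed field, let n >= 1, and let z in FPF_n(I_n). With respect to the reverse lexicographic term order on R_n, one has J^ss_z = init(I^ss_z) = init(I(X^ss_z)). -/

import Mathlib

namespace Paper

/-!
We model a permutation of the positive integers `{1, 2, 3, ...}` as an `Equiv.Perm ℕ`
that fixes `0`; all notions below refer only to positive inputs.
-/

/-- The rank `r_w(i,j) = #{a ∈ [i] : w(a) ∈ [j]}` of the `i × j` partial
permutation matrix of `w`, where `[k] = {1, ..., k}`. -/
def rnk (w : Equiv.Perm ℕ) (i j : ℕ) : ℕ :=
  ((Finset.Icc 1 i).filter fun a => w a ∈ Finset.Icc 1 j).card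

/-- Right descent set `Des_R(w) = {i ≥ 1 : w(i) > w(i+1)}`. -/
def DesR (w : Equiv.Perm ℕ) : Set ℕ := {i | 1 ≤ i ∧ w (i + 1) < w i}

/-- Left descent set `Des_L(w) = Des_R(w⁻¹)`. -/
def DesL (w : Equiv.Perm ℕ) : Set ℕ := DesR w⁻¹

/-- `S_∞`: permutations of the positive integers fixing all but finitely many points. -/
def SInfty : Set (Equiv.Perm ℕ) :=
  {w | w 0 = 0 ∧ Set.Finite {i : ℕ | w i ≠ i}}

/-- `S^{m,n}_∞ = {w ∈ S_∞ : Des_R(w) ⊆ [m], Des_L(w) ⊆ [n]}`. -/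
def SmnInfty (m n : ℕ) : Set (Equiv.Perm ℕ) :=
  {w | w ∈ SInfty ∧ DesR w ⊆ Set.Icc 1 m ∧ DesL w ⊆ Set.Icc 1 n}

/-- The Rothe diagram `D(w) = {(i,j) : 0 < j < w(i), 0 < i < w⁻¹(j)}`. -/
def Rothe (w : Equiv.Perm ℕ) : Set (ℕ × ℕ) :=
  {p | 0 < p.2 ∧ p.2 < w p.1 ∧ 0 < p.1 ∧ p.1 < w⁻¹ p.2}

/-- The function `1_FPF`, sending `i ↦ i - (-1)^i` on positive integers (it fixes `0`). -/
def oneFPF : ℕ → ℕ := fun i => if i % 2 = 1 then i + 1 else i - 1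

/-- `I^FPF_∞`: fixed-point-free involutions of the positive integers agreeing with
`1_FPF` at all sufficiently large inputs. -/
def IFPFInfty : Set (Equiv.Perm ℕ) :=
  {z | z 0 = 0 ∧ (∀ i, 1 ≤ i → z i ≠ i) ∧ z * z = 1 ∧ ∃ N, ∀ i, N ≤ i → z i = oneFPF i}

/-- The skew-symmetric Rothe diagram `D^ss(z) = {(i,j) : 0 < j < z(i), j < i < z(j)}`. -/
def Dss (z : Equiv.Perm ℕ) : Set (ℕ × ℕ) :=
  {p | 0 < p.2 ∧ p.2 < z p.1 ∧ p.2 < p.1 ∧ p.1 < z p.2}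

/-- `FPF_n(I_n) = {z ∈ I^FPF_∞ : D^ss(z) ⊆ [n] × [n]}`. -/
def FPFIn (n : ℕ) : Set (Equiv.Perm ℕ) :=
  {z | z ∈ IFPFInfty ∧ Dss z ⊆ Set.Icc 1 n ×ˢ Set.Icc 1 n}

/-- `ℓ_fpf(z) = |D^ss(z)|`. -/
noncomputable def ellFpf (z : Equiv.Perm ℕ) : ℕ := (Dss z).ncard

/-- Bruhat order on `I^FPF_∞`: reflexive-transitive closure of `z < (i,j) z (i,j)`
whenever `i < j` and `ℓ_fpf` goes up by exactly one. -/
def fpfBruhatLe (z y : Equiv.Perm ℕ) : Prop :=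
  Relation.ReflTransGen
    (fun a b => ∃ i j : ℕ, 1 ≤ i ∧ i < j ∧
      b = Equiv.swap i j * a * Equiv.swap i j ∧ ellFpf b = ellFpf a + 1) z y

/-- `i` is a visible descent of `z` if `i ≥ 1` and `z(i+1) < min(i, z(i))`. -/
def visibleDescent (z : Equiv.Perm ℕ) (i : ℕ) : Prop :=
  1 ≤ i ∧ z (i + 1) < min i (z i)

/-- `Ψ(z, p) = {(p,r) z (p,r) : r > p, ℓ_fpf((p,r) z (p,r)) = ℓ_fpf(z) + 1}`. -/
def PsiSet (z : Equiv.Perm ℕ) (p : ℕ) : Set (Equiv.Perm ℕ) :=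
  {y | ∃ r : ℕ, p < r ∧ y = Equiv.swap p r * z * Equiv.swap p r ∧ ellFpf y = ellFpf z + 1}

/-- The dominant component `dom(z) = {(i,j) : i, j ≥ 1, r_z(i,j) = 0}`. -/
def domSet (z : Equiv.Perm ℕ) : Set (ℕ × ℕ) :=
  {p | 1 ≤ p.1 ∧ 1 ≤ p.2 ∧ rnk z p.1 p.2 = 0}

/-- `(p, q)` is an outer corner of `dom(z)`. -/
def IsOuterCorner (z : Equiv.Perm ℕ) (p q : ℕ) : Prop :=
  1 ≤ p ∧ 1 ≤ q ∧ (p, q) ∉ domSet z ∧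
    (p = 1 ∨ (p - 1, q) ∈ domSet z) ∧ (q = 1 ∨ (p, q - 1) ∈ domSet z)

/-- `I_n`: involutions in `S_∞` fixing every `i > n`. -/
def InvolIn (n : ℕ) : Set (Equiv.Perm ℕ) :=
  {w | w 0 = 0 ∧ w * w = 1 ∧ ∀ i, n < i → w i = i}

/-- The fixed points of `z` lying in `[n]`. -/
def fixedPtsIn (n : ℕ) (z : Equiv.Perm ℕ) : Finset ℕ :=
  (Finset.Icc 1 n).filter fun i => z i = i

/-- The function swapping `m + 2t - 1` and `m + 2t` for every `t ≥ 1`, fixing all other points. -/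
def tailSwapFun (m : ℕ) : ℕ → ℕ := fun i =>
  if i ≤ m then i else if (i - m) % 2 = 1 then i + 1 else i - 1

theorem tailSwapFun_involutive (m : ℕ) : Function.Involutive (tailSwapFun m) := by
  intro i
  unfold tailSwapFun
  split_ifs <;> omega

/-- The involution swapping `m + 2t - 1` and `m + 2t` for every `t ≥ 1`. -/
def tailSwap (m : ℕ) : Equiv.Perm ℕ :=
  Function.Involutive.toPerm _ (tailSwapFun_involutive m)

/-- The fixed-point-free standardization `FPF_n(z) = z ⋅ (i_1,n+1)⋯(i_k,n+k) ⋅ c`,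
where `i_1 < ⋯ < i_k` are the fixed points of `z` in `[n]` and `c` swaps
`n+k+2t-1, n+k+2t` for all `t ≥ 1`. -/
noncomputable def fpfStd (n : ℕ) (z : Equiv.Perm ℕ) : Equiv.Perm ℕ :=
  z *
    (List.ofFn fun t : Fin (fixedPtsIn n z).card =>
      Equiv.swap ((fixedPtsIn n z).orderEmbOfFin rfl t) (n + (t : ℕ) + 1)).prod *
    tailSwap (n + (fixedPtsIn n z).card)

/-- `Mat^ss_n(K)`: skew-symmetric `n × n` matrices (transpose is the negative, zero diagonal).
Row/column index `a : Fin n` corresponds to the (1-indexed) row/column `a + 1`. -/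
def MatSS (K : Type*) [CommRing K] (n : ℕ) : Set (Matrix (Fin n) (Fin n) K) :=
  {A | A.transpose = -A ∧ ∀ i, A i i = 0}

/-- The skew-symmetric matrix Schubert variety
`X^ss_z = {A ∈ Mat^ss_n : rank A_{[i][j]} ≤ r_z(i,j) for all i, j ∈ [n]}`. -/
noncomputable def Xss (K : Type*) [Field K] (n : ℕ) (z : Equiv.Perm ℕ) :
    Set (Matrix (Fin n) (Fin n) K) :=
  {A | A ∈ MatSS K n ∧ ∀ (i j : ℕ) (hi : i ≤ n) (hj : j ≤ n), 1 ≤ i → 1 ≤ j →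
    (A.submatrix (Fin.castLE hi) (Fin.castLE hj)).rank ≤ rnk z i j}

/-- `#{(i,j) : i > j, j < z(i), i < z(j)}` for a permutation of `Fin N`
(the `0`-indexed version of `ℓ_fpf`). -/
def ellFpfFin {N : ℕ} (z : Equiv.Perm (Fin N)) : ℕ :=
  (Finset.univ.filter fun p : Fin N × Fin N => p.2 < p.1 ∧ p.2 < z p.1 ∧ p.1 < z p.2).card

/-- The Pfaffian of an `N × N` matrix:
`pf(A) = ∑_{z fpf involution of [N]} (-1)^{ℓ_fpf(z)} ∏_{z(i) < i} A_{z(i), i}`.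
(The sum is empty, hence `0`, when `N` is odd.) -/
noncomputable def Pfaffian {R : Type*} [CommRing R] {N : ℕ} (A : Matrix (Fin N) (Fin N) R) : R :=
  ∑ z ∈ Finset.univ.filter (fun z : Equiv.Perm (Fin N) => (∀ i, z i ≠ i) ∧ ∀ i, z (z i) = i),
    (-1 : R) ^ ellFpfFin z * ∏ i ∈ Finset.univ.filter (fun i : Fin N => z i < i), A (z i) i

/-- Index set for the variables `u_{ij}`, `n ≥ i > j ≥ 1`, of the coordinate ring
`R_n = K[Mat^ss_n]`; the variable `⟨(a, b), _⟩` is `u_{a+1, b+1}`. -/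
abbrev SSVar (n : ℕ) : Type := {p : Fin n × Fin n // p.2 < p.1}

/-- The generic skew-symmetric matrix `U^ss` over `R_n`. -/
noncomputable def Uss (K : Type*) [CommRing K] (n : ℕ) :
    Matrix (Fin n) (Fin n) (MvPolynomial (SSVar n) K) :=
  Matrix.of fun i j =>
    if h : j < i then MvPolynomial.X ⟨(i, j), h⟩
    else if h' : i < j then -MvPolynomial.X ⟨(j, i), h'⟩
    else 0

/-- The ideal of polynomials vanishing on a set `X`, where a point `A` is evaluated
via `ev A : σ → K`. -/
noncomputable def vanishingIdeal {K : Type*} [CommRing K] {σ M : Type*}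
    (X : Set M) (ev : M → σ → K) : Ideal (MvPolynomial σ K) where
  carrier := {f | ∀ A ∈ X, MvPolynomial.eval (ev A) f = 0}
  zero_mem' := by simp
  add_mem' := by
    intro f g hf hg
    simp only [Set.mem_setOf_eq] at *
    intro A hA
    rw [map_add, hf A hA, hg A hA, add_zero]
  smul_mem' := by
    intro c f hf
    simp only [Set.mem_setOf_eq] at *
    intro A hA
    rw [smul_eq_mul, map_mul, hf A hA, mul_zero]

/-- `I(X^ss_z) ⊆ R_n`, where `u_{ij}` is evaluated at `A` as `A_{ij}`. -/
noncomputable def IXss (K : Type*) [Field K] (n : ℕ) (z : Equiv.Perm ℕ) :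
    Ideal (MvPolynomial (SSVar n) K) :=
  vanishingIdeal (Xss K n z) fun A v => A v.1.1 v.1.2

/-- `pf(U^ss_{RR})` for a finite row/column set `R` (listed in increasing order). -/
noncomputable def pfUss (K : Type*) [CommRing K] {n : ℕ} (R : Finset (Fin n)) :
    MvPolynomial (SSVar n) K :=
  Pfaffian ((Uss K n).submatrix (fun s => R.orderEmbOfFin rfl s) fun t => R.orderEmbOfFin rfl t)

/-- The ideal `I^ss_z`, generated by the Pfaffians `pf(U^ss_{RR})` over all nonempty
even-size `R ⊆ [n]` such that `R ⊆ [i]` and `|R ∩ [j]| > r_z(i,j)` for some `i ≥ j`. -/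
noncomputable def IssIdeal (K : Type*) [Field K] (n : ℕ) (z : Equiv.Perm ℕ) :
    Ideal (MvPolynomial (SSVar n) K) :=
  Ideal.span {f : MvPolynomial (SSVar n) K | ∃ R : Finset (Fin n),
    R.Nonempty ∧ Even R.card ∧
    (∃ i j : ℕ, 1 ≤ j ∧ j ≤ i ∧ i ≤ n ∧ (∀ a ∈ R, (a : ℕ) + 1 ≤ i) ∧
      rnk z i j < (R.filter fun a : Fin n => (a : ℕ) + 1 ≤ j).card) ∧
    f = pfUss K R}

/-- The square-free monomial `u^ss_{AB}`: zero if `A ⊙ B` meets the diagonal, and otherwise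
the product of the variables `u_{ij}` over the pairs `i > j` with `(i,j)` or `(j,i)` in
`A ⊙ B = {(a_0, b_r), (a_1, b_{r-1}), ..., (a_r, b_0)}`. -/
noncomputable def ussMon (K : Type*) [CommRing K] {n : ℕ} (A B : Finset (Fin n)) :
    MvPolynomial (SSVar n) K :=
  if h : A.card = B.card then
    if ∃ t : Fin A.card, (A.orderEmbOfFin rfl t : Fin n) = B.orderEmbOfFin h.symm t.rev then 0
    else
      ∏ v ∈ Finset.univ.filter (fun v : SSVar n => ∃ t : Fin A.card,
          (A.orderEmbOfFin rfl t = v.1.1 ∧ B.orderEmbOfFin h.symm t.rev = v.1.2) ∨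
          (A.orderEmbOfFin rfl t = v.1.2 ∧ B.orderEmbOfFin h.symm t.rev = v.1.1)),
        MvPolynomial.X v
  else 0

/-- The monomial ideal `J^ss_r` of a symmetric rank table `r`, generated by the monomials
`u^ss_{AB}` with `A ⊆ [i]`, `B ⊆ [j]`, `|A| = |B| = r(i,j) + 1` for some `n ≥ i ≥ j ≥ 1`. -/
noncomputable def JssIdealOfTable (K : Type*) [CommRing K] (n : ℕ) (r : ℕ → ℕ → ℕ) :
    Ideal (MvPolynomial (SSVar n) K) :=
  Ideal.span {g : MvPolynomial (SSVar n) K | ∃ (i j : ℕ) (A B : Finset (Fin n)),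
    1 ≤ j ∧ j ≤ i ∧ i ≤ n ∧
    (∀ a ∈ A, (a : ℕ) + 1 ≤ i) ∧ (∀ b ∈ B, (b : ℕ) + 1 ≤ j) ∧
    A.card = r i j + 1 ∧ B.card = r i j + 1 ∧ g = ussMon K A B}

/-- `J^ss_z = J^ss_{r_z}`. -/
noncomputable def JssIdeal (K : Type*) [CommRing K] (n : ℕ) (z : Equiv.Perm ℕ) :
    Ideal (MvPolynomial (SSVar n) K) :=
  JssIdealOfTable K n (rnk z)

/-- Total degree of a monomial (exponent vector). -/
def totalDeg {σ : Type*} (m : σ →₀ ℕ) : ℕ := m.sum fun _ e => e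

/-- The lexicographic order on the variables `u_{ij}` by the pair `(i, j)`. -/
def varLT {n : ℕ} (v w : SSVar n) : Prop :=
  v.1.1 < w.1.1 ∨ (v.1.1 = w.1.1 ∧ v.1.2 < w.1.2)

/-- The (graded) reverse lexicographic term order on monomials of `R_n`:
`m₁ < m₂` iff `deg m₁ < deg m₂`, or the degrees agree and the lexicographically largest
variable with different exponents has strictly larger exponent in `m₁`. -/
def revlexLT {n : ℕ} (m₁ m₂ : SSVar n →₀ ℕ) : Prop :=
  totalDeg m₁ < totalDeg m₂ ∨
    (totalDeg m₁ = totalDeg m₂ ∧ ∃ v, m₂ v < m₁ v ∧ ∀ w, varLT v w → m₁ w = m₂ w)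

/-- The initial ideal of `I` with respect to a strict term order `lt`: the ideal
generated by the leading monomials `init(f)` of the nonzero `f ∈ I`. -/
noncomputable def initIdeal {K : Type*} [CommRing K] {σ : Type*}
    (lt : (σ →₀ ℕ) → (σ →₀ ℕ) → Prop) (I : Ideal (MvPolynomial σ K)) :
    Ideal (MvPolynomial σ K) :=
  Ideal.span {g : MvPolynomial σ K | ∃ f ∈ I, f ≠ 0 ∧ ∃ m : σ →₀ ℕ, m ∈ f.support ∧
    (∀ m' ∈ f.support, m' ≠ m → lt m' m) ∧ g = MvPolynomial.monomial m (1 : K)}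

/-- A term order on the monomials of a polynomial ring: a linear order in which `1` is
the unique minimum and multiplication by a fixed monomial preserves order. -/
structure TermOrder (σ : Type*) where
  le : (σ →₀ ℕ) → (σ →₀ ℕ) → Prop
  trans : ∀ a b c, le a b → le b c → le a c
  antisymm : ∀ a b, le a b → le b a → a = b
  total : ∀ a b, le a b ∨ le b a
  zero_le : ∀ a, le 0 a
  add_le_add_right : ∀ a b c, le a b → le (a + c) (b + c)

/-- The initial ideal of `I` with respect to a term order `τ`. -/
noncomputable def initIdealLe {K : Type*} [CommRing K] {σ : Type*}
    (τ : TermOrder σ) (I : Ideal (MvPolynomial σ K)) : Ideal (MvPolynomial σ K) :=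
  Ideal.span {g : MvPolynomial σ K | ∃ f ∈ I, f ≠ 0 ∧ ∃ m : σ →₀ ℕ, m ∈ f.support ∧
    (∀ m' ∈ f.support, τ.le m' m) ∧ g = MvPolynomial.monomial m (1 : K)}

/-- An ideal is homogeneous (w.r.t. total degree) iff it contains all homogeneous
components of its elements. -/
def IsHomogIdeal {K : Type*} [CommSemiring K] {σ : Type*}
    (I : Ideal (MvPolynomial σ K)) : Prop :=
  ∀ f ∈ I, ∀ d : ℕ, MvPolynomial.homogeneousComponent d f ∈ I

/-- The reading order on boxes: rows top to bottom, each row right to left. -/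
def pdRel (p q : ℕ × ℕ) : Prop := p.1 < q.1 ∨ (p.1 = q.1 ∧ q.2 ≤ p.2)

instance : DecidableRel pdRel := fun p q => by unfold pdRel; infer_instance

instance : IsTrans (ℕ × ℕ) pdRel :=
  ⟨fun a b c hab hbc => by unfold pdRel at *; omega⟩

instance : IsAntisymm (ℕ × ℕ) pdRel :=
  ⟨fun a b hab hba => by
    unfold pdRel at hab hba
    exact Prod.ext_iff.mpr ⟨by omega, by omega⟩⟩

instance : IsTotal (ℕ × ℕ) pdRel :=
  ⟨fun a b => by unfold pdRel; omega⟩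

/-- The pipe dream reading word of a finite set `D` of boxes: the letters `i + j - 1`
over `(i, j) ∈ D`, in the order making `(i, -j)` increase lexicographically. -/
def pdWord (D : Finset (ℕ × ℕ)) : List ℕ :=
  (D.sort pdRel).map fun p => p.1 + p.2 - 1

/-- The product `s_{i_1} s_{i_2} ⋯ s_{i_l}` of simple transpositions. -/
def wordProd (l : List ℕ) : Equiv.Perm ℕ :=
  (l.map fun i => Equiv.swap i (i + 1)).prod

/-- `l` is a reduced word for `w`: a minimal-length word of positive letters whose
product of simple transpositions is `w`. -/
def IsReducedWordOf (w : Equiv.Perm ℕ) (l : List ℕ) : Prop :=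
  (∀ a ∈ l, 1 ≤ a) ∧ wordProd l = w ∧
    ∀ l' : List ℕ, (∀ a ∈ l', 1 ≤ a) → wordProd l' = w → l.length ≤ l'.length

/-- The set `RP(w)` of reduced pipe dreams for `w`. -/
def RP (w : Equiv.Perm ℕ) : Set (Finset (ℕ × ℕ)) :=
  {D | (∀ p ∈ D, 1 ≤ p.1 ∧ 1 ≤ p.2) ∧ IsReducedWordOf w (pdWord D)}

/-- `I^FPF_m`: involutions in `S_∞` that are fixed-point-free on `[m]` and fix
all `i > m`. -/
def IFPFm (m : ℕ) : Set (Equiv.Perm ℕ) :=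
  {y | y 0 = 0 ∧ y * y = 1 ∧ (∀ i, 1 ≤ i → i ≤ m → y i ≠ i) ∧ ∀ i, m < i → y i = i}

/-- `z = FPF_m(y)`: `z` agrees with `y` on `[m]` and swaps `m + 2k - 1, m + 2k`
for all `k ≥ 1`. -/
def IsFPFStdOf (m : ℕ) (y z : Equiv.Perm ℕ) : Prop :=
  (∀ i, i ≤ m → z i = y i) ∧
    ∀ k : ℕ, z (m + 2 * k + 1) = m + 2 * k + 2 ∧ z (m + 2 * k + 2) = m + 2 * k + 1

/-- The set `FP(z)` of fpf-involution pipe dreams for `z ∈ I^FPF_∞`. -/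
def FP (z : Equiv.Perm ℕ) : Set (Finset (ℕ × ℕ)) :=
  {E | ∃ (m : ℕ) (y : Equiv.Perm ℕ) (D : Finset (ℕ × ℕ)), Even m ∧ y ∈ IFPFm m ∧
    IsFPFStdOf m y z ∧ D ∈ RP y ∧ D.image Prod.swap = D ∧
    E = D.filter fun p => p.2 < p.1}

/-- The minor `det(U_{AB})` of the generic `m × n` matrix `U`, with rows `A` and
columns `B` listed in increasing order. -/
noncomputable def genMinor (K : Type*) [CommRing K] {m n : ℕ}
    (A : Finset (Fin m)) (B : Finset (Fin n)) (h : A.card = B.card) :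
    MvPolynomial (Fin m × Fin n) K :=
  (Matrix.of fun s t : Fin A.card =>
    (MvPolynomial.X (A.orderEmbOfFin rfl s, B.orderEmbOfFin h.symm t) :
      MvPolynomial (Fin m × Fin n) K)).det

/-- The antidiagonal monomial `u_{AB} = ∏_{(a,b) ∈ A ⊙ B} u_{ab}`. -/
noncomputable def genMon (K : Type*) [CommRing K] {m n : ℕ}
    (A : Finset (Fin m)) (B : Finset (Fin n)) (h : A.card = B.card) :
    MvPolynomial (Fin m × Fin n) K :=
  ∏ t : Fin A.card, MvPolynomial.X (A.orderEmbOfFin rfl t, B.orderEmbOfFin h.symm t.rev)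

/-- The exponent vector of the antidiagonal monomial `u_{AB}`. -/
noncomputable def antidiagExp {m n : ℕ} (A : Finset (Fin m)) (B : Finset (Fin n))
    (h : A.card = B.card) : (Fin m × Fin n) →₀ ℕ :=
  ∑ t : Fin A.card, Finsupp.single (A.orderEmbOfFin rfl t, B.orderEmbOfFin h.symm t.rev) 1

/-- The ideal `I_w`, generated by the minors `det(U_{AB})` with `A ⊆ [i]`, `B ⊆ [j]`,
`|A| = |B| = r_w(i,j) + 1` for some `(i,j) ∈ [m] × [n]`. -/
noncomputable def IwIdeal (K : Type*) [Field K] (m n : ℕ) (w : Equiv.Perm ℕ) :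
    Ideal (MvPolynomial (Fin m × Fin n) K) :=
  Ideal.span {g : MvPolynomial (Fin m × Fin n) K |
    ∃ (i j : ℕ) (A : Finset (Fin m)) (B : Finset (Fin n)) (h : A.card = B.card),
      1 ≤ i ∧ i ≤ m ∧ 1 ≤ j ∧ j ≤ n ∧ (∀ a ∈ A, (a : ℕ) + 1 ≤ i) ∧
      (∀ b ∈ B, (b : ℕ) + 1 ≤ j) ∧ A.card = rnk w i j + 1 ∧ g = genMinor K A B h}

/-- The monomial ideal `J_w`, generated by the monomials `u_{AB}` with `A ⊆ [i]`,
`B ⊆ [j]`, `|A| = |B| = r_w(i,j) + 1` for some `(i,j) ∈ [m] × [n]`. -/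
noncomputable def JwIdeal (K : Type*) [Field K] (m n : ℕ) (w : Equiv.Perm ℕ) :
    Ideal (MvPolynomial (Fin m × Fin n) K) :=
  Ideal.span {g : MvPolynomial (Fin m × Fin n) K |
    ∃ (i j : ℕ) (A : Finset (Fin m)) (B : Finset (Fin n)) (h : A.card = B.card),
      1 ≤ i ∧ i ≤ m ∧ 1 ≤ j ∧ j ≤ n ∧ (∀ a ∈ A, (a : ℕ) + 1 ≤ i) ∧
      (∀ b ∈ B, (b : ℕ) + 1 ≤ j) ∧ A.card = rnk w i j + 1 ∧ g = genMon K A B h}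

/-- The matrix Schubert variety
`X_w = {A ∈ Mat_{m×n} : rank A_{[i][j]} ≤ r_w(i,j) for all (i,j) ∈ [m] × [n]}`. -/
noncomputable def Xw (K : Type*) [Field K] (m n : ℕ) (w : Equiv.Perm ℕ) :
    Set (Matrix (Fin m) (Fin n) K) :=
  {A | ∀ (i j : ℕ) (hi : i ≤ m) (hj : j ≤ n), 1 ≤ i → 1 ≤ j →
    (A.submatrix (Fin.castLE hi) (Fin.castLE hj)).rank ≤ rnk w i j}

/-- `I(X_w)`: the ideal of polynomials vanishing on `X_w`. -/
noncomputable def IXw (K : Type*) [Field K] (m n : ℕ) (w : Equiv.Perm ℕ) :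
    Ideal (MvPolynomial (Fin m × Fin n) K) :=
  vanishingIdeal (Xw K m n w) fun A v => A v.1 v.2

/-- The variable `u_{pq}` (with `1 ≤ q < p ≤ n`) of `R_n`. -/
def ssvar {n : ℕ} (p q : ℕ) (hp : p ≤ n) (hq : 1 ≤ q) (hqp : q < p) : SSVar n :=
  ⟨(⟨p - 1, by omega⟩, ⟨q - 1, by omega⟩), Fin.mk_lt_mk.mpr (by omega)⟩

/-- Index set for the variables `u_{ij}`, `i > j ≥ 1`, over all positive integers. -/
abbrev PVar : Type := {p : ℕ × ℕ // 1 ≤ p.2 ∧ p.2 < p.1}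

/-- The generic skew-symmetric array `U^ss` over the positive integers:
`u_{xy}` if `x > y`, `-u_{yx}` if `x < y`, `0` if `x = y`. -/
noncomputable def UssP (K : Type*) [CommRing K] (x y : ℕ) : MvPolynomial PVar K :=
  if h : 1 ≤ y ∧ y < x then MvPolynomial.X ⟨(x, y), h⟩
  else if h' : 1 ≤ x ∧ x < y then -MvPolynomial.X ⟨(y, x), h'⟩
  else 0

/-- `pf(U^ss_{RR})` for a finite set `R` of positive integers. -/
noncomputable def pfUssP (K : Type*) [CommRing K] (R : Finset ℕ) : MvPolynomial PVar K :=
  Pfaffian (Matrix.of fun s t : Fin R.card =>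
    UssP K (R.orderEmbOfFin rfl s) (R.orderEmbOfFin rfl t))

/-- `g_{AB}`: the Pfaffian of the `(|B|+|A|) × (|B|+|A|)` skew-symmetric matrix whose
rows and columns are labeled by `B` (increasing) followed by `A` (increasing), with
entry `U^ss_{xy}` at a position labeled `(x, y)`, except that the entry is `0` when
both labels come from the `A`-block. -/
noncomputable def gAB (K : Type*) [CommRing K] (A B : Finset ℕ) : MvPolynomial PVar K :=
  Pfaffian ((Matrix.of fun p q : Fin B.card ⊕ Fin A.card =>
      match p, q with
      | Sum.inl s, Sum.inl t => UssP K (B.orderEmbOfFin rfl s) (B.orderEmbOfFin rfl t)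
      | Sum.inl s, Sum.inr t => UssP K (B.orderEmbOfFin rfl s) (A.orderEmbOfFin rfl t)
      | Sum.inr s, Sum.inl t => UssP K (A.orderEmbOfFin rfl s) (B.orderEmbOfFin rfl t)
      | Sum.inr _, Sum.inr _ => (0 : MvPolynomial PVar K)).submatrix
    finSumFinEquiv.symm finSumFinEquiv.symm)

/-- The exponent of the sign `⟨T, S⟩ = (-1)^{|S||T| + C(|S|,2) + ∑ of the (1-indexed)
positions in the increasing enumeration of `T` occupied by elements of `S`}`. -/
def setSgnExp (T S : Finset ℕ) : ℕ :=
  S.card * T.card + Nat.choose S.card 2 +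
    ∑ t : Fin T.card, if T.orderEmbOfFin rfl t ∈ S then (t : ℕ) + 1 else 0


end Paper

namespace Paper

/-- antichains for the product order -/
def Anti (C : Finset (ℕ × ℕ)) : Prop := ∀ c ∈ C, ∀ d ∈ C, c.1 ≤ d.1 → c.2 ≤ d.2 → c = d

open Classical in
/-- size of the longest antichain of `D` inside `[i] × [j]` -/
noncomputable def lam (D : Finset (ℕ × ℕ)) (i j : ℕ) : ℕ :=
  (((D.filter fun c => c.1 ≤ i ∧ c.2 ≤ j).powerset).filter
    (fun C => Anti C)).sup Finset.card

theorem le_lam {D C : Finset (ℕ × ℕ)} {i j : ℕ} (hC : C ⊆ D)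
    (ha : Anti C) (hb : ∀ c ∈ C, c.1 ≤ i ∧ c.2 ≤ j) :
    C.card ≤ lam D i j := by
  classical
  unfold lam
  refine Finset.le_sup (f := Finset.card) ?_
  simp only [Finset.mem_filter, Finset.mem_powerset]
  exact ⟨fun c hc => Finset.mem_filter.2 ⟨hC hc, hb c hc⟩, ha⟩

theorem exists_lam (D : Finset (ℕ × ℕ)) (i j : ℕ) : ∃ C : Finset (ℕ × ℕ), C ⊆ D ∧
    Anti C ∧ (∀ c ∈ C, c.1 ≤ i ∧ c.2 ≤ j) ∧
    C.card = lam D i j := by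
  classical
  unfold lam
  obtain ⟨C, hC, h⟩ := Finset.exists_mem_eq_sup (((D.filter fun c => c.1 ≤ i ∧ c.2 ≤ j).powerset).filter
    (fun C => Anti C)) ⟨∅, by simp [Anti]⟩ Finset.card
  simp only [Finset.mem_filter, Finset.mem_powerset] at hC
  refine ⟨C, fun c hc => (Finset.mem_filter.1 (hC.1 hc)).1, hC.2,
    fun c hc => (Finset.mem_filter.1 (hC.1 hc)).2, h.symm⟩

theorem anti_iff {C : Finset (ℕ × ℕ)} : Anti C ↔
    ∀ c ∈ C, ∀ d ∈ C, c.1 ≤ d.1 → c.2 ≤ d.2 → c = d := Iff.rfl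

theorem Anti.subset {C U : Finset (ℕ × ℕ)} (h : Anti C) (hU : U ⊆ C) : Anti U :=
  fun c hc d hd => h c (hU hc) d (hU hd)

theorem lam_super (D : Finset (ℕ × ℕ)) {i i' j j' : ℕ} (hi : i ≤ i') (hj : j' ≤ j) :
    lam D i j + lam D i' j' ≤ lam D i' j + lam D i j' := by
  classical
  obtain ⟨C, hC, ha, hb, hc⟩ := exists_lam D i j
  obtain ⟨C', hC', ha', hb', hc'⟩ := exists_lam D i' j'
  rw [anti_iff] at ha ha'
  set E := (C ∪ C').filter (fun c => ∀ d ∈ C ∪ C', c.1 ≤ d.1 → c.2 ≤ d.2 → c = d) with hE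
  set F := (C ∪ C').filter (fun c => (c.1 ≤ i ∧ c.2 ≤ j') ∧
    ∀ d ∈ C ∪ C', d.1 ≤ c.1 → d.2 ≤ c.2 → d = c) with hF
  have hEl : E.card ≤ lam D i' j := by
    apply le_lam
    · intro c hc
      rw [hE, Finset.mem_filter, Finset.mem_union] at hc
      exact hc.1.elim (fun h => hC h) (fun h => hC' h)
    · rw [anti_iff]
      intro c hc d hd
      rw [hE, Finset.mem_filter] at hc hd
      exact hc.2 d hd.1
    · intro c hc
      rw [hE, Finset.mem_filter, Finset.mem_union] at hc
      rcases hc.1 with h | h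
      · have := hb c h; omega
      · have := hb' c h; omega
  have hFl : F.card ≤ lam D i j' := by
    apply le_lam
    · intro c hc
      rw [hF, Finset.mem_filter, Finset.mem_union] at hc
      exact hc.1.elim (fun h => hC h) (fun h => hC' h)
    · rw [anti_iff]
      intro c hc d hd h1 h2
      rw [hF, Finset.mem_filter] at hc hd
      exact hd.2.2 c hc.1 h1 h2
    · intro c hc
      rw [hF, Finset.mem_filter] at hc
      exact hc.2.1
  have hU : C ∪ C' ⊆ E ∪ F := by
    intro c hc
    by_cases hm : ∀ d ∈ C ∪ C', c.1 ≤ d.1 → c.2 ≤ d.2 → c = d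
    · exact Finset.mem_union_left _ (Finset.mem_filter.2 ⟨hc, hm⟩)
    · push Not at hm
      obtain ⟨d, hd, h1, h2, hne⟩ := hm
      refine Finset.mem_union_right _ (Finset.mem_filter.2 ⟨hc, ?_, ?_⟩)
      · rcases Finset.mem_union.1 hc with h | h <;> rcases Finset.mem_union.1 hd with h' | h'
        · exact absurd (ha c h d h' h1 h2) hne
        · have := hb c h; have := hb' d h'; omega
        · have := hb' c h; have := hb d h'; omega
        · exact absurd (ha' c h d h' h1 h2) hne
      · intro e he h3 h4
        by_contra hne'
        rcases Finset.mem_union.1 hc with h | h <;> rcases Finset.mem_union.1 hd with h' | h'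
        · exact absurd (ha c h d h' h1 h2) hne
        · rcases Finset.mem_union.1 he with h'' | h''
          · exact hne' (ha e h'' c h h3 h4)
          · have := ha' e h'' d h' (h3.trans h1) (h4.trans h2)
            subst this
            exact hne (Prod.ext (le_antisymm h1 h3) (le_antisymm h2 h4))
        · rcases Finset.mem_union.1 he with h'' | h''
          · have := ha e h'' d h' (h3.trans h1) (h4.trans h2)
            subst this
            exact hne (Prod.ext (le_antisymm h1 h3) (le_antisymm h2 h4))
          · exact hne' (ha' e h'' c h h3 h4)
        · exact absurd (ha' c h d h' h1 h2) hne
  have hI : C ∩ C' ⊆ E ∩ F := by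
    intro c hc
    rw [Finset.mem_inter] at hc
    have hu : c ∈ C ∪ C' := Finset.mem_union_left _ hc.1
    refine Finset.mem_inter.2 ⟨Finset.mem_filter.2 ⟨hu, ?_⟩, Finset.mem_filter.2 ⟨hu, ?_, ?_⟩⟩
    · intro d hd h1 h2
      rcases Finset.mem_union.1 hd with h | h
      · exact ha c hc.1 d h h1 h2
      · exact ha' c hc.2 d h h1 h2
    · exact ⟨(hb c hc.1).1, (hb' c hc.2).2⟩
    · intro d hd h1 h2
      rcases Finset.mem_union.1 hd with h | h
      · exact ha d h c hc.1 h1 h2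
      · exact ha' d h c hc.2 h1 h2
  have h1 := Finset.card_le_card hU
  have h2 := Finset.card_le_card hI
  have h3 := Finset.card_union_add_card_inter C C'
  have h4 := Finset.card_union_add_card_inter E F
  omega

theorem lam_mono (D : Finset (ℕ × ℕ)) {i i' j j' : ℕ} (hi : i ≤ i') (hj : j ≤ j') :
    lam D i j ≤ lam D i' j' := by
  obtain ⟨C, hC, ha, hb, hc⟩ := exists_lam D i j
  rw [← hc]
  exact le_lam hC ha fun c h => ⟨(hb c h).1.trans hi, (hb c h).2.trans hj⟩

theorem anti_swap {C : Finset (ℕ × ℕ)} (ha : Anti C) :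
    Anti (C.image Prod.swap) := by
  rw [anti_iff] at *
  intro c hc d hd h1 h2
  obtain ⟨c', hc', rfl⟩ := Finset.mem_image.1 hc
  obtain ⟨d', hd', rfl⟩ := Finset.mem_image.1 hd
  rw [ha c' hc' d' hd' h2 h1]

theorem lam_symm {D : Finset (ℕ × ℕ)} (hD : ∀ c ∈ D, c.swap ∈ D) (i j : ℕ) :
    lam D i j = lam D j i := by
  have key : ∀ i j, lam D i j ≤ lam D j i := by
    intro i j
    obtain ⟨C, hC, ha, hb, hc⟩ := exists_lam D i j
    rw [← hc, ← Finset.card_image_of_injective C Prod.swap_injective]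
    apply le_lam _ (anti_swap ha)
    · intro c hc
      obtain ⟨c', hc', rfl⟩ := Finset.mem_image.1 hc
      exact ⟨(hb c' hc').2, (hb c' hc').1⟩
    · intro c hc
      obtain ⟨c', hc', rfl⟩ := Finset.mem_image.1 hc
      exact hD _ (hC hc')
  exact le_antisymm (key i j) (key j i)

theorem lam_even {D : Finset (ℕ × ℕ)} (hD : ∀ c ∈ D, c.swap ∈ D) (hd : ∀ c ∈ D, c.1 ≠ c.2)
    (i : ℕ) : Even (lam D i i) := by
  obtain ⟨C, hC, ha, hb, hc⟩ := exists_lam D i i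
  have key : ∀ U : Finset (ℕ × ℕ), U ⊆ C → ((∀ c ∈ U, c.1 < c.2) ∨ (∀ c ∈ U, c.2 < c.1)) →
      2 * U.card ≤ lam D i i := by
    intro U hU hlt
    have hdis : Disjoint U (U.image Prod.swap) := by
      rw [Finset.disjoint_left]
      intro c hc hc'
      obtain ⟨d, hd, rfl⟩ := Finset.mem_image.1 hc'
      rcases hlt with h | h
      · have := h _ hc; have := h _ hd; simp at *; omega
      · have := h _ hc; have := h _ hd; simp at *; omega
    have : 2 * U.card = (U ∪ U.image Prod.swap).card := by
      rw [Finset.card_union_of_disjoint hdis, Finset.card_image_of_injective _ Prod.swap_injective]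
      ring
    rw [this]
    have hUa : Anti U := ha.subset hU
    have hUs := anti_swap hUa
    apply le_lam
    · intro c hc
      rcases Finset.mem_union.1 hc with h | h
      · exact hC (hU h)
      · obtain ⟨d, hd, rfl⟩ := Finset.mem_image.1 h
        exact hD _ (hC (hU hd))
    · rw [anti_iff] at *
      have hx : ∀ c ∈ U, ∀ d ∈ U, ¬ (c.1 ≤ d.2 ∧ c.2 ≤ d.1) := by
        rintro c hc d hd ⟨h1, h2⟩
        have h3 := hUa c hc d hd
        have h4 := hUa d hd c hc
        have h5 : c ≠ d ∨ c = d := by tauto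
        rcases hlt with h | h
        · have a1 := h c hc; have a2 := h d hd
          by_cases hh : c.1 ≤ d.1
          · have : c = d := h3 hh (by omega)
            subst this; omega
          · have : d = c := h4 (by omega) (by omega)
            subst this; omega
        · have a1 := h c hc; have a2 := h d hd
          by_cases hh : c.2 ≤ d.2
          · have : c = d := h3 (by omega) hh
            subst this; omega
          · have : d = c := h4 (by omega) (by omega)
            subst this; omega
      intro c hc d hd h1 h2
      rcases Finset.mem_union.1 hc with h | h <;> rcases Finset.mem_union.1 hd with h' | h'
      · exact hUa c h d h' h1 h2
      · obtain ⟨d', hd', rfl⟩ := Finset.mem_image.1 h'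
        exact absurd ⟨h1, h2⟩ (hx c h d' hd')
      · obtain ⟨d', hd', rfl⟩ := Finset.mem_image.1 h
        exact absurd ⟨h2, h1⟩ (hx d' hd' d h')
      · exact hUs c h d h' h1 h2
    · intro c hc
      rcases Finset.mem_union.1 hc with h | h
      · exact hb c (hU h)
      · obtain ⟨d, hd, rfl⟩ := Finset.mem_image.1 h
        exact ⟨(hb d (hU hd)).2, (hb d (hU hd)).1⟩
  have k1 := key (C.filter fun c => c.1 < c.2) (Finset.filter_subset _ _)
    (Or.inl fun c hc => (Finset.mem_filter.1 hc).2)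
  have k2 := key (C.filter fun c => ¬ c.1 < c.2) (Finset.filter_subset _ _)
    (Or.inr fun c hc => by
      have h := Finset.mem_filter.1 hc
      have := hd c (hC h.1)
      omega)
  have k3 := Finset.card_filter_add_card_filter_not (s := C) (fun c => c.1 < c.2)
  exact ⟨(C.filter fun c => c.1 < c.2).card, by omega⟩

/-- fixed-point-free involutions of the positive integers -/
structure Fpf (z : Equiv.Perm ℕ) : Prop where
  zero : z 0 = 0
  ne : ∀ i, 1 ≤ i → z i ≠ i
  inv : ∀ i, z (z i) = i

theorem Fpf.pos {z : Equiv.Perm ℕ} (hz : Fpf z) {i : ℕ} (hi : 1 ≤ i) : 1 ≤ z i := by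
  by_contra h
  have : z i = 0 := by omega
  have h2 := hz.inv i
  rw [this, hz.zero] at h2
  omega

theorem rnk_split (w : Equiv.Perm ℕ) {p i : ℕ} (h : p ≤ i) (j : ℕ) :
    rnk w i j = rnk w p j + ((Finset.Ioc p i).filter fun a => w a ∈ Finset.Icc 1 j).card := by
  unfold rnk
  rw [← Finset.card_union_of_disjoint]
  · congr 1
    ext a
    simp only [Finset.mem_filter, Finset.mem_union, Finset.mem_Icc, Finset.mem_Ioc]
    constructor
    · intro h; by_cases a ≤ p <;> [left; right] <;> omega
    · omega
  · rw [Finset.disjoint_left]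
    intro a
    simp only [Finset.mem_filter, Finset.mem_Icc, Finset.mem_Ioc]
    omega

theorem rnk_symm {z : Equiv.Perm ℕ} (hz : Fpf z) (i j : ℕ) : rnk z i j = rnk z j i := by
  unfold rnk
  refine Finset.card_bij' (fun a _ => z a) (fun a _ => z a) ?_ ?_ ?_ ?_
  · intro a; simp only [Finset.mem_filter, Finset.mem_Icc, hz.inv]; tauto
  · intro a; simp only [Finset.mem_filter, Finset.mem_Icc, hz.inv]; tauto
  · intro a _; exact hz.inv a
  · intro a _; exact hz.inv a

theorem rnk_mono (w : Equiv.Perm ℕ) {i i' j j' : ℕ} (hi : i ≤ i') (hj : j ≤ j') :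
    rnk w i j ≤ rnk w i' j' := by
  apply Finset.card_le_card
  intro a
  simp only [Finset.mem_filter, Finset.mem_Icc]
  omega

theorem rnk_full (w : Equiv.Perm ℕ) {p i : ℕ} (h : p ≤ i) (j : ℕ)
    (hf : ∀ r, p < r → r ≤ i → 1 ≤ w r ∧ w r ≤ j) : rnk w i j = rnk w p j + (i - p) := by
  rw [rnk_split w h, Finset.filter_true_of_mem, Nat.card_Ioc]
  intro r hr
  rw [Finset.mem_Ioc] at hr
  exact Finset.mem_Icc.2 (hf r hr.1 hr.2)

theorem rnk_mod (w : Equiv.Perm ℕ) {p i j' j : ℕ} (h : p ≤ i) (hj : j' ≤ j)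
    (hf : ∀ r, p < r → r ≤ i → ¬ (j' < w r ∧ w r ≤ j)) :
    rnk w i j + rnk w p j' = rnk w p j + rnk w i j' := by
  rw [rnk_split w h j, rnk_split w h j']
  have : (Finset.Ioc p i).filter (fun a => w a ∈ Finset.Icc 1 j) =
      (Finset.Ioc p i).filter (fun a => w a ∈ Finset.Icc 1 j') := by
    apply Finset.filter_congr
    intro r hr
    rw [Finset.mem_Ioc] at hr
    have := hf r hr.1 hr.2
    simp only [Finset.mem_Icc]
    omega
  rw [this]; ring

theorem rnk_even {z : Equiv.Perm ℕ} (hz : Fpf z) (i : ℕ) : Even (rnk z i i) := by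
  unfold rnk
  set S := (Finset.Icc 1 i).filter fun a => z a ∈ Finset.Icc 1 i with hS
  have k3 := Finset.card_filter_add_card_filter_not (s := S) (fun c => c < z c)
  have : (S.filter fun c => c < z c).card = (S.filter fun c => ¬ c < z c).card := by
    refine Finset.card_bij' (fun a _ => z a) (fun a _ => z a) ?_ ?_ ?_ ?_
    · intro a; simp only [hS, Finset.mem_filter, Finset.mem_Icc, hz.inv]; omega
    · intro a; simp only [hS, Finset.mem_filter, Finset.mem_Icc, hz.inv]
      intro h
      have := hz.ne a (by omega)
      omega
    · intro a _; exact hz.inv a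
    · intro a _; exact hz.inv a
  exact ⟨_, by rw [← k3, ← this]⟩

end Paper

namespace Paper

theorem conj_apply (z : Equiv.Perm ℕ) (p r a : ℕ) :
    (Equiv.swap p r * z * Equiv.swap p r) a = Equiv.swap p r (z (Equiv.swap p r a)) := rfl

theorem Fpf.conj {z : Equiv.Perm ℕ} (hz : Fpf z) {p r : ℕ} (hp : 1 ≤ p) (hr : 1 ≤ r) :
    Fpf (Equiv.swap p r * z * Equiv.swap p r) where
  zero := by
    have h0 : Equiv.swap p r 0 = 0 := Equiv.swap_apply_of_ne_of_ne (by omega) (by omega)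
    rw [conj_apply, h0, hz.zero, h0]
  ne := by
    intro i hi h
    rw [conj_apply] at h
    have h2 : z (Equiv.swap p r i) = Equiv.swap p r i := by
      rw [← Equiv.swap_apply_self p r i] at h
      have := (Equiv.swap p r).injective h
      simpa using this
    refine hz.ne (Equiv.swap p r i) ?_ h2
    by_cases h1 : i = p
    · subst h1; rw [Equiv.swap_apply_left]; exact hr
    · by_cases h3 : i = r
      · subst h3; rw [Equiv.swap_apply_right]; exact hp
      · rw [Equiv.swap_apply_of_ne_of_ne h1 h3]; exact hi
  inv := by
    intro i
    simp [hz.inv]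

theorem rnk_sum (w : Equiv.Perm ℕ) (N i j : ℕ) (h : i ≤ N) :
    rnk w i j = ∑ a ∈ Finset.Icc 1 N, if a ≤ i ∧ 1 ≤ w a ∧ w a ≤ j then 1 else 0 := by
  unfold rnk
  rw [← Finset.card_filter]
  congr 1
  ext a
  simp only [Finset.mem_filter, Finset.mem_Icc]
  omega

structure Quad (z : Equiv.Perm ℕ) (p q r s : ℕ) : Prop where
  fpf : Fpf z
  q1 : 1 ≤ q
  qp : q < p
  zp : z p = q
  pr : p < r
  qs : q < s
  zr : z r = s

theorem Quad.vals {z : Equiv.Perm ℕ} {p q r s : ℕ} (h : Quad z p q r s) :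
    z q = p ∧ z s = r ∧ s ≠ p ∧ s ≠ r ∧
    (Equiv.swap p r * z * Equiv.swap p r) p = s ∧
    (Equiv.swap p r * z * Equiv.swap p r) s = p ∧
    (Equiv.swap p r * z * Equiv.swap p r) q = r ∧
    (Equiv.swap p r * z * Equiv.swap p r) r = q ∧
    ∀ a, a ≠ p → a ≠ q → a ≠ r → a ≠ s →
      (Equiv.swap p r * z * Equiv.swap p r) a = z a := by
  obtain ⟨hz, q1, qp, zp, pr, qs, zr⟩ := h
  have zq : z q = p := by rw [← zp, hz.inv]
  have zs : z s = r := by rw [← zr, hz.inv]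
  have sr : s ≠ r := by rw [← zr]; exact hz.ne r (by omega)
  have sp : s ≠ p := by
    rintro rfl; omega
  refine ⟨zq, zs, sp, sr, ?_, ?_, ?_, ?_, ?_⟩
  · rw [conj_apply, Equiv.swap_apply_left, zr, Equiv.swap_apply_of_ne_of_ne sp sr]
  · rw [conj_apply, Equiv.swap_apply_of_ne_of_ne sp sr, zs, Equiv.swap_apply_right]
  · have h0 : Equiv.swap p r q = q := Equiv.swap_apply_of_ne_of_ne (by omega) (by omega)
    rw [conj_apply, h0, zq, Equiv.swap_apply_left]
  · rw [conj_apply, Equiv.swap_apply_right, zp, Equiv.swap_apply_of_ne_of_ne (by omega) (by omega)]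
  · intro a h1 h2 h3 h4
    rw [conj_apply, Equiv.swap_apply_of_ne_of_ne h1 h3, Equiv.swap_apply_of_ne_of_ne]
    · intro h; apply h2; rw [← zp, ← h, hz.inv]
    · intro h; apply h4; rw [← zr, ← h, hz.inv]

theorem Quad.rnk_eq {z : Equiv.Perm ℕ} {p q r s : ℕ} (h : Quad z p q r s) (i j : ℕ) :
    rnk z i j = rnk (Equiv.swap p r * z * Equiv.swap p r) i j +
      (if (p ≤ i ∧ i < r) ∧ (q ≤ j ∧ j < s) then 1 else 0) +
      (if (q ≤ i ∧ i < s) ∧ (p ≤ j ∧ j < r) then 1 else 0) := by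
  obtain ⟨zq, zs, sp, sr, vp, vs, vq, vr, ve⟩ := h.vals
  obtain ⟨hz, q1, qp, zp, pr, qs, zr⟩ := h
  set v := Equiv.swap p r * z * Equiv.swap p r with hv
  have hsub : ({p, q, r, s} : Finset ℕ) ⊆ Finset.Icc 1 (i + p + q + r + s) := by
    intro a; simp only [Finset.mem_insert, Finset.mem_singleton, Finset.mem_Icc]; omega
  have hsum : ∀ f : ℕ → ℕ, ∑ a ∈ ({p, q, r, s} : Finset ℕ), f a = f p + f q + f r + f s := by
    intro f
    rw [Finset.sum_insert, Finset.sum_insert, Finset.sum_insert, Finset.sum_singleton]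
    · ring
    · simp only [Finset.mem_singleton]; omega
    · simp only [Finset.mem_insert, Finset.mem_singleton]; omega
    · simp only [Finset.mem_insert, Finset.mem_singleton]; omega
  rw [rnk_sum z (i + p + q + r + s) i j (by omega), rnk_sum v (i + p + q + r + s) i j (by omega),
    ← Finset.sum_sdiff hsub, ← Finset.sum_sdiff hsub, hsum, hsum]
  have : ∑ a ∈ Finset.Icc 1 (i + p + q + r + s) \ {p, q, r, s},
      (if a ≤ i ∧ 1 ≤ z a ∧ z a ≤ j then 1 else 0) =
      ∑ a ∈ Finset.Icc 1 (i + p + q + r + s) \ {p, q, r, s},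
      (if a ≤ i ∧ 1 ≤ v a ∧ v a ≤ j then 1 else 0) := by
    apply Finset.sum_congr rfl
    intro a ha
    simp only [Finset.mem_sdiff, Finset.mem_insert, Finset.mem_singleton] at ha
    rw [ve a (by tauto) (by tauto) (by tauto) (by tauto)]
  rw [this, zp, zq, zr, zs, vp, vq, vr, vs]
  have e : ∀ (P Q : Prop) [Decidable P] [Decidable Q], (if P ∧ Q then 1 else 0 : ℕ) =
    (if P then 1 else 0) * (if Q then 1 else 0) := by
      intro P Q _ _; split_ifs <;> simp_all
  have x1 : ((if p ≤ i ∧ 1 ≤ q ∧ q ≤ j then 1 else 0 : ℕ) + (if r ≤ i ∧ 1 ≤ s ∧ s ≤ j then 1 else 0)) =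
     (if p ≤ i ∧ 1 ≤ s ∧ s ≤ j then 1 else 0) + (if r ≤ i ∧ 1 ≤ q ∧ q ≤ j then 1 else 0) +
     (if (p ≤ i ∧ i < r) ∧ (q ≤ j ∧ j < s) then 1 else 0) := by
    split_ifs <;> omega
  have x2 : ((if q ≤ i ∧ 1 ≤ p ∧ p ≤ j then 1 else 0 : ℕ) + (if s ≤ i ∧ 1 ≤ r ∧ r ≤ j then 1 else 0)) =
     (if q ≤ i ∧ 1 ≤ r ∧ r ≤ j then 1 else 0) + (if s ≤ i ∧ 1 ≤ p ∧ p ≤ j then 1 else 0) +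
     (if (q ≤ i ∧ i < s) ∧ (p ≤ j ∧ j < r) then 1 else 0) := by
    split_ifs <;> omega
  omega

/-- a corner of the dominant part -/
structure Corner (z : Equiv.Perm ℕ) (p q : ℕ) : Prop where
  fpf : Fpf z
  q1 : 1 ≤ q
  qp : q < p
  zp : z p = q
  rk : rnk z p q = 1

theorem good_exists {z : Equiv.Perm ℕ} {p q : ℕ} (h : Corner z p q) {D : Finset (ℕ × ℕ)}
    (hle : ∀ i j, lam D i j ≤ rnk z i j) (h0 : lam D p q = 0) :
    ∃ r, p < r ∧ q < z r ∧ ∀ i j, p ≤ i → i < r → q ≤ j → j < z r → lam D i j < rnk z i j := by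
  classical
  obtain ⟨hz, q1, qp, zp, rk⟩ := h
  by_contra hcon
  push Not at hcon
  have tight : ∀ r, p < r → q < z r → ∃ i j, p ≤ i ∧ i < r ∧ q ≤ j ∧ j < z r ∧
      lam D i j = rnk z i j := by
    intro r h1 h2
    obtain ⟨i, j, a, b, c, d, e⟩ := hcon r h1 h2
    exact ⟨i, j, a, b, c, d, le_antisymm (hle i j) e⟩
  -- step (i)
  have s1 : ∃ j, q ≤ j ∧ lam D p j = rnk z p j := by
    have hex : ∃ i, p ≤ i ∧ ∃ j, q ≤ j ∧ lam D i j = rnk z i j := by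
      obtain ⟨r, h1, h2⟩ : ∃ r, p < r ∧ q < z r := by
        by_contra hno
        push Not at hno
        have : ((Finset.Icc (p+1) (p+q+1)).image z).card ≤ (Finset.Icc 1 q).card := by
          apply Finset.card_le_card
          intro x hx
          obtain ⟨a, ha, rfl⟩ := Finset.mem_image.1 hx
          rw [Finset.mem_Icc] at ha
          exact Finset.mem_Icc.2 ⟨hz.pos (by omega), hno a (by omega)⟩
        rw [Finset.card_image_of_injective _ z.injective, Nat.card_Icc, Nat.card_Icc] at this
        omega
      obtain ⟨i, j, a, b, c, d, e⟩ := tight r h1 h2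
      exact ⟨i, a, j, c, e⟩
    obtain ⟨hp, j, hj, ht⟩ := Nat.find_spec hex
    have hmin := fun m => Nat.find_min hex (m := m)
    set i1 := Nat.find hex with hi1
    refine ⟨j, hj, ?_⟩
    have hfull := rnk_full z hp j (by
      intro r h1 h2
      refine ⟨hz.pos (by omega), ?_⟩
      by_contra hgt
      obtain ⟨i, j', a, b, c, d, e⟩ := tight r h1 (by omega)
      exact hmin i (by omega) ⟨a, j', c, e⟩)
    obtain ⟨C, hC, ha, hb, hc⟩ := exists_lam D i1 j
    have k3 := Finset.card_filter_add_card_filter_not (s := C) (fun c => c.1 ≤ p)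
    have k1 : (C.filter fun c => c.1 ≤ p).card ≤ lam D p j := by
      apply le_lam ((Finset.filter_subset _ _).trans hC) (ha.subset (Finset.filter_subset _ _))
      intro c hc
      rw [Finset.mem_filter] at hc
      exact ⟨hc.2, (hb c hc.1).2⟩
    have k2 : (C.filter fun c => ¬ c.1 ≤ p).card ≤ i1 - p := by
      rw [← Nat.card_Ioc]
      apply Finset.card_le_card_of_injOn Prod.fst
      · intro c hc
        have hc := Finset.mem_filter.1 hc
        have := hb c hc.1
        simp only [Finset.coe_Ioc, Set.mem_Ioc]
        omega
      · intro c hc d hd hcd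
        have hc := Finset.mem_filter.1 hc
        have hd := Finset.mem_filter.1 hd
        rcases le_total c.2 d.2 with hh | hh
        · exact ha c hc.1 d hd.1 hcd.le hh
        · exact (ha d hd.1 c hc.1 hcd.ge hh).symm
    have := hle p j
    omega
  obtain ⟨hj1, ht1⟩ := Nat.find_spec s1
  have hmin1 := fun m => Nat.find_min s1 (m := m)
  set j1 := Nat.find s1 with hj1d
  have hlt : q < j1 := by
    rcases Nat.lt_or_ge q j1 with h | h
    · exact h
    · have : j1 = q := le_antisymm h hj1
      rw [this] at ht1; omega
  by_cases hex : ∃ i, p ≤ i ∧ ∃ j, q ≤ j ∧ j < j1 ∧ lam D i j = rnk z i j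
  · obtain ⟨hp, j', hj', hj'1, ht⟩ := Nat.find_spec hex
    have hmin := fun m => Nat.find_min hex (m := m)
    set i' := Nat.find hex with hi'
    have hmod := rnk_mod z (p := p) (i := i') (j' := j') (j := j1) hp hj'1.le (by
      rintro r h1 h2 ⟨h3, h4⟩
      obtain ⟨i, j, a, b, c, d, e⟩ := tight r h1 (by omega)
      exact hmin i (by omega) ⟨a, j, c, by omega, e⟩)
    have hs := lam_super D (i := p) (i' := i') (j := j1) (j' := j') hp hj'1.le
    have h1 := hle i' j1
    have h2 := hle p j'
    exact hmin1 j' hj'1 ⟨hj', by omega⟩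
  · push Not at hex
    have hfull := rnk_full z (p := q) (i := j1) hlt.le p (by
      intro c h1 h2
      refine ⟨hz.pos (by omega), ?_⟩
      by_contra hgt
      obtain ⟨i, j', a, b, c', d, e⟩ := tight (z c) (by omega) (by rw [hz.inv]; exact h1)
      rw [hz.inv] at d
      exact hex i a j' c' (by omega) e)
    rw [rnk_symm hz, rnk_symm hz q p, rk] at hfull
    obtain ⟨C, hC, ha, hb, hc⟩ := exists_lam D p j1
    have k3 := Finset.card_filter_add_card_filter_not (s := C) (fun c => c.2 ≤ q)
    have k1 : (C.filter fun c => c.2 ≤ q).card ≤ lam D p q := by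
      apply le_lam ((Finset.filter_subset _ _).trans hC) (ha.subset (Finset.filter_subset _ _))
      intro c hc
      rw [Finset.mem_filter] at hc
      exact ⟨(hb c hc.1).1, hc.2⟩
    have k2 : (C.filter fun c => ¬ c.2 ≤ q).card ≤ j1 - q := by
      rw [← Nat.card_Ioc]
      apply Finset.card_le_card_of_injOn Prod.snd
      · intro c hc
        have hc := Finset.mem_filter.1 hc
        have := hb c hc.1
        simp only [Finset.coe_Ioc, Set.mem_Ioc]
        omega
      · intro c hc d hd hcd
        have hc := Finset.mem_filter.1 hc
        have hd := Finset.mem_filter.1 hd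
        rcases le_total c.1 d.1 with hh | hh
        · exact ha c hc.1 d hd.1 hh hcd.le
        · exact (ha d hd.1 c hc.1 hh hcd.ge).symm
    omega

theorem claimC {z : Equiv.Perm ℕ} {p q : ℕ} (h : Corner z p q) {D : Finset (ℕ × ℕ)}
    (hD : ∀ c ∈ D, c.swap ∈ D) (hd : ∀ c ∈ D, c.1 ≠ c.2)
    (hle : ∀ i j, lam D i j ≤ rnk z i j) (h0 : lam D p q = 0) :
    ∃ r s, Quad z p q r s ∧
      ∀ i j, lam D i j ≤ rnk (Equiv.swap p r * z * Equiv.swap p r) i j := by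
  classical
  have hex : ∃ m, ∃ r, m = r + z r ∧ (p < r ∧ q < z r ∧
      ∀ i j, p ≤ i → i < r → q ≤ j → j < z r → lam D i j < rnk z i j) := by
    obtain ⟨r, hr⟩ := good_exists h hle h0
    exact ⟨_, r, rfl, hr⟩
  obtain ⟨r, hm, pr, qs, hgood⟩ := Nat.find_spec hex
  have hmin := fun m => Nat.find_min hex (m := m)
  obtain ⟨hz, q1, qp, zp, rk⟩ := h
  have Q : Quad z p q r (z r) := ⟨hz, q1, qp, zp, pr, qs, rfl⟩
  refine ⟨r, z r, Q, ?_⟩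
  intro i j
  have he := Q.rnk_eq i j
  set s := z r with hs
  have hfree : ∀ a, p < a → a < r → q < z a → z a < s → False := by
    intro a h1 h2 h3 h4
    refine hmin (a + z a) (by omega) ⟨a, rfl, h1, h3, ?_⟩
    intro i j a1 a2 a3 a4
    exact hgood i j a1 (by omega) a3 (by omega)
  have hsym : ∀ i j, lam D i j = lam D j i := lam_symm hD
  have hdiag : ∀ i, p ≤ i → i < r → i < s → lam D i i + 2 ≤ rnk z i i := by
    intro i h1 h2 h3
    have e1 := lam_even hD hd i
    have e2 := rnk_even hz i
    have := hgood i i h1 h2 (by omega) h3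
    obtain ⟨x, hx⟩ := e1
    obtain ⟨y, hy⟩ := e2
    omega
  have hoff : ∀ i j, i < j → p ≤ i → j < r → j < s → lam D i j + 2 ≤ rnk z i j := by
    intro i j hij h1 h2 h3
    have hmod := rnk_mod z (p := i) (i := j) (j' := i) (j := j) hij.le hij.le (by
      rintro a h4 h5 ⟨h6, h7⟩
      exact hfree a (by omega) (by omega) (by omega) (by omega))
    have hsup := lam_super D (i := i) (i' := j) (j := j) (j' := i) hij.le hij.le
    have d1 := hdiag i h1 (by omega) (by omega)
    have d2 := hdiag j (by omega) h2 h3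
    rw [hsym j i] at hsup
    rw [rnk_symm hz j i] at hmod
    omega
  have hl := hle i j
  by_cases c1 : (p ≤ i ∧ i < r) ∧ (q ≤ j ∧ j < s)
  · have g1 := hgood i j c1.1.1 c1.1.2 c1.2.1 c1.2.2
    by_cases c2 : (q ≤ i ∧ i < s) ∧ (p ≤ j ∧ j < r)
    · rw [if_pos c1, if_pos c2] at he
      rcases lt_trichotomy i j with hij | hij | hij
      · have := hoff i j hij (by omega) (by omega) (by omega); omega
      · subst hij
        have := hdiag i (by omega) (by omega) (by omega); omega
      · have := hoff j i hij (by omega) (by omega) (by omega)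
        rw [hsym, rnk_symm hz] at this
        omega
    · rw [if_pos c1, if_neg c2] at he; omega
  · by_cases c2 : (q ≤ i ∧ i < s) ∧ (p ≤ j ∧ j < r)
    · rw [if_neg c1, if_pos c2] at he
      have g1 := hgood j i c2.2.1 c2.2.2 c2.1.1 c2.1.2
      rw [hsym, rnk_symm hz] at g1
      omega
    · rw [if_neg c1, if_neg c2] at he; omega

theorem corner_exists {z : Equiv.Perm ℕ} (hz : Fpf z) {n : ℕ} (h : ∃ a, 1 ≤ a ∧ a ≤ n ∧ z a ≤ n) :
    ∃ p q, Corner z p q ∧ p ≤ n := by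
  have hex : ∃ p, 1 ≤ p ∧ z p < p ∧ p ≤ n := by
    obtain ⟨a, h1, h2, h3⟩ := h
    rcases lt_or_gt_of_ne (hz.ne a h1) with h4 | h4
    · exact ⟨a, h1, h4, h2⟩
    · exact ⟨z a, hz.pos h1, by rw [hz.inv]; exact h4, h3⟩
  classical
  obtain ⟨h1, h2, h3⟩ := Nat.find_spec hex
  have hmin := fun m => Nat.find_min hex (m := m)
  set p := Nat.find hex with hp
  refine ⟨p, z p, ⟨hz, hz.pos h1, h2, rfl, ?_⟩, h3⟩
  unfold rnk
  rw [Finset.card_eq_one]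
  refine ⟨p, ?_⟩
  ext a
  simp only [Finset.mem_filter, Finset.mem_Icc, Finset.mem_singleton]
  constructor
  · rintro ⟨⟨a1, a2⟩, a3, a4⟩
    by_contra hne
    have b1 : a < p := by omega
    have b2 := hz.ne a a1
    have b3 : ¬ z a < a := fun hh => hmin a b1 ⟨a1, hh, by omega⟩
    exact hmin (z a) (by omega) ⟨a3, by rw [hz.inv]; omega, by omega⟩
  · rintro rfl
    exact ⟨⟨h1, le_rfl⟩, hz.pos h1, le_rfl⟩

end Paper

namespace Paper

section pfaff
variable {ι : Type*} [LinearOrder ι] {R : Type*} [CommRing R]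

/-- contraction sign -/
noncomputable def dsg (R : Type*) [CommRing R] (V : Finset ι) (x : ι) : R :=
  (-1) ^ (V.filter (· < x)).card

theorem dsg_erase {V : Finset ι} {a b : ι} (ha : a ∈ V) :
    dsg R V b = (if a < b then -1 else 1) * dsg R (V.erase a) b := by
  unfold dsg
  rw [Finset.filter_erase]
  split_ifs with h
  · have : a ∈ V.filter (· < b) := Finset.mem_filter.2 ⟨ha, h⟩
    rw [← Finset.card_erase_add_one this, pow_succ]; ring
  · have : a ∉ V.filter (· < b) := by simp [h]
    rw [Finset.erase_eq_of_notMem this, one_mul]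

theorem dsg_comm {V : Finset ι} {a b : ι} (hab : a ≠ b) (ha : a ∈ V) (hb : b ∈ V) :
    dsg R V a * dsg R (V.erase a) b = -(dsg R V b * dsg R (V.erase b) a) := by
  rw [dsg_erase (R := R) (b := b) ha, dsg_erase (R := R) (b := a) hb]
  rcases lt_or_gt_of_ne hab with h | h
  · rw [if_pos h, if_neg (not_lt.2 h.le)]; ring
  · rw [if_pos h, if_neg (not_lt.2 h.le)]; ring

theorem dsg_sq (V : Finset ι) (x : ι) : dsg R V x * dsg R V x = 1 := by
  unfold dsg; rw [← mul_pow]; simp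

/-- recursive Pfaffian -/
noncomputable def pfr (M : ι → ι → R) (V : Finset ι) : R :=
  if h : V.Nonempty then
    ∑ y ∈ (V.erase (V.max' h)).attach,
      dsg R V (V.max' h) * dsg R (V.erase (V.max' h)) y * M (V.max' h) y *
        pfr M ((V.erase (V.max' h)).erase y)
  else 1
termination_by V.card
decreasing_by
  have h1 := Finset.card_erase_lt_of_mem y.2
  have h2 := Finset.card_erase_lt_of_mem (V.max'_mem h)
  omega

theorem pfr_empty (M : ι → ι → R) : pfr M ∅ = 1 := by
  rw [pfr]; simp

theorem pfr_max (M : ι → ι → R) {V : Finset ι} {x : ι} (hx : x ∈ V) (hm : ∀ y ∈ V, y ≤ x) :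
    pfr M V = ∑ y ∈ V.erase x, dsg R V x * dsg R (V.erase x) y * M x y *
      pfr M ((V.erase x).erase y) := by
  have h : V.Nonempty := ⟨x, hx⟩
  have hmx : V.max' h = x := le_antisymm (hm _ (V.max'_mem h)) (V.le_max' x hx)
  rw [pfr, dif_pos h, hmx]
  exact Finset.sum_attach (V.erase x) fun y => dsg R V x * dsg R (V.erase x) y * M x y *
      pfr M ((V.erase x).erase y)

theorem exists_max {V : Finset ι} (h : V.Nonempty) : ∃ x ∈ V, ∀ y ∈ V, y ≤ x :=
  ⟨V.max' h, V.max'_mem h, fun y hy => V.le_max' y hy⟩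

theorem erase_card_lt {V : Finset ι} {x : ι} (hx : x ∈ V) (y : ι) :
    ((V.erase x).erase y).card < V.card :=
  lt_of_le_of_lt (Finset.card_le_card (Finset.erase_subset _ _)) (Finset.card_erase_lt_of_mem hx)

theorem pfr_congr {M M' : ι → ι → R} {V : Finset ι} (h : ∀ a ∈ V, ∀ b ∈ V, M a b = M' a b) :
    pfr M V = pfr M' V := by
  induction hn : V.card using Nat.strong_induction_on generalizing V with
  | _ n ih =>
    subst hn
    rcases V.eq_empty_or_nonempty with rfl | hne
    · rw [pfr_empty, pfr_empty]
    obtain ⟨x, hx, hm⟩ := exists_max hne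
    rw [pfr_max M hx hm, pfr_max M' hx hm]
    refine Finset.sum_congr rfl fun y hy => ?_
    rw [h x hx y (Finset.mem_of_mem_erase hy), ih _ (erase_card_lt hx y) _ rfl]
    intro a ha b hb
    exact h a (Finset.mem_of_mem_erase (Finset.mem_of_mem_erase ha)) b
      (Finset.mem_of_mem_erase (Finset.mem_of_mem_erase hb))

theorem pfr_odd (M : ι → ι → R) {V : Finset ι} (h : Odd V.card) : pfr M V = 0 := by
  induction hn : V.card using Nat.strong_induction_on generalizing V with
  | _ n ih =>
    subst hn
    rcases V.eq_empty_or_nonempty with rfl | hne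
    · simp at h
    obtain ⟨x, hx, hm⟩ := exists_max hne
    rw [pfr_max M hx hm]
    refine Finset.sum_eq_zero fun y hy => ?_
    rw [ih _ (erase_card_lt hx y) _ rfl, mul_zero]
    rw [Finset.card_erase_of_mem hy, Finset.card_erase_of_mem hx]
    have := Finset.card_pos.2 ⟨y, hy⟩
    rw [Finset.card_erase_of_mem hx] at this
    obtain ⟨k, hk⟩ := h
    exact ⟨k - 1, by omega⟩

theorem pfr_map {S : Type*} [CommRing S] (φ : R →+* S) (M : ι → ι → R) (V : Finset ι) :
    φ (pfr M V) = pfr (fun a b => φ (M a b)) V := by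
  induction hn : V.card using Nat.strong_induction_on generalizing V with
  | _ n ih =>
    subst hn
    rcases V.eq_empty_or_nonempty with rfl | hne
    · rw [pfr_empty, pfr_empty, map_one]
    obtain ⟨x, hx, hm⟩ := exists_max hne
    rw [pfr_max _ hx hm, pfr_max _ hx hm, map_sum]
    refine Finset.sum_congr rfl fun y hy => ?_
    rw [map_mul, map_mul, map_mul, ih _ (erase_card_lt hx y) _ rfl]
    simp [dsg]

theorem dsg_image {κ : Type*} [LinearOrder κ] {e : ι → κ} {V : Finset ι}
    (he : ∀ a ∈ V, ∀ b ∈ V, a < b → e a < e b) {x : ι} (hx : x ∈ V) :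
    dsg R (V.image e) (e x) = dsg R V x := by
  unfold dsg
  congr 1
  have inj : ∀ a ∈ V, ∀ b ∈ V, e a = e b → a = b := by
    intro a ha b hb h
    by_contra hne
    rcases lt_or_gt_of_ne hne with h1 | h1
    · exact (he a ha b hb h1).ne h
    · exact (he b hb a ha h1).ne' h
  have : (V.image e).filter (· < e x) = (V.filter (· < x)).image e := by
    ext c
    simp only [Finset.mem_filter, Finset.mem_image]
    constructor
    · rintro ⟨⟨a, ha, rfl⟩, h⟩
      refine ⟨a, ⟨ha, ?_⟩, rfl⟩
      by_contra h1
      rcases lt_or_eq_of_le (not_lt.1 h1) with h2 | h2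
      · exact lt_asymm h (he x hx a ha h2)
      · subst h2; exact lt_irrefl _ h
    · rintro ⟨a, ⟨ha, h⟩, rfl⟩
      exact ⟨⟨a, ha, rfl⟩, he a ha x hx h⟩
  rw [this, Finset.card_image_of_injOn]
  intro a ha b hb h
  exact inj a (Finset.mem_filter.1 ha).1 b (Finset.mem_filter.1 hb).1 h

theorem pfr_image {κ : Type*} [LinearOrder κ] {e : ι → κ} (M : κ → κ → R) {V : Finset ι}
    (he : ∀ a ∈ V, ∀ b ∈ V, a < b → e a < e b) :
    pfr M (V.image e) = pfr (fun a b => M (e a) (e b)) V := by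
  induction hn : V.card using Nat.strong_induction_on generalizing V with
  | _ n ih =>
    subst hn
    rcases V.eq_empty_or_nonempty with rfl | hne
    · rw [Finset.image_empty, pfr_empty, pfr_empty]
    obtain ⟨x, hx, hm⟩ := exists_max hne
    have inj : ∀ a ∈ V, ∀ b ∈ V, e a = e b → a = b := by
      intro a ha b hb h
      by_contra hne
      rcases lt_or_gt_of_ne hne with h1 | h1
      · exact (he a ha b hb h1).ne h
      · exact (he b hb a ha h1).ne' h
    have er : ∀ W ⊆ V, ∀ a ∈ V, (W.image e).erase (e a) = (W.erase a).image e := by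
      intro W hW a ha
      ext c
      simp only [Finset.mem_erase, Finset.mem_image]
      constructor
      · rintro ⟨h1, b, hb, rfl⟩
        exact ⟨b, ⟨fun h => h1 (by rw [h]), hb⟩, rfl⟩
      · rintro ⟨b, ⟨h1, hb⟩, rfl⟩
        exact ⟨fun h => h1 (inj b (hW hb) a ha h), b, hb, rfl⟩
    rw [pfr_max _ hx hm, pfr_max (x := e x) M (Finset.mem_image_of_mem e hx), er V subset_rfl x hx,
      Finset.sum_image]
    · refine Finset.sum_congr rfl fun y hy => ?_
      have hy' := Finset.mem_of_mem_erase hy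
      rw [er _ (Finset.erase_subset _ _) y hy', dsg_image he hx,
        dsg_image (fun a ha b hb => he a (Finset.mem_of_mem_erase ha) b (Finset.mem_of_mem_erase hb))
          hy, ih _ (erase_card_lt hx y) _ rfl]
      intro a ha b hb
      exact he a (Finset.mem_of_mem_erase (Finset.mem_of_mem_erase ha)) b
        (Finset.mem_of_mem_erase (Finset.mem_of_mem_erase hb))
    · intro a ha b hb h
      exact inj a (Finset.mem_of_mem_erase ha) b (Finset.mem_of_mem_erase hb) h
    · intro y hy
      obtain ⟨a, ha, rfl⟩ := Finset.mem_image.1 hy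
      rcases lt_or_eq_of_le (hm a ha) with h | h
      · exact (he a ha x hx h).le
      · rw [h]

/-- alternating matrices -/
def Alt (M : ι → ι → R) : Prop := (∀ a b, M a b = -M b a) ∧ ∀ a, M a a = 0

theorem sgn4 {V : Finset ι} {X y x w : ι} (hX : X ∈ V) (hy : y ∈ V) (hx : x ∈ V) (hw : w ∈ V)
    (h1 : X ≠ y) (h2 : X ≠ x) (h3 : X ≠ w) (h4 : y ≠ x) (h5 : y ≠ w)
    (h6 : w ≠ x) :
    dsg R V X * dsg R (V.erase X) y * (dsg R ((V.erase X).erase y) x *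
      dsg R (((V.erase X).erase y).erase x) w) =
    dsg R V x * dsg R (V.erase x) w * (dsg R ((V.erase x).erase w) X *
      dsg R (((V.erase x).erase w).erase X) y) := by
  have hs0 : (V.erase x).erase X = (V.erase X).erase x := Finset.erase_right_comm
  have hs1 : ((V.erase X).erase y).erase x = ((V.erase X).erase x).erase y :=
    Finset.erase_right_comm
  have hs2 : ((V.erase x).erase w).erase X = ((V.erase X).erase x).erase w := by
    rw [Finset.erase_right_comm, hs0]
  have e1 := dsg_comm (R := R) (V := V.erase X) h4 (Finset.mem_erase.2 ⟨h1.symm, hy⟩)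
    (Finset.mem_erase.2 ⟨h2.symm, hx⟩)
  have e2 := dsg_comm (R := R) (V := V) h2 hX hx
  have e3 := dsg_comm (R := R) (V := (V.erase X).erase x) h5
    (Finset.mem_erase.2 ⟨h4, Finset.mem_erase.2 ⟨h1.symm, hy⟩⟩)
    (Finset.mem_erase.2 ⟨h6, Finset.mem_erase.2 ⟨h3.symm, hw⟩⟩)
  have e4 := dsg_comm (R := R) (V := V.erase x) h3 (Finset.mem_erase.2 ⟨h2, hX⟩)
    (Finset.mem_erase.2 ⟨h6, hw⟩)
  rw [hs0] at e4
  rw [hs1, hs2]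
  linear_combination (dsg R V X * dsg R (((V.erase X).erase x).erase y) w) * e1
    - (dsg R ((V.erase X).erase x) y * dsg R (((V.erase X).erase x).erase y) w) * e2
    + dsg R V x * dsg R (V.erase x) X * e3
    - dsg R V x * dsg R (((V.erase X).erase x).erase w) y * e4

theorem pfr_row {M : ι → ι → R} (hM : Alt M) {V : Finset ι} {x : ι} (hx : x ∈ V) :
    pfr M V = ∑ y ∈ V.erase x, dsg R V x * dsg R (V.erase x) y * M x y *
      pfr M ((V.erase x).erase y) := by
  induction hn : V.card using Nat.strong_induction_on generalizing V with
  | _ n ih =>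
    subst hn
    obtain ⟨X, hX, hm⟩ := exists_max ⟨x, hx⟩
    by_cases hXx : X = x
    · subst hXx; exact pfr_max M hX hm
    have hxX : x ∈ V.erase X := Finset.mem_erase.2 ⟨Ne.symm hXx, hx⟩
    have hXx' : X ∈ V.erase x := Finset.mem_erase.2 ⟨hXx, hX⟩
    rw [pfr_max M hX hm, ← Finset.add_sum_erase _ _ hxX, ← Finset.add_sum_erase _ _ hXx']
    congr 1
    · rw [hM.1 x X, dsg_comm hXx hX hx, Finset.erase_right_comm]; ring
    have k1 : ∀ y ∈ (V.erase X).erase x, dsg R V X * dsg R (V.erase X) y * M X y *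
        pfr M ((V.erase X).erase y) = ∑ w ∈ (((V.erase X).erase y).erase x),
        dsg R V X * dsg R (V.erase X) y * (dsg R ((V.erase X).erase y) x *
        dsg R (((V.erase X).erase y).erase x) w) * (M X y * M x w *
        pfr M ((((V.erase X).erase y).erase x).erase w)) := by
      intro y hy
      rw [Finset.mem_erase] at hy
      rw [ih _ (erase_card_lt hX y) (Finset.mem_erase.2 ⟨Ne.symm hy.1, hxX⟩) rfl, Finset.mul_sum]
      refine Finset.sum_congr rfl fun w _ => ?_
      ring
    have k2 : ∀ w ∈ (V.erase x).erase X, dsg R V x * dsg R (V.erase x) w * M x w *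
        pfr M ((V.erase x).erase w) = ∑ y ∈ (((V.erase x).erase w).erase X),
        dsg R V x * dsg R (V.erase x) w * (dsg R ((V.erase x).erase w) X *
        dsg R (((V.erase x).erase w).erase X) y) * (M X y * M x w *
        pfr M ((((V.erase x).erase w).erase X).erase y)) := by
      intro w hw
      rw [Finset.mem_erase] at hw
      rw [pfr_max (x := X) M (V := (V.erase x).erase w) (Finset.mem_erase.2 ⟨Ne.symm hw.1, hXx'⟩)
        (fun y hy => hm y (Finset.mem_of_mem_erase (Finset.mem_of_mem_erase hy))), Finset.mul_sum]
      refine Finset.sum_congr rfl fun y _ => ?_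
      ring
    rw [Finset.sum_congr rfl k1, Finset.sum_congr rfl k2, Finset.sum_comm' (t' := (V.erase x).erase X)
      (s' := fun w => ((V.erase x).erase w).erase X)]
    · refine Finset.sum_congr rfl fun w hw => Finset.sum_congr rfl fun y hy => ?_
      simp only [Finset.mem_erase] at hw hy
      rw [sgn4 hX hy.2.2.2 hx hw.2.2 (Ne.symm hy.1) hXx (Ne.symm hw.1) hy.2.2.1 hy.2.1 hw.2.1]
      congr 3
      ext a; simp only [Finset.mem_erase]; tauto
    · intro y w
      simp only [Finset.mem_erase]; tauto

theorem pfr_alien {M : ι → ι → R} (hM : Alt M) {V : Finset ι} {k l : ι} (hk : k ∈ V) (hl : l ∈ V)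
    (hkl : k ≠ l) : ∑ y ∈ V.erase k, dsg R V k * dsg R (V.erase k) y * M l y *
      pfr M ((V.erase k).erase y) = 0 := by
  have hlk : l ∈ V.erase k := Finset.mem_erase.2 ⟨hkl.symm, hl⟩
  rw [← Finset.add_sum_erase _ _ hlk, hM.2, mul_zero, zero_mul, zero_add]
  have k1 : ∀ y ∈ (V.erase k).erase l, dsg R V k * dsg R (V.erase k) y * M l y *
        pfr M ((V.erase k).erase y) = ∑ w ∈ (((V.erase k).erase l).erase y),
        dsg R V k * dsg R (V.erase k) y * (dsg R ((V.erase k).erase y) l *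
        dsg R (((V.erase k).erase y).erase l) w) * (M l y * M l w *
        pfr M ((((V.erase k).erase y).erase l).erase w)) := by
    intro y hy
    rw [Finset.mem_erase] at hy
    rw [pfr_row hM (V := (V.erase k).erase y) (Finset.mem_erase.2 ⟨Ne.symm hy.1, hlk⟩),
      Finset.mul_sum, Finset.erase_right_comm]
    refine Finset.sum_congr rfl fun w _ => ?_
    ring
  rw [Finset.sum_congr rfl k1]
  rw [← Finset.sum_finset_product (((V.erase k).erase l).offDiag) ((V.erase k).erase l)
    (fun y => ((V.erase k).erase l).erase y) (f := fun p : ι × ι => dsg R V k * dsg R (V.erase k) p.1 *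
        (dsg R ((V.erase k).erase p.1) l *
        dsg R (((V.erase k).erase p.1).erase l) p.2) * (M l p.1 * M l p.2 *
        pfr M ((((V.erase k).erase p.1).erase l).erase p.2)))]
  · refine Finset.sum_involution (fun p _ => p.swap) ?_ ?_ ?_ ?_
    · rintro ⟨y, w⟩ hp
      simp only [Finset.mem_offDiag, Finset.mem_erase] at hp
      obtain ⟨⟨hyl, hyk, hy⟩, ⟨hwl, hwk, hw⟩, hyw⟩ := hp
      simp only [Prod.swap]
      have e1 := dsg_comm (R := R) (V := (V.erase k)) hyl (by simp [hyk, hy]) (by simp [hkl.symm, hl])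
      have e2 := dsg_comm (R := R) (V := (V.erase k)) hwl (by simp [hwk, hw]) (by simp [hkl.symm, hl])
      have e3 := dsg_comm (R := R) (V := (V.erase k).erase l) hyw (by simp [hyl, hyk, hy])
        (by simp [hwl, hwk, hw])
      rw [Finset.erase_right_comm (s := V.erase k) (a := y) (b := l),
        Finset.erase_right_comm (s := V.erase k) (a := w) (b := l),
        Finset.erase_right_comm (s := (V.erase k).erase l) (a := w) (b := y)]
      set P := pfr M ((((V.erase k).erase l).erase y).erase w)
      linear_combination (dsg R V k * dsg R (((V.erase k).erase l).erase y) w * M l y * M l w * P) * e1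
        + (dsg R V k * dsg R (((V.erase k).erase l).erase w) y * M l y * M l w * P) * e2
        - (dsg R V k * dsg R (V.erase k) l * M l y * M l w * P) * e3
    · rintro ⟨y, w⟩ hp _ h
      simp only [Finset.mem_offDiag] at hp
      exact hp.2.2 (congrArg Prod.snd h)
    · rintro ⟨y, w⟩ hp
      simp only [Finset.mem_offDiag, Prod.swap] at hp ⊢
      exact ⟨hp.2.1, hp.1, Ne.symm hp.2.2⟩
    · rintro ⟨y, w⟩ hp; rfl
  · rintro ⟨y, w⟩
    simp only [Finset.mem_offDiag, Finset.mem_erase]; tauto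

theorem pfr_dep {M : ι → ι → R} (hM : Alt M) {V : Finset ι} (c : ι → R)
    (hc : ∀ y ∈ V, ∑ l ∈ V, c l * M l y = 0) {k : ι} (hk : k ∈ V) : c k * pfr M V = 0 := by
  have h1 : ∑ l ∈ V, c l * ∑ y ∈ V.erase k, dsg R V k * dsg R (V.erase k) y * M l y *
      pfr M ((V.erase k).erase y) = 0 := by
    simp_rw [Finset.mul_sum]
    rw [Finset.sum_comm]
    refine Finset.sum_eq_zero fun y hy => ?_
    have : ∀ l ∈ V, c l * (dsg R V k * dsg R (V.erase k) y * M l y * pfr M ((V.erase k).erase y)) =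
      (c l * M l y) * (dsg R V k * dsg R (V.erase k) y * pfr M ((V.erase k).erase y)) :=
      fun l _ => by ring
    rw [Finset.sum_congr rfl this, ← Finset.sum_mul, hc y (Finset.mem_of_mem_erase hy), zero_mul]
  rw [← Finset.add_sum_erase _ _ hk, ← pfr_row hM hk, Finset.sum_eq_zero, add_zero] at h1
  · exact h1
  · intro l hl
    rw [Finset.mem_erase] at hl
    rw [pfr_alien hM hk hl.2 (Ne.symm hl.1), mul_zero]

theorem pfr_edge {M M' : ι → ι → R} (hM : Alt M) (hM' : Alt M') {V : Finset ι} {a b : ι}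
    (hab : a ≠ b) (ha : a ∈ V) (hb : b ∈ V) (h0 : M' a b = 0)
    (h : ∀ x y, (x, y) ≠ (a, b) → (x, y) ≠ (b, a) → M' x y = M x y) :
    pfr M' V = pfr M V - dsg R V a * dsg R (V.erase a) b * M a b * pfr M ((V.erase a).erase b) := by
  have hb' : b ∈ V.erase a := Finset.mem_erase.2 ⟨hab.symm, hb⟩
  rw [pfr_row hM ha, pfr_row hM' ha, ← Finset.add_sum_erase _ _ hb', ← Finset.add_sum_erase _ _ hb',
    h0, mul_zero, zero_mul, zero_add, add_sub_cancel_left]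
  refine Finset.sum_congr rfl fun y hy => ?_
  simp only [Finset.mem_erase] at hy
  rw [h a y (by simp [hy.1]) (by simp [hab])]
  congr 1
  refine pfr_congr fun c hc d hd => ?_
  simp only [Finset.mem_erase] at hc hd
  exact h c d (by simp [hc.2.1]) (by simp [hd.2.1])

end pfaff

end Paper

namespace Paper

section link
variable {N : ℕ} {R : Type*} [CommRing R]

/-- involutions moving exactly the points of `V` -/
def invs (V : Finset (Fin N)) : Finset (Equiv.Perm (Fin N)) :=
  Finset.univ.filter fun z => (∀ i, z (z i) = i) ∧ ∀ i, z i ≠ i ↔ i ∈ V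

def ell' (z : Equiv.Perm (Fin N)) : ℕ :=
  (Finset.univ.filter fun p : Fin N × Fin N =>
    z p.1 ≠ p.1 ∧ p.2 < p.1 ∧ p.2 < z p.1 ∧ p.1 < z p.2).card

noncomputable def wt (A : Fin N → Fin N → R) (z : Equiv.Perm (Fin N)) : R :=
  (-1 : R) ^ ell' z * ∏ i ∈ Finset.univ.filter (fun i : Fin N => z i < i), A (z i) i

theorem dsg_btw {V : Finset (Fin N)} {x y : Fin N} (hx : x ∈ V) (hy : y ∈ V) (hyx : y < x) :
    dsg R V x * dsg R (V.erase x) y =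
      - (-1) ^ (V.filter fun i => y < i ∧ i < x).card := by
  have h1 : V.filter (· < x) = insert y ((V.filter (· < y)) ∪ (V.filter fun i => y < i ∧ i < x)) := by
    ext a
    simp only [Finset.mem_filter, Finset.mem_insert, Finset.mem_union]
    constructor
    · rintro ⟨h, h'⟩
      rcases lt_trichotomy a y with h2 | h2 | h2 <;> tauto
    · rintro (rfl | h | h)
      · exact ⟨hy, hyx⟩
      · exact ⟨h.1, h.2.trans hyx⟩
      · exact ⟨h.1, h.2.2⟩
  have h2 : (V.erase x).filter (· < y) = V.filter (· < y) := by
    ext a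
    simp only [Finset.mem_filter, Finset.mem_erase]
    constructor
    · tauto
    · rintro ⟨h, h'⟩; exact ⟨⟨(h'.trans hyx).ne, h⟩, h'⟩
  unfold dsg
  rw [h1, h2, Finset.card_insert_of_notMem, Finset.card_union_of_disjoint, pow_succ, pow_add]
  · have : ((-1 : R) ^ (V.filter (· < y)).card) * ((-1 : R) ^ (V.filter (· < y)).card) = 1 := by
      rw [← mul_pow]; simp
    linear_combination (-(-1) ^ (V.filter fun i => y < i ∧ i < x).card : R) * this
  · rw [Finset.disjoint_left]
    intro a ha hb
    simp only [Finset.mem_filter] at ha hb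
    exact lt_asymm ha.2 hb.2.1
  · simp

theorem step_vals {V : Finset (Fin N)} {x y : Fin N} (hx : x ∈ V) (hy : y ∈ V) (hyx : y < x)
    {t : Equiv.Perm (Fin N)} (ht : t ∈ invs ((V.erase x).erase y)) :
    t x = x ∧ t y = y ∧ (t * Equiv.swap x y) x = y ∧ (t * Equiv.swap x y) y = x ∧
      ∀ a, a ≠ x → a ≠ y → (t * Equiv.swap x y) a = t a ∧ t a ≠ x ∧ t a ≠ y := by
  simp only [invs, Finset.mem_filter, Finset.mem_univ, true_and] at ht
  have tx : t x = x := by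
    by_contra h; have := (ht.2 x).1 h; simp at this
  have ty : t y = y := by
    by_contra h; have := (ht.2 y).1 h; simp at this
  refine ⟨tx, ty, by simp [ty], by simp [tx], fun a h1 h2 => ⟨?_, ?_, ?_⟩⟩
  · rw [Equiv.Perm.mul_apply, Equiv.swap_apply_of_ne_of_ne h1 h2]
  · intro h; apply h1; rw [← ht.1 a, h, tx]
  · intro h; apply h2; rw [← ht.1 a, h, ty]

theorem ell_step {V : Finset (Fin N)} {x y : Fin N} (hx : x ∈ V) (hm : ∀ a ∈ V, a ≤ x) (hy : y ∈ V)
    (hyx : y < x) {t : Equiv.Perm (Fin N)} (ht : t ∈ invs ((V.erase x).erase y)) :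
    ell' (t * Equiv.swap x y) = ell' t + (V.filter fun i => y < i ∧ i < x).card := by
  obtain ⟨tx, ty, sx, sy, sa⟩ := step_vals hx hy hyx ht
  simp only [invs, Finset.mem_filter, Finset.mem_univ, true_and, Finset.mem_erase] at ht
  set s := t * Equiv.swap x y with hs
  have tV : ∀ a, t a ≠ a → t a < x := by
    intro a ha
    have h1 := (ht.2 a).1 ha
    have h2 : t (t a) ≠ t a := by rw [ht.1]; exact Ne.symm ha
    have h3 := (ht.2 (t a)).1 h2
    exact lt_of_le_of_ne (hm _ h3.2.2) h3.2.1
  -- split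
  unfold ell'
  set F := (V.filter fun i => y < i ∧ i < x) with hF
  have hsplit : (Finset.univ.filter fun p : Fin N × Fin N =>
      s p.1 ≠ p.1 ∧ p.2 < p.1 ∧ p.2 < s p.1 ∧ p.1 < s p.2) =
      (Finset.univ.filter fun p : Fin N × Fin N =>
      t p.1 ≠ p.1 ∧ p.2 < p.1 ∧ p.2 < t p.1 ∧ p.1 < t p.2) ∪
      F.image (fun i => if y < t i then (i, y) else (y, t i)) := by
    ext ⟨i, j⟩
    simp only [Finset.mem_filter, Finset.mem_univ, true_and, Finset.mem_union, Finset.mem_image, hF]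
    constructor
    · rintro ⟨h1, h2, h3, h4⟩
      by_cases hj : j = y
      · subst hj
        rw [sy] at h4
        have hix : i ≠ x := h4.ne
        have hiy : i ≠ j := h2.ne'
        rw [(sa i hix hiy).1] at h1 h3
        right
        refine ⟨i, ⟨((ht.2 i).1 h1).2.2, h2, h4⟩, by rw [if_pos h3]⟩
      · by_cases hjx : j = x
        · subst hjx; rw [sx] at h4; exact absurd (h2.trans h4) (lt_asymm hyx)
        rw [(sa j hjx hj).1] at h4
        have hjm : t j ≠ j := by intro h; rw [h] at h4; exact lt_asymm h2 h4
        by_cases hi : i = y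
        · subst hi
          right
          have hjm' : t (t j) ≠ t j := by rw [ht.1]; exact Ne.symm hjm
          refine ⟨t j, ⟨((ht.2 (t j)).1 hjm').2.2, h4, tV j hjm⟩, ?_⟩
          rw [ht.1, if_neg (not_lt.2 h2.le)]
        · by_cases hix : i = x
          · subst hix; exact absurd h4 (lt_asymm (tV j hjm))
          rw [(sa i hix hi).1] at h1 h3
          left; exact ⟨h1, h2, h3, h4⟩
    · rintro (⟨h1, h2, h3, h4⟩ | ⟨c, ⟨hc, hyc, hcx⟩, h⟩)
      · have hix : i ≠ x := by rintro rfl; exact h1 tx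
        have hiy : i ≠ y := by rintro rfl; exact h1 ty
        have hjx : j ≠ x := by rintro rfl; rw [tx] at h4; exact lt_asymm h2 h4
        have hjy : j ≠ y := by rintro rfl; rw [ty] at h4; exact lt_asymm h2 h4
        rw [(sa i hix hiy).1, (sa j hjx hjy).1]
        exact ⟨h1, h2, h3, h4⟩
      · have hcm : t c ≠ c := (ht.2 c).2 ⟨hyc.ne', hcx.ne, hc⟩
        have hs' := sa c hcx.ne hyc.ne'
        split_ifs at h with h5
        · obtain ⟨rfl, rfl⟩ := Prod.mk.inj h
          rw [hs'.1, sy]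
          exact ⟨hcm, hyc, h5, hcx⟩
        · obtain ⟨rfl, rfl⟩ := Prod.mk.inj h
          have h6 : t c < y := lt_of_le_of_ne (not_lt.1 h5) hs'.2.2
          have h7 := sa (t c) hs'.2.1 hs'.2.2
          rw [sy, h7.1, ht.1]
          exact ⟨hyx.ne', h6, h6.trans hyx, hyc⟩
  rw [hsplit, Finset.card_union_of_disjoint, Finset.card_image_of_injOn]
  · intro c hc d hd h
    simp only [hF, Finset.coe_filter, Set.mem_ofPred_eq] at hc hd
    simp only at h
    split_ifs at h with h1 h2 h3
    · exact (Prod.mk.inj h).1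
    · exact absurd (Prod.mk.inj h).1 hc.2.1.ne'
    · exact absurd (Prod.mk.inj h).1 hd.2.1.ne
    · exact t.injective (Prod.mk.inj h).2
  · rw [Finset.disjoint_left]
    rintro ⟨i, j⟩ hp hq
    simp only [Finset.mem_filter, Finset.mem_univ, true_and, Finset.mem_image] at hp hq
    obtain ⟨c, hc, h⟩ := hq
    split_ifs at h with h5
    · obtain ⟨rfl, rfl⟩ := Prod.mk.inj h
      rw [ty] at hp; exact lt_asymm hp.2.1 hp.2.2.2
    · obtain ⟨rfl, rfl⟩ := Prod.mk.inj h
      exact hp.1 ty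

theorem wt_step (A : Fin N → Fin N → R) {V : Finset (Fin N)} {x y : Fin N} (hx : x ∈ V)
    (hm : ∀ a ∈ V, a ≤ x) (hy : y ∈ V)
    (hyx : y < x) {t : Equiv.Perm (Fin N)} (ht : t ∈ invs ((V.erase x).erase y)) :
    wt A (t * Equiv.swap x y) = - (dsg R V x * dsg R (V.erase x) y) * A y x * wt A t := by
  unfold wt
  rw [ell_step hx hm hy hyx ht, dsg_btw hx hy hyx]
  obtain ⟨tx, ty, sx, sy, sa⟩ := step_vals hx hy hyx ht
  set s := t * Equiv.swap x y with hs
  have : (Finset.univ.filter fun i => s i < i) = insert x (Finset.univ.filter fun i => t i < i) := by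
    ext i
    simp only [Finset.mem_filter, Finset.mem_univ, true_and, Finset.mem_insert]
    by_cases h1 : i = x
    · subst h1; simp [sx, hyx]
    · by_cases h2 : i = y
      · subst h2; simp [sy, ty, h1, hyx.le]
      · rw [(sa i h1 h2).1]; simp [h1]
  rw [this, Finset.prod_insert (by simp [tx]), sx, pow_add]
  have h2 : ∏ i ∈ Finset.univ.filter (fun i => t i < i), A (s i) i =
      ∏ i ∈ Finset.univ.filter (fun i => t i < i), A (t i) i := by
    refine Finset.prod_congr rfl fun i hi => ?_
    simp only [Finset.mem_filter, Finset.mem_univ, true_and] at hi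
    rw [(sa i (by rintro rfl; rw [tx] at hi; exact lt_irrefl _ hi)
      (by rintro rfl; rw [ty] at hi; exact lt_irrefl _ hi)).1]
  rw [h2]; ring

theorem invs_step {V : Finset (Fin N)} {x y : Fin N} (hx : x ∈ V) (hy : y ∈ V)
    (hyx : y ≠ x) {t : Equiv.Perm (Fin N)} (ht : t ∈ invs ((V.erase x).erase y)) :
    t * Equiv.swap x y ∈ invs V := by
  simp only [invs, Finset.mem_filter, Finset.mem_univ, true_and, Finset.mem_erase] at ht ⊢
  have tx : t x = x := by
    by_contra h; have := (ht.2 x).1 h; simp at this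
  have ty : t y = y := by
    by_contra h; have := (ht.2 y).1 h; simp at this
  have key : ∀ a, a ≠ x → a ≠ y → (t * Equiv.swap x y) a = t a ∧ t a ≠ x ∧ t a ≠ y := by
    intro a h1 h2
    refine ⟨?_, ?_, ?_⟩
    · rw [Equiv.Perm.mul_apply, Equiv.swap_apply_of_ne_of_ne h1 h2]
    · intro h; apply h1; rw [← ht.1 a, h, tx]
    · intro h; apply h2; rw [← ht.1 a, h, ty]
  constructor
  · intro i
    by_cases h1 : i = x
    · subst h1; simp [ty, tx]
    · by_cases h2 : i = y
      · subst h2; simp [ty, tx]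
      · obtain ⟨e1, e2, e3⟩ := key i h1 h2
        rw [e1, (key (t i) e2 e3).1, ht.1]
  · intro i
    by_cases h1 : i = x
    · subst h1; simp [ty, hx, hyx]
    · by_cases h2 : i = y
      · subst h2; simp [tx, hy, hyx.symm]
      · rw [(key i h1 h2).1, ht.2]; simp [h1, h2]

theorem invs_unstep {V : Finset (Fin N)} {x y : Fin N} (hx : x ∈ V)
    {s : Equiv.Perm (Fin N)} (hs : s ∈ invs V) (hsx : s x = y) :
    s * Equiv.swap x y ∈ invs ((V.erase x).erase y) := by
  simp only [invs, Finset.mem_filter, Finset.mem_univ, true_and, Finset.mem_erase] at hs ⊢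
  have sy : s y = x := by rw [← hsx, hs.1]
  have key : ∀ a, a ≠ x → a ≠ y → (s * Equiv.swap x y) a = s a ∧ s a ≠ x ∧ s a ≠ y := by
    intro a h1 h2
    refine ⟨?_, ?_, ?_⟩
    · rw [Equiv.Perm.mul_apply, Equiv.swap_apply_of_ne_of_ne h1 h2]
    · intro h; apply h2; rw [← hs.1 a, h, hsx]
    · intro h; apply h1; rw [← hs.1 a, h, sy]
  constructor
  · intro i
    by_cases h1 : i = x
    · subst h1; simp [sy]
    · by_cases h2 : i = y
      · subst h2; simp [hsx]
      · obtain ⟨e1, e2, e3⟩ := key i h1 h2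
        rw [e1, (key (s i) e2 e3).1, hs.1]
  · intro i
    by_cases h1 : i = x
    · subst h1; simp [sy]
    · by_cases h2 : i = y
      · subst h2; simp [hsx]
      · rw [(key i h1 h2).1, hs.2]; simp [h1, h2]

theorem sum_invs (A : Fin N → Fin N → R) (hA : ∀ a b, A a b = - A b a) (V : Finset (Fin N)) :
    ∑ z ∈ invs V, wt A z = pfr A V := by
  induction hn : V.card using Nat.strong_induction_on generalizing V with
  | _ n ih =>
    subst hn
    rcases V.eq_empty_or_nonempty with rfl | hne
    · have : invs (∅ : Finset (Fin N)) = {1} := by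
        ext s
        simp only [invs, Finset.mem_filter, Finset.mem_univ, true_and, Finset.mem_singleton]
        constructor
        · rintro ⟨h1, h2⟩
          ext i
          have : s i = i := by by_contra h; simpa using (h2 i).1 h
          simp [this]
        · rintro rfl; simp
      rw [pfr_empty, this, Finset.sum_singleton]
      simp [wt, ell']
    obtain ⟨x, hx, hm⟩ := exists_max hne
    rw [pfr_max A hx hm]
    have hmap : ∀ s ∈ invs V, s x ∈ V.erase x := by
      intro s hs
      simp only [invs, Finset.mem_filter, Finset.mem_univ, true_and] at hs
      have h1 := (hs.2 x).2 hx
      refine Finset.mem_erase.2 ⟨h1, (hs.2 _).1 ?_⟩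
      rw [hs.1]; exact Ne.symm h1
    rw [← Finset.sum_fiberwise_of_maps_to hmap]
    refine Finset.sum_congr rfl fun y hy => ?_
    obtain ⟨hyx, hyV⟩ := Finset.mem_erase.1 hy
    have hlt : y < x := lt_of_le_of_ne (hm y hyV) hyx
    rw [← ih _ (erase_card_lt hx y) _ rfl, Finset.mul_sum]
    refine Finset.sum_bij' (fun s _ => s * Equiv.swap x y) (fun s _ => s * Equiv.swap x y) ?_ ?_ ?_ ?_ ?_
    · intro s hs
      rw [Finset.mem_filter] at hs
      exact invs_unstep hx hs.1 hs.2
    · intro t ht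
      rw [Finset.mem_filter]
      exact ⟨invs_step hx hyV hyx ht, (step_vals hx hyV hlt ht).2.2.1⟩
    · intro s _; simp [mul_assoc]
    · intro s _; simp [mul_assoc]
    · intro s hs
      rw [Finset.mem_filter] at hs
      have := wt_step A hx hm hyV hlt (invs_unstep hx hs.1 hs.2)
      rw [mul_assoc, Equiv.swap_mul_self, mul_one] at this
      rw [this, hA x y]; ring

theorem pfaffian_eq (A : Matrix (Fin N) (Fin N) R) (hA : ∀ a b, A a b = - A b a) :
    Pfaffian A = pfr (fun a b => A a b) Finset.univ := by
  rw [← sum_invs _ hA]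
  unfold Pfaffian
  refine Finset.sum_congr ?_ ?_
  · ext s; simp [invs]; tauto
  · intro s hs
    simp only [invs, Finset.mem_filter, Finset.mem_univ, true_and] at hs
    unfold wt
    congr 2
    unfold ellFpfFin ell'
    congr 1
    ext p
    have := (hs.2 p.1)
    simp at this
    simp [this]

theorem pfaffian_sub {n : ℕ} (A : Matrix (Fin n) (Fin n) R) (hA : ∀ a b, A a b = - A b a)
    (T : Finset (Fin n)) :
    Pfaffian (A.submatrix (fun s => T.orderEmbOfFin rfl s) fun t => T.orderEmbOfFin rfl t) =
      pfr (fun a b => A a b) T := by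
  have h0 := pfaffian_eq (A.submatrix (fun s => T.orderEmbOfFin rfl s)
    fun t => T.orderEmbOfFin rfl t) (fun a b => hA _ _)
  rw [h0]
  have : T = Finset.univ.image (T.orderEmbOfFin rfl) := by
    simp
  conv_rhs => rw [this]
  rw [pfr_image]
  · rfl
  · intro a _ b _ h; exact (T.orderEmbOfFin rfl).strictMono h

end link
end Paper

namespace Paper

section order
variable {n : ℕ}

def vcode (v : SSVar n) : ℕ := v.1.1 * n + v.1.2

theorem varLT_iff (v w : SSVar n) : varLT v w ↔ vcode v < vcode w := by
  obtain ⟨⟨a, b⟩, h⟩ := v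
  obtain ⟨⟨c, d⟩, h'⟩ := w
  unfold varLT vcode
  simp only [Fin.lt_def, Fin.ext_iff]
  have hb := b.2
  have hd := d.2
  constructor
  · rintro (h1 | ⟨h1, h2⟩)
    · have : ((a : ℕ) + 1) * n ≤ c * n := Nat.mul_le_mul_right n h1
      rw [Nat.succ_mul] at this
      omega
    · rw [h1]; omega
  · intro h1
    rcases lt_trichotomy (a : ℕ) c with h2 | h2 | h2
    · exact Or.inl h2
    · right; rw [h2] at h1; exact ⟨h2, by omega⟩
    · exfalso
      have : ((c : ℕ) + 1) * n ≤ a * n := Nat.mul_le_mul_right n h2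
      rw [Nat.succ_mul] at this
      omega

theorem vcode_inj {v w : SSVar n} (h : vcode v = vcode w) : v = w := by
  have h1 := (varLT_iff v w).not.2 (by omega)
  have h2 := (varLT_iff w v).not.2 (by omega)
  obtain ⟨⟨a, b⟩, h⟩ := v
  obtain ⟨⟨c, d⟩, h'⟩ := w
  unfold varLT at h1 h2
  simp only [Fin.lt_def, Fin.ext_iff] at h1 h2
  have e1 : a = c := Fin.ext (by omega)
  have e2 : b = d := Fin.ext (by omega)
  subst e1; subst e2; rfl

theorem totalDeg_add (a b : SSVar n →₀ ℕ) : totalDeg (a + b) = totalDeg a + totalDeg b := by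
  unfold totalDeg; rw [Finsupp.sum_add_index'] <;> simp

theorem totalDeg_single (v : SSVar n) (e : ℕ) : totalDeg (Finsupp.single v e) = e := by
  unfold totalDeg; simp

theorem rl_irrefl (a : SSVar n →₀ ℕ) : ¬ revlexLT a a := by
  rintro (h | ⟨_, v, h, _⟩) <;> omega

theorem rl_trans {a b c : SSVar n →₀ ℕ} (h1 : revlexLT a b) (h2 : revlexLT b c) : revlexLT a c := by
  rcases h1 with h1 | ⟨h1, v, hv, hv'⟩
  · rcases h2 with h2 | ⟨h2, _⟩
    · left; omega
    · left; omega
  · rcases h2 with h2 | ⟨h2, w, hw, hw'⟩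
    · left; omega
    · right
      refine ⟨by omega, ?_⟩
      simp only [varLT_iff] at *
      rcases lt_trichotomy (vcode v) (vcode w) with h | h | h
      · exact ⟨w, by rw [hv' w h]; exact hw, fun u hu => by rw [hv' u (by omega), hw' u hu]⟩
      · have := vcode_inj h; subst this
        exact ⟨v, by omega, fun u hu => by rw [hv' u hu, hw' u hu]⟩
      · exact ⟨v, by rw [← hw' v h]; exact hv, fun u hu => by rw [hv' u hu, hw' u (by omega)]⟩

theorem rl_total {a b : SSVar n →₀ ℕ} (h : a ≠ b) : revlexLT a b ∨ revlexLT b a := by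
  rcases lt_trichotomy (totalDeg a) (totalDeg b) with h1 | h1 | h1
  · left; left; exact h1
  · have hne : (Finset.univ.filter fun v => a v ≠ b v).Nonempty := by
      by_contra h2
      apply h
      ext v
      by_contra h3
      exact h2 ⟨v, by simp [h3]⟩
    obtain ⟨v, hv, hmax⟩ := Finset.exists_max_image _ vcode hne
    simp only [Finset.mem_filter, Finset.mem_univ, true_and] at hv hmax
    have hw : ∀ w, varLT v w → a w = b w := by
      intro w hw
      rw [varLT_iff] at hw
      by_contra h3
      have := hmax w h3
      omega
    rcases lt_or_gt_of_ne hv with h3 | h3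
    · right; right; exact ⟨h1.symm, v, h3, fun w h => (hw w h).symm⟩
    · left; right; exact ⟨h1, v, h3, hw⟩
  · right; left; exact h1

theorem rl_add {a b : SSVar n →₀ ℕ} (c : SSVar n →₀ ℕ) (h : revlexLT a b) :
    revlexLT (c + a) (c + b) := by
  unfold revlexLT
  rw [totalDeg_add, totalDeg_add]
  rcases h with h | ⟨h, v, hv, hw⟩
  · left; omega
  · right
    refine ⟨by omega, v, by simpa using hv, fun w h => ?_⟩
    simp [hw w h]

theorem rl_of_var {a b : SSVar n →₀ ℕ} (h : totalDeg a = totalDeg b) (v : SSVar n) (hv : a v ≠ 0)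
    (hb : ∀ w, vcode v ≤ vcode w → b w = 0) : revlexLT a b := by
  rcases rl_total (a := a) (b := b) (by rintro rfl; exact hv (hb v le_rfl)) with h1 | h1
  · exact h1
  exfalso
  rcases h1 with h1 | ⟨_, w, hw, hw'⟩
  · omega
  · have h2 : vcode w < vcode v := by
      by_contra h3
      have := hb w (by omega); omega
    have := hw' v ((varLT_iff w v).2 h2)
    rw [hb v le_rfl] at this
    exact hv this.symm

theorem totalDeg_eq (m : SSVar n →₀ ℕ) : totalDeg m = Finsupp.degree m := rfl

theorem rl_finite (m : SSVar n →₀ ℕ) : {m' | revlexLT m' m}.Finite := by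
  refine (Finsupp.finite_of_degree_le (σ := SSVar n) (totalDeg m)).subset ?_
  rintro m' (h | h)
  · exact h.le
  · exact h.1.le

theorem rl_wf : WellFounded (revlexLT (n := n)) := by
  refine Subrelation.wf (r := InvImage (· < ·) fun m => ({m' | revlexLT m' m} : Set _).ncard) ?_
    (InvImage.wf _ Nat.lt_wfRel.wf)
  intro a b h
  refine Set.ncard_lt_ncard ⟨fun c hc => rl_trans hc h, fun hs => ?_⟩ (rl_finite b)
  exact rl_irrefl a (hs h)

theorem rl_exists_max {T : Finset (SSVar n →₀ ℕ)} (h : T.Nonempty) :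
    ∃ m ∈ T, ∀ m' ∈ T, m' ≠ m → revlexLT m' m := by
  classical
  induction h using Finset.Nonempty.cons_induction with
  | singleton a => exact ⟨a, by simp, by simp⟩
  | cons a s ha hs ih =>
    obtain ⟨m, hm, hm'⟩ := ih
    have hne : a ≠ m := by rintro rfl; exact ha hm
    rcases rl_total hne with h | h
    · refine ⟨m, by simp [hm], ?_⟩
      intro m' h1 h2
      rcases Finset.mem_cons.1 h1 with rfl | h1
      · exact h
      · exact hm' m' h1 h2
    · refine ⟨a, by simp, ?_⟩
      intro m' h1 h2
      rcases Finset.mem_cons.1 h1 with rfl | h1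
      · exact absurd rfl h2
      · by_cases h3 : m' = m
        · subst h3; exact h
        · exact rl_trans (hm' m' h1 h3) h

variable {K : Type*} [Field K]

def IsLead (f : MvPolynomial (SSVar n) K) (m : SSVar n →₀ ℕ) : Prop :=
  m ∈ f.support ∧ ∀ m' ∈ f.support, m' ≠ m → revlexLT m' m

theorem exists_lead {f : MvPolynomial (SSVar n) K} (h : f ≠ 0) : ∃ m, IsLead f m := by
  obtain ⟨m, h1, h2⟩ := rl_exists_max (T := f.support) (by
    rw [Finset.nonempty_iff_ne_empty, ne_eq, MvPolynomial.support_eq_empty]; exact h)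
  exact ⟨m, h1, h2⟩

theorem supp_monomial_mul {a m : SSVar n →₀ ℕ} {c : K} {f : MvPolynomial (SSVar n) K}
    (h : m ∈ (MvPolynomial.monomial a c * f).support) : ∃ m' ∈ f.support, m = a + m' := by
  rw [MvPolynomial.mem_support_iff, MvPolynomial.coeff_monomial_mul'] at h
  split_ifs at h with h1
  · refine ⟨m - a, ?_, ?_⟩
    · rw [MvPolynomial.mem_support_iff]; exact right_ne_zero_of_mul h
    · rw [add_tsub_cancel_of_le h1]
  · exact absurd rfl h

theorem IsLead.mul {f : MvPolynomial (SSVar n) K} {m : SSVar n →₀ ℕ} (h : IsLead f m)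
    (a : SSVar n →₀ ℕ) {c : K} (hc : c ≠ 0) : IsLead (MvPolynomial.monomial a c * f) (a + m) := by
  constructor
  · rw [MvPolynomial.mem_support_iff, MvPolynomial.coeff_monomial_mul]
    exact mul_ne_zero hc (MvPolynomial.mem_support_iff.1 h.1)
  · intro m' hm' hne
    obtain ⟨m'', h1, rfl⟩ := supp_monomial_mul hm'
    exact rl_add a (h.2 m'' h1 (by rintro rfl; exact hne rfl))

/-- division -/
theorem division (I : Ideal (MvPolynomial (SSVar n) K)) (Std : (SSVar n →₀ ℕ) → Prop)
    (hI : ∀ m, ¬ Std m → ∃ g ∈ I, IsLead g m) (m0 : SSVar n →₀ ℕ) :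
    ∀ f : MvPolynomial (SSVar n) K, (∀ m ∈ f.support, ¬ Std m → revlexLT m m0) →
      ∃ h ∈ I, (∀ m ∈ (f - h).support, Std m) ∧ ∀ m ∈ h.support, revlexLT m m0 := by
  classical
  induction m0 using rl_wf.induction with
  | _ m0 ih =>
    intro f hf
    by_cases hne : (f.support.filter fun m => ¬ Std m).Nonempty
    · obtain ⟨m1, hm1, hmax⟩ := rl_exists_max hne
      rw [Finset.mem_filter] at hm1
      obtain ⟨g, hg, hgm⟩ := hI m1 hm1.2
      have hc : MvPolynomial.coeff m1 g ≠ 0 := MvPolynomial.mem_support_iff.1 hgm.1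
      set c := MvPolynomial.coeff m1 f / MvPolynomial.coeff m1 g with hcdef
      have hlt := hf m1 hm1.1 hm1.2
      obtain ⟨h, hh, h1, h2⟩ := ih m1 hlt (f - MvPolynomial.C c * g) (by
        intro m hm hstd
        have hmne : m ≠ m1 := by
          rintro rfl
          rw [MvPolynomial.mem_support_iff, MvPolynomial.coeff_sub, MvPolynomial.coeff_C_mul, hcdef,
            div_mul_cancel₀ _ hc, sub_self] at hm
          exact hm rfl
        by_cases hmg : m ∈ g.support
        · exact hgm.2 m hmg hmne
        · refine hmax m ?_ hmne
          rw [Finset.mem_filter]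
          refine ⟨?_, hstd⟩
          rw [MvPolynomial.mem_support_iff] at hm ⊢
          rw [MvPolynomial.coeff_sub, MvPolynomial.coeff_C_mul,
            MvPolynomial.notMem_support_iff.1 hmg, mul_zero, sub_zero] at hm
          exact hm)
      refine ⟨MvPolynomial.C c * g + h, I.add_mem (I.mul_mem_left _ hg) hh, ?_, ?_⟩
      · rw [← sub_sub]; exact h1
      · intro m hm
        by_cases hmh : m ∈ h.support
        · exact rl_trans (h2 m hmh) hlt
        · have : m ∈ g.support := by
            rw [MvPolynomial.mem_support_iff] at hm ⊢
            rw [MvPolynomial.coeff_add, MvPolynomial.coeff_C_mul,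
              MvPolynomial.notMem_support_iff.1 hmh, add_zero] at hm
            exact right_ne_zero_of_mul hm
          by_cases hmm : m = m1
          · rw [hmm]; exact hlt
          · exact rl_trans (hgm.2 m this hmm) hlt
    · refine ⟨0, I.zero_mem, ?_, by simp⟩
      intro m hm
      rw [sub_zero] at hm
      by_contra h
      exact hne ⟨m, Finset.mem_filter.2 ⟨hm, h⟩⟩

/-- symmetric set of boxes of a monomial -/
noncomputable def Dm (m : SSVar n →₀ ℕ) : Finset (ℕ × ℕ) :=
  m.support.image (fun v => ((v.1.1 : ℕ) + 1, (v.1.2 : ℕ) + 1)) ∪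
    m.support.image (fun v => ((v.1.2 : ℕ) + 1, (v.1.1 : ℕ) + 1))

theorem mem_Dm {m : SSVar n →₀ ℕ} {c : ℕ × ℕ} : c ∈ Dm m ↔ ∃ v : SSVar n, m v ≠ 0 ∧
    (((v.1.1 : ℕ) + 1 = c.1 ∧ (v.1.2 : ℕ) + 1 = c.2) ∨
      ((v.1.1 : ℕ) + 1 = c.2 ∧ (v.1.2 : ℕ) + 1 = c.1)) := by
  obtain ⟨a, b⟩ := c
  simp only [Dm, Finset.mem_union, Finset.mem_image, Finsupp.mem_support_iff, Prod.mk.injEq]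
  constructor
  · rintro (⟨v, h1, h2⟩ | ⟨v, h1, h2⟩)
    · exact ⟨v, h1, Or.inl h2⟩
    · exact ⟨v, h1, Or.inr h2.symm⟩
  · rintro ⟨v, h1, h2 | h2⟩
    · exact Or.inl ⟨v, h1, h2⟩
    · exact Or.inr ⟨v, h1, h2.symm⟩

theorem Dm_swap {m : SSVar n →₀ ℕ} : ∀ c ∈ Dm m, c.swap ∈ Dm m := by
  intro c hc
  rw [mem_Dm] at hc ⊢
  obtain ⟨v, h1, h2⟩ := hc
  exact ⟨v, h1, h2.symm⟩

theorem Dm_ne {m : SSVar n →₀ ℕ} : ∀ c ∈ Dm m, c.1 ≠ c.2 := by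
  intro c hc
  rw [mem_Dm] at hc
  obtain ⟨v, h1, h2⟩ := hc
  have := v.2
  rw [Fin.lt_def] at this
  omega

theorem Dm_range {m : SSVar n →₀ ℕ} : ∀ c ∈ Dm m, (1 ≤ c.1 ∧ c.1 ≤ n) ∧ (1 ≤ c.2 ∧ c.2 ≤ n) := by
  intro c hc
  rw [mem_Dm] at hc
  obtain ⟨v, h1, h2⟩ := hc
  have := v.1.1.2
  have := v.1.2.2
  omega

def Std (z : Equiv.Perm ℕ) (m : SSVar n →₀ ℕ) : Prop := ∀ i j, lam (Dm m) i j ≤ rnk z i j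

end order
end Paper

namespace Paper

section lead
variable (K : Type*) [Field K] (n : ℕ)

open MvPolynomial in
/-- generic skew matrix with natural number labels -/
noncomputable def UN (a b : ℕ) : MvPolynomial (SSVar n) K :=
  if h : (1 ≤ b ∧ b < a) ∧ a ≤ n then X (ssvar a b h.2 h.1.1 h.1.2)
  else if h : (1 ≤ a ∧ a < b) ∧ b ≤ n then - X (ssvar b a h.2 h.1.1 h.1.2)
  else 0

theorem UN_alt : Alt (UN K n) := by
  constructor
  · intro a b
    unfold UN
    by_cases h1 : (1 ≤ b ∧ b < a) ∧ a ≤ n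
    · rw [dif_pos h1, dif_neg (by omega), dif_pos h1, neg_neg]
    · by_cases h2 : (1 ≤ a ∧ a < b) ∧ b ≤ n
      · rw [dif_neg h1, dif_pos h2, dif_pos h2]
      · rw [dif_neg h1, dif_neg h2, dif_neg h2, dif_neg h1, neg_zero]
  · intro a
    unfold UN
    rw [dif_neg (by omega), dif_neg (by omega)]

/-- codes `2 * label + tag`, tag `1` is the `A` block -/
noncomputable def Mz (v w : ℕ) : MvPolynomial (SSVar n) K :=
  if v % 2 = 1 ∧ w % 2 = 1 then 0 else UN K n (v / 2) (w / 2)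

theorem Mz_alt : Alt (Mz K n) := by
  constructor
  · intro a b
    unfold Mz
    by_cases h : a % 2 = 1 ∧ b % 2 = 1
    · rw [if_pos h, if_pos h.symm, neg_zero]
    · rw [if_neg h, if_neg (fun h' => h h'.symm), (UN_alt K n).1]
  · intro a
    unfold Mz
    split_ifs
    · rfl
    · exact (UN_alt K n).2 _

variable {K n}

theorem ssvar_vals {p q : ℕ} (hp : p ≤ n) (hq : 1 ≤ q) (hqp : q < p) :
    ((ssvar p q hp hq hqp).1.1 : ℕ) + 1 = p ∧ ((ssvar p q hp hq hqp).1.2 : ℕ) + 1 = q := by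
  unfold ssvar; simp only; omega

theorem ssvar_ext {v w : SSVar n} (h1 : (v.1.1 : ℕ) = w.1.1) (h2 : (v.1.2 : ℕ) = w.1.2) : v = w :=
  Subtype.ext (Prod.ext (Fin.ext h1) (Fin.ext h2))

theorem term_eq (V W : Finset ℕ) {x y : ℕ} (hyx : y / 2 ≤ x / 2) (P : MvPolynomial (SSVar n) K) :
    (dsg (MvPolynomial (SSVar n) K) V x * dsg (MvPolynomial (SSVar n) K) W y * Mz K n x y * P = 0) ∨
    ∃ (v : SSVar n) (c : K), c ≠ 0 ∧ (v.1.1 : ℕ) + 1 = x / 2 ∧ (v.1.2 : ℕ) + 1 = y / 2 ∧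
      ¬ (x % 2 = 1 ∧ y % 2 = 1) ∧ y / 2 < x / 2 ∧
      dsg (MvPolynomial (SSVar n) K) V x * dsg (MvPolynomial (SSVar n) K) W y * Mz K n x y * P =
        MvPolynomial.monomial (Finsupp.single v 1) c * P := by
  by_cases h : x % 2 = 1 ∧ y % 2 = 1
  · left; rw [Mz, if_pos h]; ring
  rw [Mz, if_neg h]
  by_cases h1 : (1 ≤ y / 2 ∧ y / 2 < x / 2) ∧ x / 2 ≤ n
  · right
    refine ⟨ssvar (x / 2) (y / 2) h1.2 h1.1.1 h1.1.2, dsg K V x * dsg K W y, ?_, (ssvar_vals _ _ _).1,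
      (ssvar_vals _ _ _).2, h, h1.1.2, ?_⟩
    · unfold dsg
      exact mul_ne_zero (pow_ne_zero _ (by simp)) (pow_ne_zero _ (by simp))
    · rw [UN, dif_pos h1]
      congr 1
      have : ∀ (V : Finset ℕ) (x : ℕ), dsg (MvPolynomial (SSVar n) K) V x =
        MvPolynomial.C (dsg K V x) := by intro V x; simp [dsg]
      rw [this, this, ← MvPolynomial.C_mul, MvPolynomial.C_mul_X_eq_monomial]
  · left
    rw [UN, dif_neg h1, dif_neg (by omega)]; ring

theorem pfr_homog {V : Finset ℕ} {m : SSVar n →₀ ℕ} (h : m ∈ (pfr (Mz K n) V).support) :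
    2 * totalDeg m = V.card := by
  classical
  induction hn : V.card using Nat.strong_induction_on generalizing V m with
  | _ k ih =>
    subst hn
    rcases V.eq_empty_or_nonempty with rfl | hne
    · rw [pfr_empty] at h
      have : m = 0 := by
        by_contra h1
        rw [MvPolynomial.mem_support_iff, MvPolynomial.coeff_one, if_neg (Ne.symm h1)] at h
        exact h rfl
      subst this; simp [totalDeg]
    obtain ⟨x, hx, hm⟩ := exists_max hne
    rw [pfr_max _ hx hm] at h
    obtain ⟨y, hy, h1⟩ := Finset.mem_biUnion.1 (MvPolynomial.support_sum h)
    have hyV := Finset.mem_of_mem_erase hy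
    have := hm y hyV
    rcases term_eq V (V.erase x) (show y / 2 ≤ x / 2 by omega) (pfr (Mz K n) ((V.erase x).erase y))
      with h2 | ⟨v, c, hc, _, _, _, _, h2⟩
    · rw [h2] at h1; simp at h1
    · rw [h2] at h1
      obtain ⟨m', hm', rfl⟩ := supp_monomial_mul h1
      have h3 := ih _ (erase_card_lt hx y) hm' rfl
      rw [Finset.card_erase_of_mem hy, Finset.card_erase_of_mem hx] at h3
      have := Finset.card_pos.2 ⟨y, hy⟩
      rw [Finset.card_erase_of_mem hx] at this
      rw [totalDeg_add, totalDeg_single]; omega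

theorem IsLead.add {f g : MvPolynomial (SSVar n) K} {m : SSVar n →₀ ℕ} (h : IsLead f m)
    (hg : ∀ m' ∈ g.support, revlexLT m' m) : IsLead (f + g) m := by
  have hmg : m ∉ g.support := fun h' => rl_irrefl m (hg m h')
  constructor
  · rw [MvPolynomial.mem_support_iff, MvPolynomial.coeff_add, MvPolynomial.notMem_support_iff.1 hmg,
      add_zero]
    exact MvPolynomial.mem_support_iff.1 h.1
  · intro m' hm' hne
    by_cases h1 : m' ∈ g.support
    · exact hg m' h1
    · refine h.2 m' ?_ hne
      rw [MvPolynomial.mem_support_iff] at hm' ⊢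
      rwa [MvPolynomial.coeff_add, MvPolynomial.notMem_support_iff.1 h1, add_zero] at hm'

theorem lead_step {V : Finset ℕ} {x y : ℕ} {m : SSVar n →₀ ℕ} (hl : IsLead (pfr (Mz K n) V) m)
    {v0 : SSVar n} (hv1 : (v0.1.1 : ℕ) + 1 = x / 2) (hv2 : (v0.1.2 : ℕ) + 1 = y / 2)
    (htag : ¬ (x % 2 = 1 ∧ y % 2 = 1)) (hyV : y ∉ V) (hx : ∀ w ∈ V, w < x)
    (hoth : ∀ w ∈ V, w / 2 < x / 2 → ¬ (x % 2 = 1 ∧ w % 2 = 1) → y / 2 < w / 2)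
    (hm : ∀ w, m w ≠ 0 → varLT w v0) :
    IsLead (pfr (Mz K n) (insert x (insert y V))) (Finsupp.single v0 1 + m) := by
  classical
  have hv0 := v0.2
  rw [Fin.lt_def] at hv0
  have hn0 := v0.1.1.2
  have hyx : y < x := by omega
  have hxV : x ∉ insert y V := by
    rw [Finset.mem_insert]; rintro (h | h)
    · omega
    · exact lt_irrefl _ (hx x h)
  have hL : 2 * totalDeg (Finsupp.single v0 1 + m) = (insert x (insert y V)).card := by
    rw [totalDeg_add, totalDeg_single, Finset.card_insert_of_notMem hxV,
      Finset.card_insert_of_notMem hyV, ← pfr_homog hl.1]; ring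
  rw [pfr_max (x := x) (Mz K n) (by simp) (by
    intro w hw
    simp only [Finset.mem_insert] at hw
    rcases hw with rfl | rfl | hw
    · exact le_rfl
    · exact hyx.le
    · exact (hx w hw).le), Finset.erase_insert hxV,
    ← Finset.add_sum_erase _ _ (Finset.mem_insert_self y V), Finset.erase_insert hyV]
  apply IsLead.add
  · rcases term_eq (K := K) (n := n) (insert x (insert y V)) (insert y V) (show y / 2 ≤ x / 2 by omega) (pfr (Mz K n) V)
      with h2 | ⟨v, c, hc, h3, h4, _, _, h2⟩
    · exfalso
      have hne : pfr (Mz K n) V ≠ 0 := by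
        intro h; have := hl.1; rw [h] at this; simp at this
      have hM : Mz K n x y ≠ 0 := by
        rw [Mz, if_neg htag, UN, dif_pos (by omega)]
        exact MvPolynomial.X_ne_zero _
      refine (mul_ne_zero (mul_ne_zero (mul_ne_zero ?_ ?_) hM) hne) h2
      · exact pow_ne_zero _ (by simp)
      · exact pow_ne_zero _ (by simp)
    · rw [h2]
      have : v = v0 := ssvar_ext (by omega) (by omega)
      rw [this]
      exact hl.mul _ hc
  · intro m' hm'
    obtain ⟨w, hw, h1⟩ := Finset.mem_biUnion.1 (MvPolynomial.support_sum hm')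
    have := hx w hw
    rcases term_eq (K := K) (n := n) (insert x (insert y V)) (insert y V) (show w / 2 ≤ x / 2 by omega)
      (pfr (Mz K n) ((insert y V).erase w)) with h2 | ⟨v, c, hc, h3, h4, h5, h6, h2⟩
    · rw [h2] at h1; simp at h1
    · rw [h2] at h1
      obtain ⟨m'', hm'', rfl⟩ := supp_monomial_mul h1
      have h7 := pfr_homog hm''
      rw [Finset.card_erase_of_mem (Finset.mem_insert_of_mem hw)] at h7
      rw [Finset.card_insert_of_notMem hxV] at hL
      have h8 := Finset.card_pos.2 ⟨y, Finset.mem_insert_self y V⟩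
      refine rl_of_var ?_ v ?_ ?_
      · rw [totalDeg_add, totalDeg_single] at hL
        rw [totalDeg_add, totalDeg_add, totalDeg_single, totalDeg_single]
        omega
      · simp
      · intro u hu
        have h9 := hoth w hw h6 h5
        have hv : vcode v0 < vcode v := by
          rw [← varLT_iff]; right
          exact ⟨Fin.ext (by omega), by rw [Fin.lt_def]; omega⟩
        have hu0 : u ≠ v0 := by rintro rfl; omega
        rw [Finsupp.add_apply, Finsupp.single_apply, if_neg (Ne.symm hu0), zero_add]
        by_contra h10
        have := (varLT_iff _ _).1 (hm u h10)
        omega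

/-- output of the chain construction -/
structure Ch (K : Type*) [Field K] (D : Set (ℕ × ℕ)) (k aLo aHi bLo bHi : ℕ) (i : ℕ) (V : Finset ℕ)
    (m : SSVar n →₀ ℕ) : Prop where
  lead : IsLead (pfr (Mz K n) V) m
  tA : ∀ v ∈ V, v % 2 = 1 → aLo ≤ v / 2 ∧ v / 2 < aHi
  tB : ∀ v ∈ V, v % 2 = 0 → bLo ≤ v / 2 ∧ v / 2 < bHi
  card : k ≤ (V.filter fun v => v % 2 = 0).card
  mon : ∀ v, m v ≠ 0 → m v = 1 ∧ ((v.1.1 : ℕ) + 1, (v.1.2 : ℕ) + 1) ∈ D ∧ (v.1.1 : ℕ) + 1 < i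

theorem mon_step {D : Set (ℕ × ℕ)} {m : SSVar n →₀ ℕ} {v0 : SSVar n} {i : ℕ}
    (hm : ∀ v, m v ≠ 0 → m v = 1 ∧ ((v.1.1 : ℕ) + 1, (v.1.2 : ℕ) + 1) ∈ D ∧ (v.1.1 : ℕ) + 1 < i)
    (h0 : m v0 = 0) (hD : ((v0.1.1 : ℕ) + 1, (v0.1.2 : ℕ) + 1) ∈ D) (hi : (v0.1.1 : ℕ) + 1 < i) :
    ∀ v : SSVar n, (Finsupp.single v0 1 + m : SSVar n →₀ ℕ) v ≠ 0 →
      (Finsupp.single v0 1 + m : SSVar n →₀ ℕ) v = 1 ∧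
      ((v.1.1 : ℕ) + 1, (v.1.2 : ℕ) + 1) ∈ D ∧ (v.1.1 : ℕ) + 1 < i := by
  intro v hv
  by_cases h : v = v0
  · subst h; simp [h0, hD, hi]
  · rw [Finsupp.add_apply, Finsupp.single_apply, if_neg (Ne.symm h), zero_add] at hv ⊢
    exact hm v hv

theorem card_even_step {V : Finset ℕ} {x y : ℕ} (hx : x ∉ insert y V) (hy : y ∉ V) :
    ((insert x (insert y V)).filter fun v => v % 2 = 0).card =
      (V.filter fun v => v % 2 = 0).card + (if x % 2 = 0 then 1 else 0) +
        (if y % 2 = 0 then 1 else 0) := by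
  classical
  rw [Finset.filter_insert, Finset.filter_insert]
  have h1 : y ∉ V.filter fun v => v % 2 = 0 := fun h => hy (Finset.mem_filter.1 h).1
  rw [Finset.mem_insert] at hx
  push Not at hx
  have h2 : x ∉ V.filter fun v => v % 2 = 0 := fun h => hx.2 (Finset.mem_filter.1 h).1
  split_ifs <;> simp [Finset.card_insert_of_notMem, h1, h2, hx.1]

end lead
end Paper

namespace Paper

section chain
variable {K : Type*} [Field K] {n : ℕ} {D : Set (ℕ × ℕ)}

theorem Ch.weaken {k aLo aHi bLo bHi i k' aLo' aHi' bLo' bHi' i' : ℕ} {V : Finset ℕ}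
    {m : SSVar n →₀ ℕ} (h : Ch K D k aLo aHi bLo bHi i V m) (hk : k' ≤ k) (h1 : aLo' ≤ aLo)
    (h2 : aHi ≤ aHi') (h3 : bLo' ≤ bLo) (h4 : bHi ≤ bHi') (h5 : i ≤ i') :
    Ch K D k' aLo' aHi' bLo' bHi' i' V m where
  lead := h.lead
  tA := fun v hv ht => ⟨h1.trans (h.tA v hv ht).1, (h.tA v hv ht).2.trans_le h2⟩
  tB := fun v hv ht => ⟨h3.trans (h.tB v hv ht).1, (h.tB v hv ht).2.trans_le h4⟩
  card := hk.trans h.card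
  mon := fun v hv => ⟨(h.mon v hv).1, (h.mon v hv).2.1, (h.mon v hv).2.2.trans_le h5⟩

theorem Ch.row {k aLo bLo j i b : ℕ} {V : Finset ℕ}
    {m : SSVar n →₀ ℕ} (h : Ch K D k aLo i (b + 1) j i V m) (hj : j ≤ i) (hb : b < i) (hb1 : 1 ≤ b)
    (hi : i ≤ n) (hD : (i, b) ∈ D) (ha : aLo ≤ i) (hbl : bLo ≤ b) {j' : ℕ} (hj' : j ≤ j')
    (hbj : b < j') :
    ∃ V m, Ch (n := n) K D (k + 1) aLo (i + 1) bLo j' (i + 1) V m := by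
  have hv := ssvar_vals hi hb1 hb
  set v0 := ssvar i b hi hb1 hb with hv0
  have hlt : ∀ w, m w ≠ 0 → varLT w v0 := by
    intro w hw; left; rw [Fin.lt_def]; have := (h.mon w hw).2.2; omega
  have hx : ∀ w ∈ V, w < 2 * i + 1 := by
    intro w hw
    rcases Nat.mod_two_eq_zero_or_one w with h1 | h1
    · have := h.tB w hw h1; omega
    · have := h.tA w hw h1; omega
  have hy : 2 * b ∉ V := by
    intro hw; have := h.tB _ hw (by omega); omega
  refine ⟨insert (2 * i + 1) (insert (2 * b) V), Finsupp.single v0 1 + m, ?_, ?_, ?_, ?_, ?_⟩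
  · refine lead_step h.lead (by omega) (by omega) (by omega) hy hx ?_ hlt
    intro w hw _ h2
    have := h.tB w hw (by omega); omega
  · intro w hw ht
    simp only [Finset.mem_insert] at hw
    rcases hw with rfl | rfl | hw
    · omega
    · omega
    · have := h.tA w hw ht; omega
  · intro w hw ht
    simp only [Finset.mem_insert] at hw
    rcases hw with rfl | rfl | hw
    · omega
    · omega
    · have := h.tB w hw ht; omega
  · rw [card_even_step _ hy]
    · have := h.card
      rw [if_neg (by omega), if_pos (by omega)]; omega
    · rw [Finset.mem_insert]; rintro (h1 | h1)
      · omega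
      · exact lt_irrefl _ (hx _ h1)
  · refine mon_step (h.weaken le_rfl le_rfl le_rfl le_rfl le_rfl (Nat.le_succ i)).mon ?_ ?_ ?_
    · by_contra h1
      have := (varLT_iff _ _).1 (hlt v0 h1); omega
    · rw [hv.1, hv.2]; exact hD
    · omega

theorem Ch.col {k aLo bLo bLo' i a : ℕ} {V : Finset ℕ}
    {m : SSVar n →₀ ℕ} (h : Ch K D k (a + 1) i bLo' i i V m) (hab : a < bLo') (ha : a < i) (ha1 : 1 ≤ a)
    (hi : i ≤ n) (hD : (i, a) ∈ D) (hal : aLo ≤ a) (hbl : bLo ≤ i) (hbl' : bLo ≤ bLo') :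
    ∃ V m, Ch (n := n) K D (k + 1) aLo (i + 1) bLo (i + 1) (i + 1) V m := by
  have hv := ssvar_vals hi ha1 ha
  set v0 := ssvar i a hi ha1 ha with hv0
  have hlt : ∀ w, m w ≠ 0 → varLT w v0 := by
    intro w hw; left; rw [Fin.lt_def]; have := (h.mon w hw).2.2; omega
  have hx : ∀ w ∈ V, w < 2 * i := by
    intro w hw
    rcases Nat.mod_two_eq_zero_or_one w with h1 | h1
    · have := h.tB w hw h1; omega
    · have := h.tA w hw h1; omega
  have hy : 2 * a + 1 ∉ V := by
    intro hw; have := h.tA _ hw (by omega); omega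
  refine ⟨insert (2 * i) (insert (2 * a + 1) V), Finsupp.single v0 1 + m, ?_, ?_, ?_, ?_, ?_⟩
  · refine lead_step h.lead (by omega) (by omega) (by omega) hy hx ?_ hlt
    intro w hw _ h2
    rcases Nat.mod_two_eq_zero_or_one w with h1 | h1
    · have := h.tB w hw h1; omega
    · have := h.tA w hw h1; omega
  · intro w hw ht
    simp only [Finset.mem_insert] at hw
    rcases hw with rfl | rfl | hw
    · omega
    · omega
    · have := h.tA w hw ht; omega
  · intro w hw ht
    simp only [Finset.mem_insert] at hw
    rcases hw with rfl | rfl | hw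
    · omega
    · omega
    · have := h.tB w hw ht; omega
  · rw [card_even_step _ hy]
    · have := h.card
      rw [if_pos (by omega), if_neg (by omega)]; omega
    · rw [Finset.mem_insert]; rintro (h1 | h1)
      · omega
      · exact lt_irrefl _ (hx _ h1)
  · refine mon_step (h.weaken le_rfl le_rfl le_rfl le_rfl le_rfl (Nat.le_succ i)).mon ?_ ?_ ?_
    · by_contra h1
      have := (varLT_iff _ _).1 (hlt v0 h1); omega
    · rw [hv.1, hv.2]; exact hD
    · omega

theorem Ch.bb {k aLo bLo i a : ℕ} {V : Finset ℕ}
    {m : SSVar n →₀ ℕ} (h : Ch K D k (a + 1) i (a + 1) i i V m) (ha : a < i) (ha1 : 1 ≤ a)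
    (hi : i ≤ n) (hD : (i, a) ∈ D) (hal : aLo ≤ a) (hbl : bLo ≤ a) :
    ∃ V m, Ch (n := n) K D (k + 2) aLo (i + 1) bLo (i + 1) (i + 1) V m := by
  have hv := ssvar_vals hi ha1 ha
  set v0 := ssvar i a hi ha1 ha with hv0
  have hlt : ∀ w, m w ≠ 0 → varLT w v0 := by
    intro w hw; left; rw [Fin.lt_def]; have := (h.mon w hw).2.2; omega
  have hx : ∀ w ∈ V, w < 2 * i := by
    intro w hw
    rcases Nat.mod_two_eq_zero_or_one w with h1 | h1
    · have := h.tB w hw h1; omega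
    · have := h.tA w hw h1; omega
  have hy : 2 * a ∉ V := by
    intro hw; have := h.tB _ hw (by omega); omega
  refine ⟨insert (2 * i) (insert (2 * a) V), Finsupp.single v0 1 + m, ?_, ?_, ?_, ?_, ?_⟩
  · refine lead_step h.lead (by omega) (by omega) (by omega) hy hx ?_ hlt
    intro w hw _ h2
    rcases Nat.mod_two_eq_zero_or_one w with h1 | h1
    · have := h.tB w hw h1; omega
    · have := h.tA w hw h1; omega
  · intro w hw ht
    simp only [Finset.mem_insert] at hw
    rcases hw with rfl | rfl | hw
    · omega
    · omega
    · have := h.tA w hw ht; omega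
  · intro w hw ht
    simp only [Finset.mem_insert] at hw
    rcases hw with rfl | rfl | hw
    · omega
    · omega
    · have := h.tB w hw ht; omega
  · rw [card_even_step _ hy]
    · have := h.card
      rw [if_pos (by omega), if_pos (by omega)]; omega
    · rw [Finset.mem_insert]; rintro (h1 | h1)
      · omega
      · exact lt_irrefl _ (hx _ h1)
  · refine mon_step (h.weaken le_rfl le_rfl le_rfl le_rfl le_rfl (Nat.le_succ i)).mon ?_ ?_ ?_
    · by_contra h1
      have := (varLT_iff _ _).1 (hlt v0 h1); omega
    · rw [hv.1, hv.2]; exact hD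
    · omega

theorem Ch.both {k aLo bLo i a b : ℕ} {V : Finset ℕ}
    {m : SSVar n →₀ ℕ} (h : Ch K D k (a + 1) i (b + 1) i i V m) (hab : a < b) (hb : b < i) (ha1 : 1 ≤ a)
    (hi : i ≤ n) (hD : (i, a) ∈ D) (hD' : (i, b) ∈ D) (hal : aLo ≤ a) (hbl : bLo ≤ b) :
    ∃ V m, Ch (n := n) K D (k + 2) aLo (i + 1) bLo (i + 1) (i + 1) V m := by
  have ha : a < i := by omega
  have hb1 : 1 ≤ b := by omega
  have hv := ssvar_vals hi ha1 ha
  set v0 := ssvar i a hi ha1 ha with hv0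
  have hlt : ∀ w, m w ≠ 0 → varLT w v0 := by
    intro w hw; left; rw [Fin.lt_def]; have := (h.mon w hw).2.2; omega
  have hx : ∀ w ∈ V, w < 2 * i := by
    intro w hw
    rcases Nat.mod_two_eq_zero_or_one w with h1 | h1
    · have := h.tB w hw h1; omega
    · have := h.tA w hw h1; omega
  have hy : 2 * a + 1 ∉ V := by
    intro hw; have := h.tA _ hw (by omega); omega
  have hl1 : IsLead (pfr (Mz K n) (insert (2 * i) (insert (2 * a + 1) V)))
      (Finsupp.single v0 1 + m) := by
    refine lead_step h.lead (by omega) (by omega) (by omega) hy hx ?_ hlt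
    intro w hw _ h2
    rcases Nat.mod_two_eq_zero_or_one w with h1 | h1
    · have := h.tB w hw h1; omega
    · have := h.tA w hw h1; omega
  have hxy : 2 * i ∉ insert (2 * a + 1) V := by
    rw [Finset.mem_insert]; rintro (h1 | h1)
    · omega
    · exact lt_irrefl _ (hx _ h1)
  have hmon := mon_step (v0 := v0)
    (h.weaken le_rfl le_rfl le_rfl le_rfl le_rfl (Nat.le_succ i)).mon (by
    by_contra h1
    have := (varLT_iff _ _).1 (hlt v0 h1); omega) (by rw [hv.1, hv.2]; exact hD) (by omega)
  have hcard := card_even_step hxy hy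
  rw [if_pos (by omega), if_neg (by omega)] at hcard
  have hlt2 : ∀ w, (Finsupp.single v0 1 + m : SSVar n →₀ ℕ) w ≠ 0 → varLT w (ssvar i b hi hb1 hb) := by
    have hvb := ssvar_vals hi hb1 hb
    intro w hw
    by_cases h1 : w = v0
    · right; subst h1; exact ⟨Fin.ext (by omega), by rw [Fin.lt_def]; omega⟩
    · rw [Finsupp.add_apply, Finsupp.single_apply, if_neg (Ne.symm h1), zero_add] at hw
      left; rw [Fin.lt_def]; have := (h.mon w hw).2.2; omega
  have hvb := ssvar_vals hi hb1 hb
  set v1 := ssvar i b hi hb1 hb with hv1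
  set V1 := insert (2 * i) (insert (2 * a + 1) V) with hV1
  have hx1 : ∀ w ∈ V1, w < 2 * i + 1 := by
    intro w hw
    simp only [hV1, Finset.mem_insert] at hw
    rcases hw with rfl | rfl | hw
    · omega
    · omega
    · have := hx w hw; omega
  have hy1 : 2 * b ∉ V1 := by
    intro hw
    simp only [hV1, Finset.mem_insert] at hw
    rcases hw with hw | hw | hw
    · omega
    · omega
    · have := h.tB _ hw (by omega); omega
  refine ⟨insert (2 * i + 1) (insert (2 * b) V1), Finsupp.single v1 1 + (Finsupp.single v0 1 + m),
    ?_, ?_, ?_, ?_, ?_⟩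
  · refine lead_step hl1 (by omega) (by omega) (by omega) hy1 hx1 ?_ hlt2
    intro w hw h3 h2
    simp only [hV1, Finset.mem_insert] at hw
    rcases hw with hw | hw | hw
    · omega
    · omega
    · have := h.tB w hw (by omega); omega
  · intro w hw ht
    simp only [hV1, Finset.mem_insert] at hw
    rcases hw with rfl | rfl | rfl | rfl | hw
    · omega
    · omega
    · omega
    · omega
    · have := h.tA w hw ht; omega
  · intro w hw ht
    simp only [hV1, Finset.mem_insert] at hw
    rcases hw with rfl | rfl | rfl | rfl | hw
    · omega
    · omega
    · omega
    · omega
    · have := h.tB w hw ht; omega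
  · rw [card_even_step _ hy1, hcard]
    · have := h.card
      rw [if_neg (by omega), if_pos (by omega)]; omega
    · rw [Finset.mem_insert]; rintro (h1 | h1)
      · omega
      · exact lt_irrefl _ (hx1 _ h1)
  · refine mon_step hmon ?_ ?_ ?_
    · by_contra h1
      have := (varLT_iff _ _).1 (hlt2 v1 h1); omega
    · rw [hvb.1, hvb.2]; exact hD'
    · omega

theorem chain (hsym : ∀ a b, (a, b) ∈ D → (b, a) ∈ D) (hne : ∀ a b, (a, b) ∈ D → a ≠ b)
    (hr : ∀ a b, (a, b) ∈ D → 1 ≤ a ∧ a ≤ n) (i : ℕ) : ∀ j ≤ i, ∀ aLo bLo, aLo ≤ bLo →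
    ∀ C : Finset (ℕ × ℕ), (∀ a b, (a, b) ∈ C → (a, b) ∈ D) → Anti C →
    (∀ a b, (a, b) ∈ C → (aLo ≤ a ∧ a < i) ∧ (bLo ≤ b ∧ b < j)) →
    ∃ V m, Ch (n := n) K D C.card aLo i bLo j i V m := by
  classical
  induction i with
  | zero =>
    intro j hj aLo bLo _ C _ _ hC
    have : C = ∅ := by
      apply Finset.eq_empty_of_forall_notMem
      rintro ⟨a, b⟩ h; have := hC a b h; omega
    subst this
    refine ⟨∅, 0, ?_, by simp, by simp, by simp, by simp⟩
    rw [pfr_empty]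
    constructor
    · rw [MvPolynomial.mem_support_iff, MvPolynomial.coeff_zero_one]; exact one_ne_zero
    · intro m' h h1
      rw [MvPolynomial.mem_support_iff, MvPolynomial.coeff_one, if_neg (Ne.symm h1)] at h
      exact absurd rfl h
  | succ i ih =>
    intro j hj aLo bLo hlo C hCD hanti hC
    -- row case
    have rowcase : ∀ C : Finset (ℕ × ℕ), (∀ a b, (a, b) ∈ C → (a, b) ∈ D) → Anti C →
        (∀ a b, (a, b) ∈ C → (aLo ≤ a ∧ a < i + 1) ∧ (bLo ≤ b ∧ b < j)) → ∀ b, (i, b) ∈ C →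
        (∀ a, (a, i) ∉ C) → ∃ V m, Ch (n := n) K D C.card aLo (i + 1) bLo j (i + 1) V m := by
      intro C hCD hanti hC b hb hno
      have hb0 := hC i b hb
      have hDb := hCD i b hb
      have hbi := hne i b hDb
      have hrb := hr b i (hsym i b hDb)
      have hri := hr i b hDb
      obtain ⟨V, m, hV⟩ := ih (min j i) (by omega) aLo (b + 1) (by omega) (C.erase (i, b))
        (fun x y h => hCD x y (Finset.mem_of_mem_erase h)) (hanti.subset (Finset.erase_subset _ _)) (by
          intro x y h
          obtain ⟨h1, h2⟩ := Finset.mem_erase.1 h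
          have h3 := hC x y h2
          have hyi : y ≠ i := by rintro rfl; exact hno x h2
          have hxi : x ≠ i := by
            rintro rfl
            rcases le_total y b with h4 | h4
            · exact h1 (hanti _ h2 _ hb le_rfl h4)
            · exact h1 (hanti _ hb _ h2 le_rfl h4).symm
          have : b < y := by
            by_contra h4
            exact h1 (hanti _ h2 _ hb (by simp only; omega) (by simp only; omega))
          omega)
      have hc := Finset.card_erase_add_one hb
      obtain ⟨V, m, h⟩ := hV.row (j' := j) (bLo := bLo) (by omega) (by omega) hrb.1 hri.2 hDb
        (by omega) (by omega) (by omega) (by omega)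
      rw [hc] at h
      exact ⟨V, m, h⟩
    have bothcase : ∀ C : Finset (ℕ × ℕ), (∀ a b, (a, b) ∈ C → (a, b) ∈ D) → Anti C →
        (∀ a b, (a, b) ∈ C → (aLo ≤ a ∧ a < i + 1) ∧ (bLo ≤ b ∧ b < j)) → ∀ a b, (i, b) ∈ C →
        (a, i) ∈ C → a ≤ b → ∃ V m, Ch (n := n) K D C.card aLo (i + 1) bLo j (i + 1) V m := by
      intro C hCD hanti hC a b hb ha hab
      have hb0 := hC i b hb
      have ha0 := hC a i ha
      have hDb := hCD i b hb
      have hDa := hCD a i ha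
      have hbi := hne i b hDb
      have hai := hne a i hDa
      have hrb := hr b i (hsym i b hDb)
      have hra := hr a i hDa
      have hri := hr i b hDb
      have hji : j = i + 1 := by omega
      have ha' : (a, i) ∈ C.erase (i, b) := by
        rw [Finset.mem_erase]; refine ⟨?_, ha⟩
        intro h; exact hai (Prod.mk.inj h).1
      obtain ⟨V, m, hV⟩ := ih i le_rfl (a + 1) (b + 1) (by omega) ((C.erase (i, b)).erase (a, i))
        (fun x y h => hCD x y (Finset.mem_of_mem_erase (Finset.mem_of_mem_erase h)))
        (hanti.subset ((Finset.erase_subset _ _).trans (Finset.erase_subset _ _))) (by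
          intro x y h
          obtain ⟨h0, h⟩ := Finset.mem_erase.1 h
          obtain ⟨h1, h2⟩ := Finset.mem_erase.1 h
          have h3 := hC x y h2
          have hxi : x ≠ i := by
            rintro rfl
            rcases le_total y b with h4 | h4
            · exact h1 (hanti _ h2 _ hb le_rfl h4)
            · exact h1 (hanti _ hb _ h2 le_rfl h4).symm
          have hyi : y ≠ i := by
            rintro rfl
            rcases le_total x a with h4 | h4
            · exact h0 (hanti _ h2 _ ha h4 le_rfl)
            · exact h0 (hanti _ ha _ h2 h4 le_rfl).symm
          have : b < y := by
            by_contra h4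
            exact h1 (hanti _ h2 _ hb (by simp only; omega) (by simp only; omega))
          have : a < x := by
            by_contra h4
            exact h0 (hanti _ h2 _ ha (by simp only; omega) (by simp only; omega))
          omega)
      have hc := Finset.card_erase_add_one hb
      have hc' := Finset.card_erase_add_one ha'
      have hcc : ((C.erase (i, b)).erase (a, i)).card + 2 = C.card := by omega
      rw [hji]
      rcases eq_or_lt_of_le hab with hab | hab
      · subst hab
        obtain ⟨V, m, h⟩ := hV.bb (aLo := aLo) (bLo := bLo) (by omega) hra.1 hri.2 hDb
          (by omega) (by omega)
        rw [hcc] at h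
        exact ⟨V, m, h⟩
      · obtain ⟨V, m, h⟩ := hV.both (aLo := aLo) (bLo := bLo) hab (by omega) hra.1 hri.2
          (hsym _ _ hDa) hDb (by omega) (by omega)
        rw [hcc] at h
        exact ⟨V, m, h⟩
    -- mirror
    have mirror : ∀ a, (a, i) ∈ C → bLo ≤ a →
        (∀ x y, (x, y) ∈ C.image Prod.swap → (x, y) ∈ D) ∧ Anti (C.image Prod.swap) ∧
        (∀ x y, (x, y) ∈ C.image Prod.swap → (aLo ≤ x ∧ x < i + 1) ∧ (bLo ≤ y ∧ y < j)) ∧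
        (i, a) ∈ C.image Prod.swap ∧ (C.image Prod.swap).card = C.card := by
      intro a ha hba
      have ha0 := hC a i ha
      have hsw : ∀ x y, (x, y) ∈ C.image Prod.swap ↔ (y, x) ∈ C := by
        intro x y
        simp only [Finset.mem_image]
        constructor
        · rintro ⟨⟨c, d⟩, h1, h2⟩
          obtain ⟨rfl, rfl⟩ := Prod.mk.inj h2
          exact h1
        · intro h; exact ⟨(y, x), h, rfl⟩
      refine ⟨?_, anti_swap hanti, ?_, (hsw _ _).2 ha, Finset.card_image_of_injective _ Prod.swap_injective⟩
      · intro x y h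
        exact hsym _ _ (hCD _ _ ((hsw _ _).1 h))
      · intro x y h
        have h1 := (hsw _ _).1 h
        have h2 := hC _ _ h1
        have : a ≤ y := by
          by_contra h4
          have := hanti _ h1 _ ha (by simp only; omega) (by simp only; omega)
          have := (Prod.mk.inj this).1
          omega
        omega
    have hsw : ∀ x y, (x, y) ∈ C.image Prod.swap ↔ (y, x) ∈ C := by
      intro x y
      simp only [Finset.mem_image]
      constructor
      · rintro ⟨⟨c, d⟩, h1, h2⟩
        obtain ⟨rfl, rfl⟩ := Prod.mk.inj h2
        exact h1
      · intro h; exact ⟨(y, x), h, rfl⟩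
    by_cases hrow : ∃ b, (i, b) ∈ C
    · obtain ⟨b, hb⟩ := hrow
      by_cases hcol : ∃ a, (a, i) ∈ C
      · obtain ⟨a, ha⟩ := hcol
        rcases le_total a b with hab | hab
        · exact bothcase C hCD hanti hC a b hb ha hab
        · have hb0 := hC i b hb
          obtain ⟨h1, h2, h3, h4, h5⟩ := mirror a ha (by omega)
          have := bothcase _ h1 h2 h3 b a h4 ((hsw _ _).2 hb) hab
          rwa [h5] at this
      · push Not at hcol
        exact rowcase C hCD hanti hC b hb hcol
    · push Not at hrow
      by_cases hcol : ∃ a, (a, i) ∈ C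
      · obtain ⟨a, ha⟩ := hcol
        by_cases hab : bLo ≤ a
        · obtain ⟨h1, h2, h3, h4, h5⟩ := mirror a ha hab
          have := rowcase _ h1 h2 h3 a h4 (fun x h => hrow x ((hsw _ _).1 h))
          rwa [h5] at this
        · have ha0 := hC a i ha
          have hDa := hCD a i ha
          have hai := hne a i hDa
          have hra := hr a i hDa
          have hri := hr i a (hsym _ _ hDa)
          have hji : j = i + 1 := by omega
          obtain ⟨V, m, hV⟩ := ih i le_rfl (a + 1) bLo (by omega) (C.erase (a, i))
            (fun x y h => hCD x y (Finset.mem_of_mem_erase h))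
            (hanti.subset (Finset.erase_subset _ _)) (by
              intro x y h
              obtain ⟨h0, h2⟩ := Finset.mem_erase.1 h
              have h3 := hC x y h2
              have hxi : x ≠ i := by rintro rfl; exact hrow _ h2
              have hyi : y ≠ i := by
                rintro rfl
                rcases le_total x a with h4 | h4
                · exact h0 (hanti _ h2 _ ha h4 le_rfl)
                · exact h0 (hanti _ ha _ h2 h4 le_rfl).symm
              have : a < x := by
                by_contra h4
                exact h0 (hanti _ h2 _ ha (by simp only; omega) (by simp only; omega))
              omega)
          have hc := Finset.card_erase_add_one ha
          obtain ⟨V, m, h⟩ := hV.col (aLo := aLo) (bLo := bLo) (by omega) (by omega) hra.1 hri.2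
            (hsym _ _ hDa) (by omega) (by omega) le_rfl
          rw [hc] at h
          rw [hji]
          exact ⟨V, m, h⟩
      · push Not at hcol
        obtain ⟨V, m, hV⟩ := ih (min j i) (by omega) aLo bLo hlo C hCD hanti (by
          intro x y h
          have h3 := hC x y h
          have hxi : x ≠ i := by rintro rfl; exact hrow _ h
          have hyi : y ≠ i := by rintro rfl; exact hcol _ h
          omega)
        exact ⟨V, m, hV.weaken le_rfl le_rfl (by omega) le_rfl (by omega) (by omega)⟩

end chain
end Paper

namespace Paper

section mem
variable {K : Type*} [Field K] {n : ℕ}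

theorem Uss_skew (a b : Fin n) : Uss K n a b = - Uss K n b a := by
  unfold Uss
  simp only [Matrix.of_apply]
  by_cases h : b < a
  · rw [dif_pos h, dif_neg (not_lt.2 h.le), dif_pos h, neg_neg]
  · by_cases h' : a < b
    · rw [dif_neg h, dif_pos h', dif_pos h']
    · rw [dif_neg h, dif_neg h', dif_neg h', dif_neg h, neg_zero]

theorem UN_Uss (a b : Fin n) : UN K n (a + 1) (b + 1) = Uss K n a b := by
  unfold UN Uss
  simp only [Matrix.of_apply]
  have ha := a.2
  have hb := b.2
  by_cases h : b < a
  · rw [dif_pos (by rw [Fin.lt_def] at h; omega), dif_pos h]; rfl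
  · by_cases h' : a < b
    · rw [dif_neg (by rw [Fin.lt_def] at h; omega), dif_neg h,
        dif_pos (by rw [Fin.lt_def] at h'; omega), dif_pos h']; rfl
    · rw [dif_neg (by rw [Fin.lt_def] at h; omega), dif_neg h,
        dif_neg (by rw [Fin.lt_def] at h'; omega), dif_neg h']

theorem pfUss_pfr (R : Finset (Fin n)) : pfUss K R = pfr (fun a b => Uss K n a b) R :=
  pfaffian_sub _ Uss_skew R

theorem base_mem {z : Equiv.Perm ℕ} {i j : ℕ} (hj : 1 ≤ j) (hji : j ≤ i) (hi : i ≤ n)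
    {V : Finset ℕ} (hV : ∀ v ∈ V, 1 ≤ v / 2 ∧ v / 2 ≤ i) (hB : ∀ v ∈ V, v % 2 = 0 → v / 2 ≤ j)
    (hc : rnk z i j < (V.filter fun v => v % 2 = 0).card) :
    pfr (fun v w => UN K n (v / 2) (w / 2)) V ∈ IssIdeal K n z := by
  classical
  by_cases hinj : ∀ v ∈ V, ∀ w ∈ V, v / 2 = w / 2 → v = w
  · by_cases hodd : Odd V.card
    · rw [pfr_odd _ hodd]; exact zero_mem _
    rw [← pfr_image (e := fun v : ℕ => v / 2) (UN K n) (V := V) (by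
      intro a ha b hb hab
      have := hinj a ha b hb
      show a / 2 < b / 2
      by_contra h
      have := this (by omega)
      omega)]
    set R : Finset (Fin n) := Finset.univ.filter fun a => (a : ℕ) + 1 ∈ V.image (fun v => v / 2) with hR
    have hRV : R.image (fun a : Fin n => (a : ℕ) + 1) = V.image (fun v => v / 2) := by
      ext x
      simp only [hR, Finset.mem_image, Finset.mem_filter, Finset.mem_univ, true_and]
      constructor
      · rintro ⟨a, ha, rfl⟩; exact ha
      · rintro ⟨v, hv, rfl⟩
        have := hV v hv
        refine ⟨⟨v / 2 - 1, by omega⟩, ⟨v, hv, ?_⟩, ?_⟩ <;> simp only <;> omega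
    have hcard : R.card = V.card := by
      rw [← Finset.card_image_of_injective R (f := fun a : Fin n => (a : ℕ) + 1), hRV,
        Finset.card_image_of_injOn]
      · intro a ha b hb h; exact hinj a ha b hb h
      · intro a b h; simp only [Nat.add_right_cancel_iff] at h; exact Fin.ext h
    rw [← hRV, pfr_image (e := fun a : Fin n => (a : ℕ) + 1) (UN K n) (V := R) (by
      intro a _ b _ hab
      rw [Fin.lt_def] at hab
      show (a : ℕ) + 1 < b + 1
      omega)]
    refine Ideal.subset_span ⟨R, ?_, ?_, ⟨i, j, hj, hji, hi, ?_, ?_⟩, ?_⟩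
    · rw [← Finset.card_pos, hcard]
      exact lt_of_lt_of_le (by omega : 0 < (V.filter fun v => v % 2 = 0).card)
        (Finset.card_filter_le _ _)
    · rw [hcard]; exact Nat.not_odd_iff_even.1 hodd
    · intro a ha
      simp only [hR, Finset.mem_image, Finset.mem_filter, Finset.mem_univ, true_and] at ha
      obtain ⟨v, hv, h⟩ := ha
      have := hV v hv
      omega
    · refine hc.trans_le ?_
      have h1 : ((V.filter fun v => v % 2 = 0).image fun v => v / 2).card =
          (V.filter fun v => v % 2 = 0).card := by
        apply Finset.card_image_of_injOn
        intro a ha b hb h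
        exact hinj a (Finset.mem_filter.1 ha).1 b (Finset.mem_filter.1 hb).1 h
      rw [← h1, ← Finset.card_image_of_injective (R.filter fun a : Fin n => (a : ℕ) + 1 ≤ j)
        (f := fun a : Fin n => (a : ℕ) + 1) (by
          intro a b h; simp only [Nat.add_right_cancel_iff] at h; exact Fin.ext h)]
      apply Finset.card_le_card
      intro x hx
      simp only [Finset.mem_image, Finset.mem_filter] at hx
      obtain ⟨v, ⟨hv, he⟩, rfl⟩ := hx
      have h2 := hB v hv he
      have h3 : v / 2 ∈ R.image (fun a : Fin n => (a : ℕ) + 1) := by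
        rw [hRV]; exact Finset.mem_image_of_mem _ hv
      obtain ⟨a, ha, h4⟩ := Finset.mem_image.1 h3
      refine Finset.mem_image.2 ⟨a, Finset.mem_filter.2 ⟨ha, ?_⟩, h4⟩
      omega
    · rw [pfUss_pfr]
      exact pfr_congr fun a _ b _ => UN_Uss a b
  · push Not at hinj
    obtain ⟨v, hv, w, hw, h1, h2⟩ := hinj
    have h := pfr_dep (M := fun v w => UN K n (v / 2) (w / 2))
      ⟨fun a b => (UN_alt K n).1 _ _, fun a => (UN_alt K n).2 _⟩ (V := V)
      (fun l => (if l = v then 1 else 0) - if l = w then 1 else 0) (by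
        intro y hy
        simp only [sub_mul, Finset.sum_sub_distrib, ite_mul, one_mul, zero_mul,
          Finset.sum_ite_eq', if_pos hv, if_pos hw, h1, sub_self]) hv
    simp only [if_true, if_neg h2, sub_zero, one_mul] at h
    rw [h]; exact zero_mem _

open Classical in
noncomputable def MZ (K : Type*) [Field K] (n : ℕ) (Z : Finset (ℕ × ℕ)) (v w : ℕ) :
    MvPolynomial (SSVar n) K :=
  if (v, w) ∈ Z ∨ (w, v) ∈ Z then 0 else UN K n (v / 2) (w / 2)

theorem MZ_alt (Z : Finset (ℕ × ℕ)) : Alt (MZ K n Z) := by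
  constructor
  · intro a b
    unfold MZ
    by_cases h : (a, b) ∈ Z ∨ (b, a) ∈ Z
    · rw [if_pos h, if_pos h.symm, neg_zero]
    · rw [if_neg h, if_neg (fun h' => h h'.symm), (UN_alt K n).1]
  · intro a
    unfold MZ
    split_ifs
    · rfl
    · exact (UN_alt K n).2 _

theorem MZ_mem {z : Equiv.Perm ℕ} {i j : ℕ} (hj : 1 ≤ j) (hji : j ≤ i) (hi : i ≤ n)
    (Z : Finset (ℕ × ℕ)) (hZ : ∀ e ∈ Z, e.1 ≠ e.2 ∧ e.1 % 2 = 1 ∧ e.2 % 2 = 1) :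
    ∀ V : Finset ℕ, (∀ v ∈ V, 1 ≤ v / 2 ∧ v / 2 ≤ i) → (∀ v ∈ V, v % 2 = 0 → v / 2 ≤ j) →
    rnk z i j < (V.filter fun v => v % 2 = 0).card →
    pfr (MZ K n Z) V ∈ IssIdeal K n z := by
  classical
  induction Z using Finset.induction_on with
  | empty =>
    intro V hV hB hc
    convert base_mem (K := K) hj hji hi hV hB hc using 2
    funext v w
    simp [MZ]
  | insert e Z he ih =>
    intro V hV hB hc
    have ih := ih fun e he => hZ e (Finset.mem_insert_of_mem he)
    obtain ⟨a, b⟩ := e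
    obtain ⟨hab, ha, hb⟩ := hZ (a, b) (Finset.mem_insert_self _ _)
    simp only at hab ha hb
    have hagree : ∀ x y, (x, y) ≠ (a, b) → (x, y) ≠ (b, a) →
        MZ K n (insert (a, b) Z) x y = MZ K n Z x y := by
      intro x y h1 h2
      have h3 : (y, x) ≠ (a, b) := by
        intro h; apply h2; simp only [Prod.mk.injEq] at h ⊢; exact h.symm
      unfold MZ
      simp only [Finset.mem_insert, h1, h3, false_or]
    by_cases hm : a ∈ V ∧ b ∈ V
    · rw [pfr_edge (MZ_alt Z) (MZ_alt _) hab hm.1 hm.2 (by simp [MZ]) hagree]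
      refine sub_mem (ih V hV hB hc) (Ideal.mul_mem_left _ _ (ih _ ?_ ?_ ?_))
      · intro v hv; exact hV v (Finset.mem_of_mem_erase (Finset.mem_of_mem_erase hv))
      · intro v hv; exact hB v (Finset.mem_of_mem_erase (Finset.mem_of_mem_erase hv))
      · refine hc.trans_le (Finset.card_le_card ?_)
        intro v hv
        simp only [Finset.mem_filter, Finset.mem_erase] at hv ⊢
        refine ⟨⟨?_, ?_, hv.1⟩, hv.2⟩ <;> rintro rfl <;> omega
    · rw [pfr_congr (M' := MZ K n Z)]
      · exact ih V hV hB hc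
      · intro x hx y hy
        apply hagree
        · intro h; simp only [Prod.mk.injEq] at h; exact hm ⟨h.1 ▸ hx, h.2 ▸ hy⟩
        · intro h; simp only [Prod.mk.injEq] at h; exact hm ⟨h.2 ▸ hy, h.1 ▸ hx⟩

theorem Mz_mem {z : Equiv.Perm ℕ} {i j : ℕ} (hj : 1 ≤ j) (hji : j ≤ i) (hi : i ≤ n)
    {V : Finset ℕ} (hV : ∀ v ∈ V, 1 ≤ v / 2 ∧ v / 2 ≤ i) (hB : ∀ v ∈ V, v % 2 = 0 → v / 2 ≤ j)
    (hc : rnk z i j < (V.filter fun v => v % 2 = 0).card) :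
    pfr (Mz K n) V ∈ IssIdeal K n z := by
  classical
  rw [pfr_congr (M' := MZ K n ((V ×ˢ V).filter fun e => e.1 ≠ e.2 ∧ e.1 % 2 = 1 ∧ e.2 % 2 = 1))]
  · exact MZ_mem hj hji hi _ (fun e he => (Finset.mem_filter.1 he).2) V hV hB hc
  · intro x hx y hy
    unfold Mz MZ
    simp only [Finset.mem_filter, Finset.mem_product, hx, hy, true_and]
    by_cases hxy : x = y
    · subst hxy
      simp only [(UN_alt K n).2, ite_self]
    · by_cases h : x % 2 = 1 ∧ y % 2 = 1
      · rw [if_pos h, if_pos (Or.inl ⟨hxy, h⟩)]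
      · rw [if_neg h, if_neg]; tauto

theorem not_std_box {z : Equiv.Perm ℕ} (hz : Fpf z) {m : SSVar n →₀ ℕ} (h : ¬ Std z m) :
    ∃ (i j : ℕ) (C : Finset (ℕ × ℕ)), 1 ≤ j ∧ j ≤ i ∧ i ≤ n ∧ C ⊆ Dm m ∧ Anti C ∧
      (∀ c ∈ C, c.1 ≤ i ∧ c.2 ≤ j) ∧ C.card = rnk z i j + 1 := by
  unfold Std at h
  push Not at h
  obtain ⟨i0, j0, h⟩ := h
  obtain ⟨i, j, hji, h⟩ : ∃ i j, j ≤ i ∧ rnk z i j < lam (Dm m) i j := by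
    rcases le_total j0 i0 with h1 | h1
    · exact ⟨i0, j0, h1, h⟩
    · refine ⟨j0, i0, h1, ?_⟩
      rw [rnk_symm hz, lam_symm Dm_swap]; exact h
  obtain ⟨C, h1, h2, h3, h4⟩ := exists_lam (Dm m) i j
  obtain ⟨C', h5, h6⟩ := Finset.exists_subset_card_eq
    (show rnk z (min i n) (min j n) + 1 ≤ C.card by
      have := rnk_mono z (min_le_left i n) (min_le_left j n); omega)
  have hb : ∀ c ∈ C', c.1 ≤ min i n ∧ c.2 ≤ min j n := by
    intro c hc
    have := h3 c (h5 hc)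
    have := Dm_range c (h1 (h5 hc))
    omega
  refine ⟨min i n, min j n, C', ?_, by omega, by omega, h5.trans h1, h2.subset h5, hb, h6⟩
  obtain ⟨c, hc⟩ : C'.Nonempty := by rw [← Finset.card_pos]; omega
  have := hb c hc
  have := Dm_range c (h1 (h5 hc))
  omega

theorem lead_of_not_std {z : Equiv.Perm ℕ} (hz : Fpf z) (m : SSVar n →₀ ℕ) (h : ¬ Std z m) :
    ∃ g ∈ IssIdeal K n z, IsLead g m := by
  obtain ⟨i, j, C, hj, hji, hi, hC, ha, hb, hc⟩ := not_std_box hz h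
  obtain ⟨V, m', hV⟩ := chain (n := n) (K := K) (D := {c | c ∈ Dm m}) (fun a b h => Dm_swap _ h)
    (fun a b h => Dm_ne _ h) (fun a b h => (Dm_range _ h).1) (i + 1) (j + 1) (by omega) 1 1 le_rfl C
    (fun a b h => hC h) ha (fun a b h => by
      have h1 := hb _ h
      have h2 := Dm_range _ (hC h)
      simp only at h1 h2
      omega)
  have hle : m' ≤ m := by
    intro v
    by_cases h0 : m' v = 0
    · rw [h0]; exact Nat.zero_le _
    · obtain ⟨h1, h2, -⟩ := hV.mon v h0
      rw [h1]
      obtain ⟨w, hw, h3⟩ := mem_Dm.1 h2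
      simp only at h3
      have hv2 := v.2
      have hw2 := w.2
      rw [Fin.lt_def] at hv2 hw2
      have : v = w := ssvar_ext (by omega) (by omega)
      rw [this]; omega
  refine ⟨MvPolynomial.monomial (m - m') 1 * pfr (Mz K n) V, Ideal.mul_mem_left _ _ ?_, ?_⟩
  · apply Mz_mem hj hji hi
    · intro v hv
      rcases Nat.mod_two_eq_zero_or_one v with h1 | h1
      · have := hV.tB v hv h1; omega
      · have := hV.tA v hv h1; omega
    · intro v hv h1
      have := hV.tB v hv h1; omega
    · have := hV.card; omega
  · have := hV.lead.mul (m - m') (one_ne_zero (α := K))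
    rwa [tsub_add_cancel_of_le hle] at this

end mem
end Paper

namespace Paper

section Jideal
variable {K : Type*} [Field K] {n : ℕ}

noncomputable def indS (S : Finset (SSVar n)) : SSVar n →₀ ℕ := ∑ v ∈ S, Finsupp.single v 1

open Classical in
theorem indS_apply (S : Finset (SSVar n)) (w : SSVar n) : indS S w = if w ∈ S then 1 else 0 := by
  unfold indS
  rw [Finsupp.finsetSum_apply]
  simp only [Finsupp.single_apply, Finset.sum_ite_eq']

theorem prod_X_eq (S : Finset (SSVar n)) :
    (∏ v ∈ S, MvPolynomial.X v : MvPolynomial (SSVar n) K) = MvPolynomial.monomial (indS S) 1 := by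
  unfold indS
  rw [MvPolynomial.monomial_sum_one]
  rfl

theorem monomial_mem_J {z : Equiv.Perm ℕ} (hz : Fpf z) (m : SSVar n →₀ ℕ) (h : ¬ Std z m) :
    MvPolynomial.monomial m (1 : K) ∈ JssIdeal K n z := by
  classical
  obtain ⟨i, j, C, hj, hji, hi, hC, ha, hb, hc⟩ := not_std_box hz h
  set A : Finset (Fin n) := Finset.univ.filter fun a => ∃ c ∈ C, c.1 = (a : ℕ) + 1 with hA
  set B : Finset (Fin n) := Finset.univ.filter fun b => ∃ c ∈ C, c.2 = (b : ℕ) + 1 with hB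
  have memA : ∀ a, a ∈ A ↔ ∃ c ∈ C, c.1 = (a : ℕ) + 1 := by
    intro a; simp only [hA, Finset.mem_filter, Finset.mem_univ, true_and]
  have memB : ∀ a, a ∈ B ↔ ∃ c ∈ C, c.2 = (a : ℕ) + 1 := by
    intro a; simp only [hB, Finset.mem_filter, Finset.mem_univ, true_and]
  have hanti : ∀ c ∈ C, ∀ d ∈ C, c.1 ≤ d.1 → c.2 ≤ d.2 → c = d := ha
  have hAc : A.card = C.card := by
    rw [← Finset.card_image_of_injective A (f := fun a : Fin n => (a : ℕ) + 1) (by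
      intro a b h; simp only [Nat.add_right_cancel_iff] at h; exact Fin.ext h),
      ← Finset.card_image_of_injOn (s := C) (f := Prod.fst) (by
        intro c hc d hd h
        rcases le_total c.2 d.2 with h1 | h1
        · exact hanti c hc d hd h.le h1
        · exact (hanti d hd c hc h.ge h1).symm)]
    congr 1
    ext x
    simp only [Finset.mem_image, memA]
    constructor
    · rintro ⟨a, ⟨c, hc, h⟩, rfl⟩; exact ⟨c, hc, h⟩
    · rintro ⟨c, hc, rfl⟩
      have := Dm_range c (hC hc)
      refine ⟨⟨c.1 - 1, by omega⟩, ⟨c, hc, ?_⟩, ?_⟩ <;> simp only <;> omega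
  have hBc : B.card = C.card := by
    rw [← Finset.card_image_of_injective B (f := fun a : Fin n => (a : ℕ) + 1) (by
      intro a b h; simp only [Nat.add_right_cancel_iff] at h; exact Fin.ext h),
      ← Finset.card_image_of_injOn (s := C) (f := Prod.snd) (by
        intro c hc d hd h
        rcases le_total c.1 d.1 with h1 | h1
        · exact hanti c hc d hd h1 h.le
        · exact (hanti d hd c hc h1 h.ge).symm)]
    congr 1
    ext x
    simp only [Finset.mem_image, memB]
    constructor
    · rintro ⟨a, ⟨c, hc, h⟩, rfl⟩; exact ⟨c, hc, h⟩
    · rintro ⟨c, hc, rfl⟩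
      have := Dm_range c (hC hc)
      refine ⟨⟨c.2 - 1, by omega⟩, ⟨c, hc, ?_⟩, ?_⟩ <;> simp only <;> omega
  have hAB : A.card = B.card := hAc.trans hBc.symm
  have hex : ∀ t : Fin A.card, ∃ b : Fin n, (((A.orderEmbOfFin rfl t : Fin n) : ℕ) + 1, (b : ℕ) + 1) ∈ C := by
    intro t
    obtain ⟨c, hc, h⟩ := (memA _).1 (A.orderEmbOfFin_mem rfl t)
    have := Dm_range c (hC hc)
    refine ⟨⟨c.2 - 1, by omega⟩, ?_⟩
    convert hc using 1
    refine Prod.ext h.symm ?_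
    simp only; omega
  choose f hf using hex
  have hfr : (fun t => f t.rev) = B.orderEmbOfFin hAB.symm := by
    apply Finset.orderEmbOfFin_unique
    · intro t; rw [memB]; exact ⟨_, hf _, rfl⟩
    · intro s t hst
      by_contra hlt
      have h1 : t.rev < s.rev := Fin.rev_lt_rev.2 hst
      have h2 : A.orderEmbOfFin rfl t.rev < A.orderEmbOfFin rfl s.rev :=
        (A.orderEmbOfFin rfl).strictMono h1
      rw [Fin.lt_def] at h2
      change ¬ f s.rev < f t.rev at hlt
      rw [Fin.lt_def] at hlt
      have := hanti _ (hf t.rev) _ (hf s.rev) (by simp only; omega) (by simp only; omega)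
      simp only [Prod.mk.injEq] at this
      omega
  have hB2 : ∀ t : Fin A.card, B.orderEmbOfFin hAB.symm t.rev = f t := by
    intro t
    rw [← hfr]
    simp only [Fin.rev_rev]
  have hgen : ussMon K A B ∈ JssIdeal K n z := by
    refine Ideal.subset_span ⟨i, j, A, B, hj, hji, hi, ?_, ?_, by omega, by omega, rfl⟩
    · intro a ha
      obtain ⟨c, hc, h⟩ := (memA a).1 ha
      have := hb c hc; omega
    · intro a ha
      obtain ⟨c, hc, h⟩ := (memB a).1 ha
      have := hb c hc; omega
  unfold ussMon at hgen
  rw [dif_pos hAB, if_neg, prod_X_eq] at hgen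
  · set S := Finset.univ.filter (fun v : SSVar n => ∃ t : Fin A.card,
          (A.orderEmbOfFin rfl t = v.1.1 ∧ B.orderEmbOfFin hAB.symm t.rev = v.1.2) ∨
          (A.orderEmbOfFin rfl t = v.1.2 ∧ B.orderEmbOfFin hAB.symm t.rev = v.1.1)) with hS
    have hle : indS S ≤ m := by
      intro v
      rw [indS_apply]
      split_ifs with hv
      · rw [hS, Finset.mem_filter] at hv
        obtain ⟨-, t, ht⟩ := hv
        rw [hB2] at ht
        have h1 := mem_Dm.1 (hC (hf t))
        obtain ⟨w, hw, h2⟩ := h1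
        simp only at h2
        have hv2 := v.2
        have hw2 := w.2
        rw [Fin.lt_def] at hv2 hw2
        rw [Fin.ext_iff, Fin.ext_iff, Fin.ext_iff, Fin.ext_iff] at ht
        have : v = w := ssvar_ext (by omega) (by omega)
        rw [this]; omega
      · exact Nat.zero_le _
    have := Ideal.mul_mem_left _ (MvPolynomial.monomial (m - indS S) (1 : K)) hgen
    rwa [MvPolynomial.monomial_mul, tsub_add_cancel_of_le hle, one_mul] at this
  · rintro ⟨t, ht⟩
    rw [hB2] at ht
    apply Dm_ne _ (hC (hf t))
    simp only [ht]

theorem J_le_init {z : Equiv.Perm ℕ} {I : Ideal (MvPolynomial (SSVar n) K)}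
    (hI : ∀ m, ¬ Std z m → ∃ g ∈ I, IsLead g m) : JssIdeal K n z ≤ initIdeal revlexLT I := by
  classical
  unfold JssIdeal JssIdealOfTable
  rw [Ideal.span_le]
  rintro g ⟨i, j, A, B, hj, hji, hi, hA, hB, hAc, hBc, rfl⟩
  have hAB : A.card = B.card := hAc.trans hBc.symm
  show ussMon K A B ∈ _
  unfold ussMon
  rw [dif_pos hAB]
  split_ifs with hd
  · exact zero_mem _
  rw [prod_X_eq]
  set S := Finset.univ.filter (fun v : SSVar n => ∃ t : Fin A.card,
          (A.orderEmbOfFin rfl t = v.1.1 ∧ B.orderEmbOfFin hAB.symm t.rev = v.1.2) ∨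
          (A.orderEmbOfFin rfl t = v.1.2 ∧ B.orderEmbOfFin hAB.symm t.rev = v.1.1)) with hS
  obtain ⟨g, hg, hl⟩ := hI (indS S) (by
    intro hstd
    set φ : Fin A.card → ℕ × ℕ := fun t => (((A.orderEmbOfFin rfl t : Fin n) : ℕ) + 1,
      ((B.orderEmbOfFin hAB.symm t.rev : Fin n) : ℕ) + 1) with hφ
    have hanti : ∀ s t, (φ s).1 ≤ (φ t).1 → (φ s).2 ≤ (φ t).2 → s = t := by
      intro s t h1 h2
      simp only [hφ, Nat.add_le_add_iff_right] at h1 h2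
      rw [← Fin.le_def, OrderEmbedding.le_iff_le] at h1 h2
      rw [Fin.rev_le_rev] at h2
      exact le_antisymm h1 h2
    have hinj : Function.Injective φ := by
      intro s t h
      exact hanti s t (by rw [h]) (by rw [h])
    have h1 : (Finset.univ.image φ).card = rnk z i j + 1 := by
      rw [Finset.card_image_of_injective _ hinj, Finset.card_univ, Fintype.card_fin, hAc]
    have h2 : (Finset.univ.image φ).card ≤ lam (Dm (indS S)) i j := by
      apply le_lam
      · intro c hc
        obtain ⟨t, -, rfl⟩ := Finset.mem_image.1 hc
        have hne : (A.orderEmbOfFin rfl t : Fin n) ≠ B.orderEmbOfFin hAB.symm t.rev :=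
          fun h => hd ⟨t, h⟩
        rw [mem_Dm]
        rcases lt_or_gt_of_ne hne with hlt | hlt
        · refine ⟨⟨(B.orderEmbOfFin hAB.symm t.rev, A.orderEmbOfFin rfl t), hlt⟩, ?_, Or.inr ⟨rfl, rfl⟩⟩
          rw [indS_apply, if_pos]
          · exact one_ne_zero
          · rw [hS, Finset.mem_filter]
            exact ⟨Finset.mem_univ _, t, Or.inr ⟨rfl, rfl⟩⟩
        · refine ⟨⟨(A.orderEmbOfFin rfl t, B.orderEmbOfFin hAB.symm t.rev), hlt⟩, ?_, Or.inl ⟨rfl, rfl⟩⟩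
          rw [indS_apply, if_pos]
          · exact one_ne_zero
          · rw [hS, Finset.mem_filter]
            exact ⟨Finset.mem_univ _, t, Or.inl ⟨rfl, rfl⟩⟩
      · intro c hc d hd h1 h2
        obtain ⟨s, -, rfl⟩ := Finset.mem_image.1 hc
        obtain ⟨t, -, rfl⟩ := Finset.mem_image.1 hd
        rw [hanti s t h1 h2]
      · intro c hc
        obtain ⟨t, -, rfl⟩ := Finset.mem_image.1 hc
        exact ⟨hA _ (A.orderEmbOfFin_mem rfl t), hB _ (B.orderEmbOfFin_mem _ _)⟩
    have h3 := hstd i j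
    omega)
  refine Ideal.subset_span ⟨g, hg, ?_, indS S, hl.1, hl.2, rfl⟩
  rintro rfl
  simpa using hl.1

end Jideal
end Paper

namespace Paper

section param

variable {R : Type*} [CommRing R]

/-- parametrized skew matrices -/
def PA (z : Equiv.Perm ℕ) (g : ℕ → ℕ → R) (c : ℕ → R) (i j : ℕ) : R :=
  ∑ a ∈ Finset.Icc 1 i, c a * g i a * g j (z a)

structure Par (z : Equiv.Perm ℕ) (g : ℕ → ℕ → R) (c : ℕ → R) : Prop where
  low : ∀ i a, i < a → g i a = 0
  skew : ∀ a, 1 ≤ a → c (z a) = - c a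

theorem PA_eq {z : Equiv.Perm ℕ} {g : ℕ → ℕ → R} {c : ℕ → R} (h : ∀ i a, i < a → g i a = 0)
    {i j : ℕ} {S : Finset ℕ}
    (hS : ∀ a ∈ S, 1 ≤ a) (hS' : ∀ a, 1 ≤ a → a ≤ i → z a ≤ j → a ∈ S) :
    PA z g c i j = ∑ a ∈ S, c a * g i a * g j (z a) := by
  unfold PA
  have key : ∀ T : Finset ℕ, (Finset.Icc 1 i).filter (fun a => z a ≤ j) ⊆ T → (∀ a ∈ T, 1 ≤ a) →
      ∑ a ∈ (Finset.Icc 1 i).filter (fun a => z a ≤ j), c a * g i a * g j (z a) =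
      ∑ a ∈ T, c a * g i a * g j (z a) := by
    intro T hT h1
    apply Finset.sum_subset hT
    intro a ha hna
    by_cases h2 : i < a
    · rw [h i a h2]; ring
    · by_cases h3 : j < z a
      · rw [h j _ h3]; ring
      · exact absurd (Finset.mem_filter.2 ⟨Finset.mem_Icc.2 ⟨h1 a ha, by omega⟩, by omega⟩) hna
  rw [← key _ (Finset.filter_subset _ _) (fun a ha => (Finset.mem_Icc.1 ha).1), key S _ hS]
  intro a ha
  simp only [Finset.mem_filter, Finset.mem_Icc] at ha
  exact hS' a ha.1.1 ha.1.2 ha.2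

theorem PA_map {R' : Type*} [CommRing R'] (φ : R →+* R') (z : Equiv.Perm ℕ) (g : ℕ → ℕ → R)
    (c : ℕ → R) (i j : ℕ) : φ (PA z g c i j) = PA z (fun i a => φ (g i a)) (fun a => φ (c a)) i j := by
  unfold PA
  simp only [map_sum, map_mul]

/-- symmetric summation set -/
def symS (z : Equiv.Perm ℕ) (N : ℕ) : Finset ℕ := (Finset.Icc 1 N).filter fun a => z a ≤ N

theorem mem_symS {z : Equiv.Perm ℕ} {N a : ℕ} : a ∈ symS z N ↔ (1 ≤ a ∧ a ≤ N) ∧ z a ≤ N := by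
  simp only [symS, Finset.mem_filter, Finset.mem_Icc]

theorem PA_symS {z : Equiv.Perm ℕ} {g : ℕ → ℕ → R} {c : ℕ → R} (h : ∀ i a, i < a → g i a = 0)
    {i j N : ℕ} (hi : i ≤ N) (hj : j ≤ N) :
    PA z g c i j = ∑ a ∈ symS z N, c a * g i a * g j (z a) := by
  apply PA_eq h
  · intro a ha; exact (mem_symS.1 ha).1.1
  · intro a h1 h2 h3; rw [mem_symS]; omega

theorem symS_z {z : Equiv.Perm ℕ} (hz : Fpf z) {N a : ℕ} (ha : a ∈ symS z N) : z a ∈ symS z N := by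
  rw [mem_symS] at ha ⊢
  rw [hz.inv]
  have := hz.pos ha.1.1
  omega

theorem PA_skew {z : Equiv.Perm ℕ} (hz : Fpf z) {g : ℕ → ℕ → R} {c : ℕ → R} (h : Par z g c)
    (i j : ℕ) : PA z g c i j = - PA z g c j i := by
  rw [PA_symS h.low (le_max_left i j) (le_max_right i j),
    PA_symS h.low (le_max_right i j) (le_max_left i j), ← Finset.sum_neg_distrib]
  refine Finset.sum_bij' (fun a _ => z a) (fun a _ => z a) (fun a ha => symS_z hz ha)
    (fun a ha => symS_z hz ha) (fun a _ => hz.inv a) (fun a _ => hz.inv a) ?_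
  intro a ha
  rw [h.skew a (mem_symS.1 ha).1.1, hz.inv]
  ring

theorem PA_diag {z : Equiv.Perm ℕ} (hz : Fpf z) {g : ℕ → ℕ → R} {c : ℕ → R} (h : Par z g c)
    (i : ℕ) : PA z g c i i = 0 := by
  rw [PA_symS h.low (le_refl i) (le_refl i)]
  refine Finset.sum_involution (fun a _ => z a) ?_ ?_ (fun a ha => symS_z hz ha)
    (fun a _ => hz.inv a)
  · intro a ha
    rw [h.skew a (mem_symS.1 ha).1.1, hz.inv]
    ring
  · intro a ha _
    exact hz.ne a (mem_symS.1 ha).1.1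

end param

section geom
variable {K : Type*} [Field K] {n : ℕ}

theorem mat_rank_add_le {m k : Type*} [Fintype m] [Fintype k] [DecidableEq k]
    (A B : Matrix m k K) : (A + B).rank ≤ A.rank + B.rank := by
  unfold Matrix.rank
  rw [Matrix.mulVecLin_add]
  refine le_trans (Submodule.finrank_mono (LinearMap.range_add_le _ _)) ?_
  exact Submodule.finrank_add_le_finrank_add_finrank _ _

theorem rank_sum_le {ι m k : Type*} [Fintype m] [Fintype k] [DecidableEq k] (T : Finset ι)
    (x : ι → m → K) (y : ι → k → K) :
    (∑ a ∈ T, Matrix.vecMulVec (x a) (y a)).rank ≤ T.card := by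
  classical
  induction T using Finset.induction_on with
  | empty => simp
  | insert a T ha ih =>
    rw [Finset.sum_insert ha, Finset.card_insert_of_notMem ha]
    have := mat_rank_add_le (Matrix.vecMulVec (x a) (y a)) (∑ a ∈ T, Matrix.vecMulVec (x a) (y a))
    have := Matrix.rank_vecMulVec_le (x a) (y a)
    omega

theorem PA_mem_X {z : Equiv.Perm ℕ} (hz : Fpf z) {g : ℕ → ℕ → K} {c : ℕ → K} (h : Par z g c) :
    (Matrix.of fun i j : Fin n => PA z g c (i + 1) (j + 1)) ∈ Xss K n z := by
  refine ⟨⟨?_, ?_⟩, ?_⟩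
  · ext i j
    simp only [Matrix.transpose_apply, Matrix.of_apply, Matrix.neg_apply]
    exact PA_skew hz h _ _
  · intro i
    exact PA_diag hz h _
  · intro i j hi hj _ _
    refine le_trans (le_of_eq ?_) (rank_sum_le ((Finset.Icc 1 i).filter fun a => z a ∈ Finset.Icc 1 j)
      (fun a (s : Fin i) => c a * g (s + 1) a) (fun a (t : Fin j) => g (t + 1) (z a)))
    congr 1
    ext s t
    rw [Matrix.sum_apply]
    simp only [Matrix.submatrix_apply, Matrix.of_apply, Matrix.vecMulVec_apply, Fin.val_castLE]
    apply PA_eq h.low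
    · intro a ha
      simp only [Finset.mem_filter, Finset.mem_Icc] at ha
      omega
    · intro a h1 h2 h3
      simp only [Finset.mem_filter, Finset.mem_Icc]
      have := hz.pos h1
      have := s.2
      have := t.2
      omega

theorem eval_Uss {A : Matrix (Fin n) (Fin n) K} (hA : A ∈ MatSS K n) (a b : Fin n) :
    MvPolynomial.eval (fun v : SSVar n => A v.1.1 v.1.2) (Uss K n a b) = A a b := by
  unfold Uss
  simp only [Matrix.of_apply]
  by_cases h : b < a
  · rw [dif_pos h, MvPolynomial.eval_X]
  · by_cases h' : a < b
    · rw [dif_neg h, dif_pos h', map_neg, MvPolynomial.eval_X]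
      have := congrFun (congrFun hA.1 a) b
      simp only [Matrix.transpose_apply, Matrix.neg_apply] at this
      rw [this, neg_neg]
    · have : a = b := le_antisymm (not_lt.1 h) (not_lt.1 h')
      rw [dif_neg h, dif_neg h', map_zero, this, hA.2]

theorem Iss_le_IX (z : Equiv.Perm ℕ) : IssIdeal K n z ≤ IXss K n z := by
  classical
  unfold IssIdeal
  rw [Ideal.span_le]
  rintro f ⟨R, hne, hev, ⟨i, j, hj, hji, hi, hR, hc⟩, rfl⟩
  intro A hA
  have hss := hA.1
  show MvPolynomial.eval _ (pfUss K R) = 0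
  rw [pfUss_pfr, pfr_map]
  simp only [eval_Uss hss]
  have hAlt : Alt (fun a b => A a b) := by
    refine ⟨fun a b => ?_, hss.2⟩
    have := congrFun (congrFun hss.1 b) a
    simpa only [Matrix.transpose_apply, Matrix.neg_apply] using this
  set R' := R.filter fun a : Fin n => (a : ℕ) + 1 ≤ j with hR'
  have hrk := hA.2 i j hi (hji.trans hi) (hj.trans hji) hj
  set w : R' → (Fin i → K) := fun l s => A (Fin.castLE hi s) l.1 with hw
  have hnli : ¬ LinearIndependent K w := by
    intro hli
    have h1 := finrank_span_eq_card hli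
    rw [Matrix.rank_eq_finrank_span_cols] at hrk
    have h2 : Submodule.span K (Set.range w) ≤ Submodule.span K
        (Set.range (A.submatrix (Fin.castLE hi) (Fin.castLE (hji.trans hi))).col) := by
      apply Submodule.span_mono
      rintro _ ⟨l, rfl⟩
      have hl := (Finset.mem_filter.1 l.2).2
      refine ⟨⟨(l.1 : ℕ), by omega⟩, ?_⟩
      funext s
      rfl
    have h3 := Submodule.finrank_mono h2
    rw [Fintype.card_coe] at h1
    omega
  obtain ⟨g, hg, ⟨k, hk⟩, hk0⟩ := Fintype.not_linearIndependent_iff.1 hnli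
  set cc : Fin n → K := fun l => if h : l ∈ R' then g ⟨l, h⟩ else 0 with hcc
  have h0 := pfr_dep hAlt (V := R) cc (by
    intro y hy
    have hyi := hR y hy
    have h1 := congrFun hg ⟨(y : ℕ), by omega⟩
    simp only [Finset.sum_apply, Pi.smul_apply, smul_eq_mul, Pi.zero_apply, hw] at h1
    have h2 : ∑ l ∈ R', cc l * A l y = 0 := by
      rw [← Finset.sum_coe_sort]
      rw [← neg_eq_zero, ← Finset.sum_neg_distrib, ← h1]
      refine Finset.sum_congr rfl fun l _ => ?_
      have e1 : cc l = g l := by simp only [hcc, dif_pos l.2]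
      have e2 : A l.1 y = - A y l.1 := hAlt.1 l.1 y
      rw [e1, e2]
      simp only [mul_neg, neg_neg]
      rfl
    rw [← h2]
    symm
    apply Finset.sum_subset (Finset.filter_subset _ _)
    intro l _ hl
    have e3 : cc l = 0 := by
      simp only [hcc]; exact dif_neg hl
    rw [e3, zero_mul]) (Finset.mem_filter.1 hk).1
  have e1 : cc k ≠ 0 := by simp only [hcc, dif_pos hk]; exact hk0
  exact (mul_eq_zero.1 h0).resolve_left e1

/-- vanishing on the parametrized subset -/
def Van (z : Equiv.Perm ℕ) (f : MvPolynomial (SSVar n) K) : Prop :=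
  ∀ g c, Par z g c →
    MvPolynomial.eval (fun v : SSVar n => PA z g c ((v.1.1 : ℕ) + 1) ((v.1.2 : ℕ) + 1)) f = 0

theorem Van_of_IX {z : Equiv.Perm ℕ} (hz : Fpf z) {f : MvPolynomial (SSVar n) K}
    (hf : f ∈ IXss K n z) : Van z f := by
  intro g c h
  have h1 : ∀ A ∈ Xss K n z,
    MvPolynomial.eval (fun v : SSVar n => A v.1.1 v.1.2) f = 0 := hf
  have h2 := h1 _ (PA_mem_X (n := n) hz h)
  simpa only [Matrix.of_apply] using h2

theorem Van_of_Iss {z : Equiv.Perm ℕ} (hz : Fpf z) {f : MvPolynomial (SSVar n) K}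
    (hf : f ∈ IssIdeal K n z) : Van z f := Van_of_IX hz (Iss_le_IX z hf)

theorem poly_path [Infinite K] {σ : Type*} (f : MvPolynomial σ K) (P : σ → Polynomial K) (q : Polynomial K)
    (hq : q ≠ 0) (h : ∀ t, q.eval t ≠ 0 → MvPolynomial.eval (fun v => (P v).eval t) f = 0) (t : K) :
    MvPolynomial.eval (fun v => (P v).eval t) f = 0 := by
  have hev : ∀ t, (MvPolynomial.aeval P f).eval t = MvPolynomial.eval (fun v => (P v).eval t) f := by
    intro t
    have := MvPolynomial.map_aeval P (Polynomial.evalRingHom t) f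
    simp only [Polynomial.coe_evalRingHom] at this
    rw [this, MvPolynomial.coe_eval₂Hom, MvPolynomial.eval_eq, MvPolynomial.eval₂_eq]
    simp
  have h0 : q * MvPolynomial.aeval P f = 0 := by
    apply Polynomial.funext
    intro t
    rw [Polynomial.eval_mul, Polynomial.eval_zero, hev]
    by_cases h1 : q.eval t = 0
    · rw [h1, zero_mul]
    · rw [h t h1, mul_zero]
  rw [← hev, (mul_eq_zero.1 h0).resolve_left hq, Polynomial.eval_zero]

end geom
end Paper

namespace Paper

section degen
variable {K : Type*} [Field K] {n : ℕ}

theorem sum_quad {R : Type*} [AddCommMonoid R] (F : ℕ → R) {p q r s N : ℕ} (hqp : q < p) (hpr : p < r)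
    (hqs : q < s) (hsp : s ≠ p) (hsr : s ≠ r) (hq : 1 ≤ q) (hr : r ≤ N) (hs : s ≤ N) :
    ∑ a ∈ Finset.Icc 1 N, F a = ∑ a ∈ Finset.Icc 1 N \ {p, q, r, s}, F a +
      (F p + (F q + (F r + F s))) := by
  rw [← Finset.sum_sdiff (s₁ := {p, q, r, s}) (s₂ := Finset.Icc 1 N)]
  · congr 1
    rw [Finset.sum_insert, Finset.sum_insert, Finset.sum_insert, Finset.sum_singleton] <;>
    simp only [Finset.mem_insert, Finset.mem_singleton] <;> omega
  · intro a
    simp only [Finset.mem_insert, Finset.mem_singleton, Finset.mem_Icc]; omega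

theorem Van_degen [Infinite K] {z : Equiv.Perm ℕ} {p q r s : ℕ} (h : Quad z p q r s)
    {f : MvPolynomial (SSVar n) K} (hf : Van z f) : Van (Equiv.swap p r * z * Equiv.swap p r) f := by
  obtain ⟨zq, zs, sp, sr, vp, vs, vq, vr, ve⟩ := h.vals
  obtain ⟨hz, q1, qp, zp, pr, qs, zr⟩ := h
  set v := Equiv.swap p r * z * Equiv.swap p r with hv
  intro g c hgc
  have cs : c s = - c p := by rw [← vp]; exact hgc.skew p (by omega)
  have cr : c r = - c q := by rw [← vq]; exact hgc.skew q q1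
  have key := poly_path f (fun w : SSVar n =>
    Polynomial.C (PA v g c ((w.1.1 : ℕ) + 1) ((w.1.2 : ℕ) + 1)) + Polynomial.X *
      Polynomial.C (c p * (g (w.1.1 + 1) p * g (w.1.2 + 1) q - g (w.1.1 + 1) q * g (w.1.2 + 1) p)))
    Polynomial.X Polynomial.X_ne_zero (by
      intro t ht
      rw [Polynomial.eval_X] at ht
      simp only [Polynomial.eval_add, Polynomial.eval_mul, Polynomial.eval_C, Polynomial.eval_X]
      set g' : ℕ → ℕ → K := fun i a => if a = p then t * c p * g i p - c q * g i r else
        if a = q then g i q + t⁻¹ * g i s else g i a with hg'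
      set c' : ℕ → K := fun a => if a = p then 1 else if a = q then -1 else if a = r then c q * t⁻¹ else
        if a = s then - (c q * t⁻¹) else c a with hc'
      have gp : ∀ i, g' i p = t * c p * g i p - c q * g i r := fun i => by simp only [hg', if_true]
      have gq : ∀ i, g' i q = g i q + t⁻¹ * g i s := fun i => by
        simp only [hg', if_true, if_neg qp.ne]
      have go : ∀ i a, a ≠ p → a ≠ q → g' i a = g i a := fun i a h1 h2 => by
        simp only [hg', if_neg h1, if_neg h2]
      have cp' : c' p = 1 := by simp only [hc', if_true]
      have cq' : c' q = -1 := by simp only [hc', if_true, if_neg qp.ne]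
      have cr' : c' r = c q * t⁻¹ := by
        simp only [hc', if_true, if_neg pr.ne', if_neg (qp.trans pr).ne']
      have cs' : c' s = - (c q * t⁻¹) := by
        simp only [hc', if_true, if_neg sp, if_neg qs.ne', if_neg sr]
      have co : ∀ a, a ≠ p → a ≠ q → a ≠ r → a ≠ s → c' a = c a := fun a h1 h2 h3 h4 => by
        simp only [hc', if_neg h1, if_neg h2, if_neg h3, if_neg h4]
      have hPar : Par z g' c' := by
        constructor
        · intro i a hia
          by_cases h1 : a = p
          · subst h1
            rw [gp, hgc.low i a hia, hgc.low i r (by omega)]; ring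
          by_cases h2 : a = q
          · subst h2
            rw [gq, hgc.low i a hia, hgc.low i s (by omega)]; ring
          rw [go i a h1 h2, hgc.low i a hia]
        · intro a ha
          by_cases h1 : a = p
          · rw [h1, zp, cq', cp']
          by_cases h2 : a = q
          · rw [h2, zq, cq', cp', neg_neg]
          by_cases h3 : a = r
          · rw [h3, zr, cs', cr']
          by_cases h4 : a = s
          · rw [h4, zs, cs', cr', neg_neg]
          have e : ∀ x y, z x = y → a ≠ x → z a ≠ y := by
            rintro x y rfl hne heq
            exact hne (z.injective heq)
          rw [co a h1 h2 h3 h4, co (z a) (e q p zq h2) (e p q zp h1) (e s r zs h4) (e r s zr h3),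
            ← ve a h1 h2 h3 h4]
          exact hgc.skew a ha
      have := hf g' c' hPar
      convert this using 3
      funext w
      generalize (w.1.1 : ℕ) + 1 = i
      generalize (w.1.2 : ℕ) + 1 = j
      have hN : ∀ a, 1 ≤ a → a ≤ i → a ∈ Finset.Icc 1 (i + r + s) := by
        intro a h1 h2; rw [Finset.mem_Icc]; omega
      rw [PA_eq hgc.low (S := Finset.Icc 1 (i + r + s)) (fun a ha => (Finset.mem_Icc.1 ha).1)
          (fun a h1 h2 _ => hN a h1 h2),
        PA_eq hPar.low (S := Finset.Icc 1 (i + r + s)) (fun a ha => (Finset.mem_Icc.1 ha).1)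
          (fun a h1 h2 _ => hN a h1 h2), sum_quad _ qp pr qs sp sr q1 (by omega) (by omega),
        sum_quad (fun a => c' a * g' i a * g' j (z a)) qp pr qs sp sr q1 (by omega) (by omega)]
      have hsame : ∑ a ∈ Finset.Icc 1 (i + r + s) \ {p, q, r, s}, c' a * g' i a * g' j (z a) =
          ∑ a ∈ Finset.Icc 1 (i + r + s) \ {p, q, r, s}, c a * g i a * g j (v a) := by
        refine Finset.sum_congr rfl fun a ha => ?_
        simp only [Finset.mem_sdiff, Finset.mem_insert, Finset.mem_singleton, not_or] at ha
        obtain ⟨-, h1, h2, h3, h4⟩ := ha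
        have e : ∀ x y, z x = y → a ≠ x → z a ≠ y := by
          rintro x y rfl hne heq
          exact hne (z.injective heq)
        rw [co a h1 h2 h3 h4, go i a h1 h2, go j _ (e q p zq h2) (e p q zp h1), ve a h1 h2 h3 h4]
      rw [hsame, zp, zq, zr, zs, vp, vq, vr, vs, cp', cq', cr', cs', cs, cr]
      rw [gp, gp, gq, gq, go i r pr.ne' (qp.trans pr).ne', go j r pr.ne' (qp.trans pr).ne',
        go i s sp qs.ne', go j s sp qs.ne']
      field_simp
      ring) 0
  simpa only [Polynomial.eval_add, Polynomial.eval_mul, Polynomial.eval_C, Polynomial.eval_X,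
    zero_mul, add_zero] using key

theorem corner_unique {z : Equiv.Perm ℕ} {p q : ℕ} (h : Corner z p q) {a : ℕ} (h1 : 1 ≤ a)
    (h2 : a ≤ p) (h3 : z a ≤ q) : a = p := by
  have hrk := h.rk
  unfold rnk at hrk
  obtain ⟨x, hx⟩ := Finset.card_eq_one.1 hrk
  have e1 : a ∈ ({x} : Finset ℕ) := by
    rw [← hx]
    simp only [Finset.mem_filter, Finset.mem_Icc]
    have := h.fpf.pos h1
    omega
  have e2 : p ∈ ({x} : Finset ℕ) := by
    rw [← hx]
    simp only [Finset.mem_filter, Finset.mem_Icc, h.zp]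
    have := h.q1
    have := h.qp
    omega
  rw [Finset.mem_singleton] at e1 e2
  rw [e1, e2]

theorem Van_cancel [Infinite K] {z : Equiv.Perm ℕ} {p q : ℕ} (h : Corner z p q) (hp : p ≤ n)
    {f : MvPolynomial (SSVar n) K}
    (hf : Van z (MvPolynomial.X (ssvar p q hp h.q1 h.qp) * f)) : Van z f := by
  intro g c hgc
  have q1 := h.q1
  have qp := h.qp
  have zp := h.zp
  have zq : z q = p := by rw [← zp, h.fpf.inv]
  set G : ℕ → ℕ → Polynomial K := fun i a => Polynomial.C (g i a) +
    (if i = a ∧ (a = p ∨ a = q) then Polynomial.X else 0) with hG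
  set Cc : ℕ → Polynomial K := fun a => Polynomial.C (c a) +
    (if a = p then Polynomial.X else if a = q then - Polynomial.X else 0) with hC
  have hPar : Par z G Cc := by
    constructor
    · intro i a hia
      simp only [hG]
      rw [hgc.low i a hia, if_neg (by omega)]; simp
    · intro a ha
      simp only [hC]
      rw [hgc.skew a ha]
      by_cases h1 : a = p
      · rw [h1, zp, if_neg qp.ne, if_pos rfl, if_pos rfl, Polynomial.C_neg]; ring
      by_cases h2 : a = q
      · rw [h2, zq, if_pos rfl, if_neg qp.ne, if_pos rfl, Polynomial.C_neg]; ring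
      have e : ∀ x y, z x = y → a ≠ x → z a ≠ y := by
        rintro x y rfl hne heq
        exact hne (z.injective heq)
      rw [if_neg h1, if_neg h2, if_neg (e q p zq h2), if_neg (e p q zp h1), Polynomial.C_neg]; ring
  have hPart : ∀ t, Par z (fun i a => (G i a).eval t) (fun a => (Cc a).eval t) := by
    intro t
    constructor
    · intro i a hia; simp only [hPar.low i a hia, Polynomial.eval_zero]
    · intro a ha; simp only [hPar.skew a ha, Polynomial.eval_neg]
  have hmap : ∀ t i j, (PA z G Cc i j).eval t =
      PA z (fun i a => (G i a).eval t) (fun a => (Cc a).eval t) i j := fun t i j =>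
    PA_map (Polynomial.evalRingHom t) z G Cc i j
  have hpq : PA z G Cc p q = (Polynomial.C (c p) + Polynomial.X) * (Polynomial.C (g p p) + Polynomial.X) *
      (Polynomial.C (g q q) + Polynomial.X) := by
    rw [PA_eq hPar.low (S := {p})]
    · rw [Finset.sum_singleton, zp]
      simp only [hG, hC, if_true, true_or, or_true, and_true]
    · intro a ha; rw [Finset.mem_singleton] at ha; omega
    · intro a h1 h2 h3
      rw [Finset.mem_singleton]
      exact corner_unique h h1 h2 h3
  have key := poly_path f (fun w : SSVar n => PA z G Cc ((w.1.1 : ℕ) + 1) ((w.1.2 : ℕ) + 1))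
    (PA z G Cc p q) (by
      rw [hpq]
      have : ∀ x : K, Polynomial.C x + Polynomial.X ≠ 0 := by
        intro x; rw [add_comm]; exact Polynomial.X_add_C_ne_zero x
      exact mul_ne_zero (mul_ne_zero (this _) (this _)) (this _)) (by
      intro t ht
      have h1 := hf _ _ (hPart t)
      rw [map_mul, MvPolynomial.eval_X, (ssvar_vals hp h.q1 h.qp).1, (ssvar_vals hp h.q1 h.qp).2,
        ← hmap] at h1
      simp only [hmap] at h1 ⊢
      simp only [hmap] at ht
      exact (mul_eq_zero.1 h1).resolve_left ht) 0
  convert key using 3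
  funext w
  rw [hmap]
  congr 1
  · funext i a
    simp only [hG]
    split_ifs <;> simp
  · funext a
    simp only [hC]
    split_ifs <;> simp

end degen
end Paper

namespace Paper

section final
variable {K : Type*} [Field K] {n : ℕ}

theorem lam_subset {D D' : Finset (ℕ × ℕ)} (h : D ⊆ D') (i j : ℕ) : lam D i j ≤ lam D' i j := by
  obtain ⟨C, h1, h2, h3, h4⟩ := exists_lam D i j
  rw [← h4]
  exact le_lam (h1.trans h) h2 h3

theorem Std.of_add {z : Equiv.Perm ℕ} {a m : SSVar n →₀ ℕ} (h : Std z (a + m)) : Std z m := by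
  intro i j
  refine le_trans (lam_subset ?_ i j) (h i j)
  intro c hc
  rw [mem_Dm] at hc ⊢
  obtain ⟨v, h1, h2⟩ := hc
  refine ⟨v, ?_, h2⟩
  rw [Finsupp.add_apply]; omega

theorem Std.exists_le {z : Equiv.Perm ℕ} {m : SSVar n →₀ ℕ} (h : Std z m) {c : ℕ × ℕ}
    (hc : c ∈ Dm m) : ∃ a, 1 ≤ a ∧ a ≤ c.1 ∧ z a ≤ c.2 := by
  have h1 : ({c} : Finset (ℕ × ℕ)).card ≤ lam (Dm m) c.1 c.2 := by
    apply le_lam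
    · rw [Finset.singleton_subset_iff]; exact hc
    · intro x hx y hy _ _
      rw [Finset.mem_singleton] at hx hy
      rw [hx, hy]
    · intro x hx
      rw [Finset.mem_singleton] at hx
      rw [hx]; exact ⟨le_rfl, le_rfl⟩
  rw [Finset.card_singleton] at h1
  have h2 := h1.trans (h c.1 c.2)
  unfold rnk at h2
  obtain ⟨a, ha⟩ := Finset.card_pos.1 h2
  simp only [Finset.mem_filter, Finset.mem_Icc] at ha
  exact ⟨a, ha.1.1, ha.1.2, ha.2.2⟩

def mu (n : ℕ) (z : Equiv.Perm ℕ) : ℕ := ∑ c ∈ Finset.Icc 1 n ×ˢ Finset.Icc 1 n, rnk z c.1 c.2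

theorem mu_lt {z : Equiv.Perm ℕ} {p q r s : ℕ} (h : Quad z p q r s) (hp : p ≤ n) :
    mu n (Equiv.swap p r * z * Equiv.swap p r) < mu n z := by
  have h1 := h.q1
  have h2 := h.qp
  have h3 := h.pr
  have h4 := h.qs
  apply Finset.sum_lt_sum
  · intro c _
    rw [h.rnk_eq c.1 c.2]; omega
  · refine ⟨(p, q), ?_, ?_⟩
    · simp only [Finset.mem_product, Finset.mem_Icc]; omega
    · show rnk (Equiv.swap p r * z * Equiv.swap p r) p q < rnk z p q
      have h5 := h.rnk_eq p q
      rw [if_pos (by omega)] at h5; omega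

theorem NF_ind [Infinite K] {z : Equiv.Perm ℕ} (hz : Fpf z)
    (ih : ∀ v, Fpf v → mu n v < mu n z → ∀ (f : MvPolynomial (SSVar n) K) m, Van v f → IsLead f m →
      ¬ Std v m) :
    ∀ d : ℕ, ∀ f : MvPolynomial (SSVar n) K, (∀ m ∈ f.support, totalDeg m < d) → Van z f →
      (∀ m ∈ f.support, Std z m) → f = 0 := by
  intro d
  induction d with
  | zero =>
    intro f hd _ _
    rw [← MvPolynomial.support_eq_empty, Finset.eq_empty_iff_forall_notMem]
    intro m hm
    exact absurd (hd m hm) (by omega)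
  | succ d ihd =>
    intro f hd hV hS
    by_cases hpair : ∃ a, 1 ≤ a ∧ a ≤ n ∧ z a ≤ n
    · obtain ⟨p, q, hc, hp⟩ := corner_exists hz hpair
      set u := ssvar p q hp hc.q1 hc.qp with hu
      have hu1 := ssvar_vals hp hc.q1 hc.qp
      rw [← hu] at hu1
      have hsplit := MvPolynomial.divMonomial_add_modMonomial_single f u
      set f' := MvPolynomial.divMonomial f (Finsupp.single u 1) with hf'
      set f0 := MvPolynomial.modMonomial f (Finsupp.single u 1) with hf0
      by_cases h0 : f0 = 0
      · rw [h0, add_zero] at hsplit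
        have hsupp : ∀ m ∈ f'.support, Finsupp.single u 1 + m ∈ f.support := by
          intro m hm
          rw [MvPolynomial.mem_support_iff] at hm ⊢
          rwa [hf', MvPolynomial.coeff_divMonomial] at hm
        have : f' = 0 := by
          apply ihd
          · intro m hm
            have := hd _ (hsupp m hm)
            rw [totalDeg_add, totalDeg_single] at this
            omega
          · rw [← hsplit] at hV
            exact Van_cancel hc hp hV
          · intro m hm
            exact (hS _ (hsupp m hm)).of_add
        rw [← hsplit, this, mul_zero]
      · exfalso
        obtain ⟨m, hm⟩ := exists_lead h0
        have hmu : m u = 0 ∧ m ∈ f.support := by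
          have h1 := hm.1
          rw [MvPolynomial.mem_support_iff, hf0] at h1
          by_cases h2 : Finsupp.single u 1 ≤ m
          · rw [MvPolynomial.coeff_modMonomial_of_le _ h2] at h1
            exact absurd rfl h1
          · rw [MvPolynomial.coeff_modMonomial_of_not_le _ h2] at h1
            refine ⟨?_, MvPolynomial.mem_support_iff.2 h1⟩
            by_contra h3
            apply h2
            rw [Finsupp.single_le_iff]
            omega
        have hstd := hS m hmu.2
        have hlam : lam (Dm m) p q = 0 := by
          by_contra hne
          obtain ⟨C, h1, h2, h3, h4⟩ := exists_lam (Dm m) p q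
          obtain ⟨c, hcC⟩ : C.Nonempty := by rw [← Finset.card_pos]; omega
          obtain ⟨a, ha1, ha2, ha3⟩ := hstd.exists_le (h1 hcC)
          have h5 := h3 c hcC
          have h6 := corner_unique hc ha1 (by omega) (by omega)
          have h7 : z a = q := by rw [h6]; exact hc.zp
          obtain ⟨w, hw, h8⟩ := mem_Dm.1 (h1 hcC)
          have hqp := hc.qp
          have hw2 := w.2
          rw [Fin.lt_def] at hw2
          have : w = u := ssvar_ext (by omega) (by omega)
          rw [this] at hw
          exact hw hmu.1
        obtain ⟨r, s, hq, hle⟩ := claimC hc Dm_swap Dm_ne hstd hlam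
        have h1 := hq.q1
        have h2 := hq.qp
        have h3 := hq.pr
        have h4 := hq.qs
        have hvf : Fpf (Equiv.swap p r * z * Equiv.swap p r) := hz.conj (by omega) (by omega)
        refine ih _ hvf (mu_lt hq hp) f0 m ?_ hm hle
        have hVf := Van_degen hq hV
        intro g c hgc
        have h5 := hVf g c hgc
        rw [← hsplit, map_add, map_mul, MvPolynomial.eval_X, hu1.1, hu1.2] at h5
        have h6 : PA (Equiv.swap p r * z * Equiv.swap p r) g c p q = 0 := by
          rw [PA_eq hgc.low (S := ∅)]
          · exact Finset.sum_empty
          · intro a ha; exact absurd ha (Finset.notMem_empty a)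
          · intro a ha1 ha2 ha3
            exfalso
            have h7 := hq.rnk_eq p q
            rw [hc.rk, if_pos (by omega)] at h7
            have h8 : rnk (Equiv.swap p r * z * Equiv.swap p r) p q = 0 := by omega
            unfold rnk at h8
            rw [Finset.card_eq_zero, Finset.filter_eq_empty_iff] at h8
            apply h8 (Finset.mem_Icc.2 ⟨ha1, ha2⟩)
            exact Finset.mem_Icc.2 ⟨hvf.pos ha1, ha3⟩
        rw [h6, zero_mul, zero_add] at h5
        exact h5
    · have hz0 : ∀ m ∈ f.support, m = 0 := by
        intro m hm
        ext v
        by_contra hne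
        have hmem : (((v.1.1 : ℕ) + 1, (v.1.2 : ℕ) + 1) : ℕ × ℕ) ∈ Dm m :=
          mem_Dm.2 ⟨v, hne, Or.inl ⟨rfl, rfl⟩⟩
        obtain ⟨a, h1, h2, h3⟩ := (hS m hm).exists_le hmem
        have h4 := Dm_range _ hmem
        simp only at h2 h3 h4
        exact hpair ⟨a, h1, by omega, by omega⟩
      have hfC : f = MvPolynomial.C (f.coeff 0) := by
        ext m
        rw [MvPolynomial.coeff_C]
        split_ifs with h
        · rw [h]
        · by_contra hne
          exact h (hz0 m (MvPolynomial.mem_support_iff.2 hne)).symm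
      have h1 := hV (fun _ _ => 0) (fun _ => 0) ⟨fun _ _ _ => rfl, fun _ _ => by simp⟩
      rw [hfC, MvPolynomial.eval_C] at h1
      rw [hfC, h1, map_zero]

theorem lead_ind [Infinite K] : ∀ (N : ℕ) (z : Equiv.Perm ℕ), Fpf z → mu n z < N →
    ∀ (f : MvPolynomial (SSVar n) K) m, Van z f → IsLead f m → ¬ Std z m := by
  intro N
  induction N with
  | zero => intro z _ h; omega
  | succ N ih =>
    intro z hz hN f m hV hm hS
    have hNF := NF_ind (K := K) hz fun v hv hlt => ih v hv (by omega)
    obtain ⟨h, hI, hstd, hlt⟩ := division (IssIdeal K n z) (Std z) (lead_of_not_std hz) m f (by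
      intro m' hm' hns
      apply hm.2 m' hm'
      rintro rfl
      exact hns hS)
    have h0 : f - h = 0 := by
      refine hNF ((f - h).support.sup totalDeg + 1) (f - h) ?_ ?_ hstd
      · intro m hm
        exact Nat.lt_succ_of_le (Finset.le_sup (f := totalDeg) hm)
      · intro g c hgc
        rw [map_sub, hV g c hgc, Van_of_Iss hz hI g c hgc, sub_zero]
    rw [sub_eq_zero] at h0
    exact rl_irrefl _ (hlt m (h0 ▸ hm.1))

theorem init_mono {I I' : Ideal (MvPolynomial (SSVar n) K)} (h : I ≤ I') :
    initIdeal revlexLT I ≤ initIdeal revlexLT I' := by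
  apply Ideal.span_mono
  rintro g ⟨f, hf, h1⟩
  exact ⟨f, h hf, h1⟩

theorem init_IX_le_J [Infinite K] {z : Equiv.Perm ℕ} (hz : Fpf z) :
    initIdeal revlexLT (IXss K n z) ≤ JssIdeal K n z := by
  unfold initIdeal
  rw [Ideal.span_le]
  rintro g ⟨f, hf, -, m, h1, h2, rfl⟩
  exact monomial_mem_J hz m (lead_ind _ z hz (Nat.lt_succ_self _) f m (Van_of_IX hz hf) ⟨h1, h2⟩)

end final
end Paper

namespace Paper

/-- For `z ∈ FPF_n(I_n)`, with respect to the reverse lexicographic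
term order on `R_n`: `J^ss_z = init(I^ss_z) = init(I(X^ss_z))`. -/
theorem statement6 (K : Type*) [Field K] [IsAlgClosed K] (n : ℕ) (hn : 1 ≤ n)
    (z : Equiv.Perm ℕ) (hz : z ∈ FPFIn n) :
    JssIdeal K n z = initIdeal revlexLT (IssIdeal K n z) ∧
      JssIdeal K n z = initIdeal revlexLT (IXss K n z) := by
  haveI : Infinite K := inferInstance
  have hF : Fpf z := ⟨hz.1.1, hz.1.2.1, fun i => by
    have := congrArg (fun w => w i) hz.1.2.2.1
    simpa using this⟩
  have h1 : JssIdeal K n z ≤ initIdeal revlexLT (IssIdeal K n z) := J_le_init (lead_of_not_std hF)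
  have h2 : initIdeal revlexLT (IssIdeal K n z) ≤ initIdeal revlexLT (IXss K n z) :=
    init_mono (Iss_le_IX z)
  have h3 : initIdeal revlexLT (IXss K n z) ≤ JssIdeal K n z := init_IX_le_J hF
  exact ⟨le_antisymm h1 (h2.trans h3), le_antisymm (h1.trans h2) h3⟩


end Paper
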